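/- Let 𝕋=(−π,π), λ∈{1,−1}, and let u⁰∈H¹(𝕋). Let u∈C([0,T];H¹(𝕋)) be the unique solution of the cubic nonlinear Schrödinger equation i∂_t u+∂_{xx}u=λ|u|²u on 𝕋 with u(0)=u⁰. Let u^n_{τ,N} be the fully discrete numerical solution defined by u⁰_{τ,N}=Π_N I_{2N}u⁰ and u^{n+1}_{τ,N}=Ψ(u^n_{τ,N}) for n=0,…,L−1, with time levels t_n=nτ, τ=T/L. Then there exist positive constants τ₀, N₀ and C, depending only on T and ‖u⁰‖_{H¹}, such that for all τ≤τ₀ and N≥N₀: max_{1≤n≤L} ‖u(t_n,·)−u^n_{τ,N}‖_{L²} ≤ C(τ√(ln(1/τ))+N^{−1}). -/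

import Mathlib

/-!
Why the scheme converges in `L²` at the rate `τ √(log (1/τ)) + N⁻¹` for `H¹` data.

*Kernel form.* In Fourier variables one step of the scheme is `e^{iτ∂ₓ²}` applied to a unimodular
multiplier minus `iλ` times a trilinear multiplier with an explicit kernel `KK` (`Psi_eq`), while
the first Duhamel iterate of the equation has the kernel `∫₀^τ e^{2is(k₁+k₂)(k₁+k₃)} ds`. After
symmetrisation in the two unconjugated factors, `kernel_split` writes the latter as `KK`, plus the
resonant part `k₁+k₂ = 0` (which produces mass and momentum and is reproduced by the unimodular
multiplier), plus a truncation part of size `τ(τ+N⁻¹)`, plus an oscillatory remainder controlled by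
`τ² |k₁ k₂ k₃|` times a weight `wr`. That weight is square summable up to `log (1/τ)`, and this is
the source of the logarithm (`Tri_wr`, `local_error`).

*Stability.* The kernel `KK` is `O(τ)` up to ratios of frequencies which the trilinear estimates
absorb; hence one step is Lipschitz in `L²` on bounded sets of `H¹` (`Psi_L2`) and increases the
`H¹` norm at most by a factor `1 + Cτ`, with `C` depending only on the `ℓ¹` norm of the Fourier
coefficients (`Psi_H1`).

*The exact solution.* Mass, momentum and energy are conserved. They are first computed for the
truncated solution, where everything is a finite sum, and the truncation is then removed
(`mass_cons`, `mom_cons`, `ener_cons`). With the interpolation inequality `B1_interp` the energy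
yields an `H¹` bound `U` depending only on `‖u⁰‖_{H¹}` (`sol_H1`). Conservation of mass and momentum
also shows that the frozen numbers `M_N`, `P_N` are correct up to `O(N⁻¹)` at all times.

*Convergence.* `sol_local` and `local_error` combine to the consistency estimate `consistency`. In
`bootstrap` the error and the `H¹` norm of the numerical solution are propagated together: the `L²`
error is small, so by interpolation the `ℓ¹` distance to the exact solution is below `1`, which keeps
the growth factor of the `H¹` norm under control independently of that norm.
-/

noncomputable section

open Complex MeasureTheory
open scoped BigOperators

/-- A function on the torus `𝕋 = (-π,π)` is represented by its sequence of Fourier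
coefficients `f̂ : ℤ → ℂ`. -/
abbrev FSeq := ℤ → ℂ

/-- Membership in the Sobolev space `H^s(𝕋)`:
`∑_{k∈ℤ} (1+k²)^s |f̂_k|² < ∞`. -/
def InHs (s : ℝ) (a : FSeq) : Prop :=
  Summable fun k : ℤ => (1 + (k : ℝ) ^ 2) ^ s * ‖a k‖ ^ 2

/-- The `H^s(𝕋)` norm: `‖f‖_{H^s}² = 2π ∑_{k∈ℤ} (1+k²)^s |f̂_k|²`. -/
def hnorm (s : ℝ) (a : FSeq) : ℝ :=
  Real.sqrt (2 * Real.pi * ∑' k : ℤ, (1 + (k : ℝ) ^ 2) ^ s * ‖a k‖ ^ 2)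

/-- Convolution of Fourier coefficient sequences: the coefficients of the
pointwise product of two functions. -/
def conv (a b : FSeq) : FSeq := fun k => ∑' j : ℤ, a (k - j) * b j

/-- Coefficients of the complex conjugate function: `(conj f)̂_k = conj (f̂_{-k})`. -/
def conjS (a : FSeq) : FSeq := fun k => (starRingEnd ℂ) (a (-k))

/-- The Bessel-potential operator `J^s`, a Fourier multiplier with symbol
`⟨k⟩^s = (1+k²)^{s/2}`. -/
def Jpow (s : ℝ) (a : FSeq) : FSeq := fun k => (((1 + (k : ℝ) ^ 2) ^ (s / 2) : ℝ) : ℂ) * a k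

/-- The spatial derivative `∂ₓ`, multiplier `ik`. -/
def dx (a : FSeq) : FSeq := fun k => Complex.I * (k : ℂ) * a k

/-- The operator `∂ₓ⁻¹`, multiplier `(ik)⁻¹` for `k ≠ 0` and `0` at `k = 0`. -/
def dxInv (a : FSeq) : FSeq := fun k => if k = 0 then 0 else a k / (Complex.I * (k : ℂ))

/-- Frequency projection `Π_N` onto the modes `|k| ≤ N`. -/
def piN (N : ℕ) (a : FSeq) : FSeq := fun k => if |k| ≤ (N : ℤ) then a k else 0

/-- Zero-mode projection `Π₀` (viewed as a function, i.e. the constant `f̂₀`). -/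
def pi0 (a : FSeq) : FSeq := fun k => if k = 0 then a 0 else 0

/-- Nonzero-mode projection `Π_{≠0}`. -/
def piNe (a : FSeq) : FSeq := fun k => if k = 0 then 0 else a k

/-- The free Schrödinger flow `e^{it∂ₓ²}`, Fourier multiplier with symbol `e^{-itk²}`. -/
def expD (t : ℝ) (a : FSeq) : FSeq :=
  fun k => Complex.exp (-Complex.I * (t : ℂ) * (k : ℂ) ^ 2) * a k

/-- Coefficients of `|f|² = (conj f)·f`. -/
def modSq (a : FSeq) : FSeq := conv (conjS a) a

/-- Coefficients of `f²`. -/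
def sqS (a : FSeq) : FSeq := conv a a

/-- The Fourier multiplier `e^{iτ(−2λP∂ₓ^{−1}−2λM+∂ₓ²)}`, with symbol `e^{−2λMiτ}`
at `k = 0` and `e^{iτ(−2λP(ik)^{−1}−2λM−k²)}` for `k ≠ 0`. -/
def expMain (lam τ : ℝ) (M P : ℂ) (a : FSeq) : FSeq := fun k =>
  if k = 0 then Complex.exp (-2 * (lam : ℂ) * M * Complex.I * (τ : ℂ)) * a 0
  else Complex.exp (Complex.I * (τ : ℂ) *
      (-2 * (lam : ℂ) * P / (Complex.I * (k : ℂ)) - 2 * (lam : ℂ) * M - (k : ℂ) ^ 2)) * a k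

/-- The one-step map `Ψ : S_N → S_N` of the fully discrete low-regularity integrator. -/
def Psi (lam τ : ℝ) (N : ℕ) (M P : ℂ) (f : FSeq) : FSeq :=
  expMain lam τ M P f
  + (fun k => if k = 0 then (1 - Complex.exp (-2 * Complex.I * (lam : ℂ) * (τ : ℂ) * M)) * f 0 else 0)
  + (-(Complex.I * (lam : ℂ) * (τ : ℂ))) • pi0 (conv (piN N (modSq f)) f)
  + (lam : ℂ) • dxInv (piN N (conv (expD τ f) (dxInv (piN N (modSq (expD τ f))))))
  - (lam : ℂ) • expD τ (dxInv (piN N (conv f (dxInv (piN N (modSq f))))))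
  - ((lam : ℂ) / 2) •
      (dxInv (dxInv (piN N (conv (expD (-τ) (conjS f)) (expD τ (piN N (sqS f))))))
        - expD τ (dxInv (dxInv (piN N (conv (conjS f) (piN N (sqS f)))))))
  - ((lam : ℂ) / 2) • expD τ (dxInv (piN N (conv (dx (conjS f))
      (expD (-τ) (piN N (sqS (expD τ (dxInv f)))) - piN N (sqS (dxInv f))))))
  - (Complex.I * (lam : ℂ) * (τ : ℂ)) • expD τ (dxInv (piN N (conv (dx (conjS f)) (piN N (sqS f)))))
  + (2 * Complex.I * (lam : ℂ) * (τ : ℂ) * f 0) • expD τ (dxInv (piN N (conv (dx (conjS f)) f)))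
  - (Complex.I * (lam : ℂ) * (τ : ℂ) * (f 0) ^ 2) • expD τ (piNe (conjS f))

/-- Trigonometric interpolation `I_{2N}` at the `4N+1` equidistant points
`x_n = 2πn/(4N+1)`, expressed on Fourier coefficients by the aliasing formula
`(I_{2N}f)̂_k = ∑_{m∈ℤ} f̂_{k+m(4N+1)}` for `|k| ≤ 2N`. -/
def interp2N (N : ℕ) (a : FSeq) : FSeq := fun k =>
  if |k| ≤ 2 * (N : ℤ) then ∑' m : ℤ, a (k + m * (4 * (N : ℤ) + 1)) else 0

/-- The discrete initial value `u⁰_{τ,N} = Π_N I_{2N} u⁰`. -/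
def initData (N : ℕ) (u0 : FSeq) : FSeq := piN N (interp2N N u0)

/-- The approximate mass `M_N = Π₀(|u⁰_{τ,N}|²)`. -/
def Mnum (N : ℕ) (u0 : FSeq) : ℂ := modSq (initData N u0) 0

/-- The approximate momentum `P_N = Π₀(u⁰_{τ,N} ∂ₓ (conj u⁰_{τ,N}))`. -/
def Pnum (N : ℕ) (u0 : FSeq) : ℂ := conv (initData N u0) (dx (conjS (initData N u0))) 0

/-- The fully discrete numerical solution: `u⁰_{τ,N} = Π_N I_{2N} u⁰`,
`u^{n+1}_{τ,N} = Ψ(u^n_{τ,N})`. -/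
def numSol (lam τ : ℝ) (N : ℕ) (u0 : FSeq) : ℕ → FSeq
  | 0 => initData N u0
  | n + 1 => Psi lam τ N (Mnum N u0) (Pnum N u0) (numSol lam τ N u0 n)

/-- Coefficients of the cubic nonlinearity `|u|²u = (conj u)·u·u`. -/
def cubicTerm (a : FSeq) : FSeq := conv (conv (conjS a) a) a

/-- `u : [0,T] → H¹(𝕋)` is the (mild) solution of the cubic NLS equation
`i∂ₜu + ∂ₓₓu = λ|u|²u`, `u(0) = u⁰`: it takes values in `H¹`, is continuous in `H¹`,
and satisfies Duhamel's formula. -/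
def IsNLSSolution (lam T : ℝ) (u0 : FSeq) (u : ℝ → FSeq) : Prop :=
  u 0 = u0 ∧
  (∀ t ∈ Set.Icc (0 : ℝ) T, InHs 1 (u t)) ∧
  (∀ t₀ ∈ Set.Icc (0 : ℝ) T, Filter.Tendsto (fun t => hnorm 1 (u t - u t₀))
      (nhdsWithin t₀ (Set.Icc (0 : ℝ) T)) (nhds 0)) ∧
  (∀ t ∈ Set.Icc (0 : ℝ) T, ∀ k : ℤ,
    u t k = Complex.exp (-Complex.I * (t : ℂ) * (k : ℂ) ^ 2) * u0 k
      - Complex.I * (lam : ℂ) * ∫ s in (0 : ℝ)..t,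
          Complex.exp (-Complex.I * ((t - s : ℝ) : ℂ) * (k : ℂ) ^ 2) * cubicTerm (u s) k)

section Proof

open scoped ENNReal

/-! ### Cauchy–Schwarz and Young inequalities for extended nonnegative sequences -/

/-- The squared `ℓ²` norm of a nonnegative sequence. -/
def S2 {ι : Type*} (A : ι → ℝ≥0∞) : ℝ≥0∞ := ∑' k, A k ^ 2

/-- The `ℓ¹` norm of a nonnegative sequence. -/
def S1 {ι : Type*} (A : ι → ℝ≥0∞) : ℝ≥0∞ := ∑' k, A k

/-- The triple convolution `∑_{k₁+k₂+k₃=k} A_{k₁} B_{k₂} C_{k₃}`, indexed by `(k₂,k₃)`. -/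
def tri (A B C : ℤ → ℝ≥0∞) (k : ℤ) : ℝ≥0∞ :=
  ∑' p : ℤ × ℤ, A (k - p.1 - p.2) * B p.1 * C p.2

lemma ennreal_two_mul_le (a b : ℝ≥0∞) : 2 * (a * b) ≤ a ^ 2 + b ^ 2 := by
  induction a with
  | top => simp
  | coe a =>
    induction b with
    | top => simp
    | coe b =>
      have := two_mul_le_add_sq a b
      rw [mul_assoc] at this
      exact_mod_cast this

lemma ennreal_sq_add_le (a b : ℝ≥0∞) : (a + b) ^ 2 ≤ 2 * (a ^ 2 + b ^ 2) := by
  have := ennreal_two_mul_le a b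
  calc (a + b) ^ 2 = (a ^ 2 + b ^ 2) + 2 * (a * b) := by ring
    _ ≤ (a ^ 2 + b ^ 2) + (a ^ 2 + b ^ 2) := by gcongr
    _ = _ := by ring

lemma ennreal_sq_add3_le (a b c : ℝ≥0∞) : (a + b + c) ^ 2 ≤ 4 * (a ^ 2 + b ^ 2 + c ^ 2) := by
  calc (a + b + c) ^ 2 ≤ 2 * ((a + b) ^ 2 + c ^ 2) := ennreal_sq_add_le _ _
    _ ≤ 2 * (2 * (a ^ 2 + b ^ 2) + 2 * c ^ 2) := by
        gcongr
        · exact ennreal_sq_add_le _ _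
        · exact le_mul_of_one_le_left' (by norm_num)
    _ = _ := by ring

lemma cs_sq {ι : Type*} (f g : ι → ℝ≥0∞) : (∑' i, f i * g i) ^ 2 ≤ S2 f * S2 g := by
  have h : 2 * (∑' i, f i * g i) ^ 2 ≤ 2 * (S2 f * S2 g) := by
    have e1 : (∑' i, f i * g i) ^ 2 = ∑' i, ∑' j, (f i * g j) * (f j * g i) := by
      rw [sq, ← ENNReal.tsum_mul_right]
      refine tsum_congr fun i => ?_
      rw [← ENNReal.tsum_mul_left]
      refine tsum_congr fun j => ?_
      ring
    have e2 : S2 f * S2 g = ∑' i, ∑' j, (f i * g j) ^ 2 := by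
      unfold S2
      rw [← ENNReal.tsum_mul_right]
      refine tsum_congr fun i => ?_
      rw [← ENNReal.tsum_mul_left]
      refine tsum_congr fun j => ?_
      ring
    have e3 : S2 f * S2 g = ∑' i, ∑' j, (f j * g i) ^ 2 := by
      rw [e2, ENNReal.tsum_comm]
    calc 2 * (∑' i, f i * g i) ^ 2 = ∑' i, ∑' j, 2 * ((f i * g j) * (f j * g i)) := by
          rw [e1, ← ENNReal.tsum_mul_left]
          refine tsum_congr fun i => ?_
          rw [← ENNReal.tsum_mul_left]
      _ ≤ ∑' i, ∑' j, ((f i * g j) ^ 2 + (f j * g i) ^ 2) :=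
          ENNReal.tsum_le_tsum fun i => ENNReal.tsum_le_tsum fun j => ennreal_two_mul_le _ _
      _ = 2 * (S2 f * S2 g) := by
          simp_rw [ENNReal.tsum_add]
          rw [← e2, ← e3, two_mul]
  exact (ENNReal.mul_le_mul_iff_right (by norm_num) (by norm_num)).1 h

/-- Jensen's inequality `(∑ w a)² ≤ (∑ w)(∑ w a²)`. -/
lemma cs_weight {ι : Type*} (w a : ι → ℝ≥0∞) :
    (∑' i, w i * a i) ^ 2 ≤ (∑' i, w i) * ∑' i, w i * a i ^ 2 := by
  have h := cs_sq (fun i => w i ^ (1 / 2 : ℝ)) (fun i => w i ^ (1 / 2 : ℝ) * a i)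
  have e : ∀ i, (w i ^ (1 / 2 : ℝ)) ^ 2 = w i := fun i => by
    rw [← ENNReal.rpow_natCast, ← ENNReal.rpow_mul]; norm_num
  simpa only [S2, mul_pow, ← mul_assoc, ← sq, e] using h

lemma S2_mono {ι : Type*} {A B : ι → ℝ≥0∞} (h : ∀ k, A k ≤ B k) : S2 A ≤ S2 B :=
  ENNReal.tsum_le_tsum fun k => by gcongr; exact h k

lemma S1_mono {ι : Type*} {A B : ι → ℝ≥0∞} (h : ∀ k, A k ≤ B k) : S1 A ≤ S1 B :=
  ENNReal.tsum_le_tsum h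

lemma S2_add_le {ι : Type*} (A B : ι → ℝ≥0∞) :
    S2 (fun k => A k + B k) ≤ 2 * (S2 A + S2 B) := by
  unfold S2
  rw [← ENNReal.tsum_add, ← ENNReal.tsum_mul_left]
  exact ENNReal.tsum_le_tsum fun k => ennreal_sq_add_le _ _

lemma S2_add3_le {ι : Type*} (A B C : ι → ℝ≥0∞) :
    S2 (fun k => A k + B k + C k) ≤ 4 * (S2 A + S2 B + S2 C) := by
  unfold S2
  rw [← ENNReal.tsum_add, ← ENNReal.tsum_add, ← ENNReal.tsum_mul_left]
  exact ENNReal.tsum_le_tsum fun k => ennreal_sq_add3_le _ _ _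

lemma S2_mul_left {ι : Type*} (c : ℝ≥0∞) (A : ι → ℝ≥0∞) :
    S2 (fun k => c * A k) = c ^ 2 * S2 A := by
  unfold S2
  rw [← ENNReal.tsum_mul_left]
  exact tsum_congr fun k => by ring

lemma S2_shift (A : ℤ → ℝ≥0∞) (j : ℤ) : S2 (fun k => A (k - j)) = S2 A :=
  (Equiv.subRight j).tsum_eq (fun k => A k ^ 2)

lemma S2_reflect (A : ℤ → ℝ≥0∞) (j : ℤ) : S2 (fun k => A (j - k)) = S2 A :=
  (Equiv.subLeft j).tsum_eq (fun k => A k ^ 2)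

lemma minkowski {ι : Type*} {A B : ι → ℝ≥0∞} {r s : ℝ≥0∞} (hA : S2 A ≤ r ^ 2) (hB : S2 B ≤ s ^ 2) :
    S2 (fun k => A k + B k) ≤ (r + s) ^ 2 := by
  have h : ∑' k, A k * B k ≤ r * s := by
    have h1 : (∑' k, A k * B k) ^ 2 ≤ (r * s) ^ 2 :=
      (cs_sq A B).trans (by rw [mul_pow]; gcongr)
    exact (ENNReal.pow_le_pow_left_iff (by norm_num)).1 h1
  calc S2 (fun k => A k + B k) = S2 A + 2 * (∑' k, A k * B k) + S2 B := by
        unfold S2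
        rw [← ENNReal.tsum_mul_left, ← ENNReal.tsum_add, ← ENNReal.tsum_add]
        exact tsum_congr fun k => by ring
    _ ≤ r ^ 2 + 2 * (r * s) + s ^ 2 := by gcongr
    _ = _ := by ring

lemma tri_swap23 (A B C : ℤ → ℝ≥0∞) : tri A B C = tri A C B := by
  funext k
  unfold tri
  rw [← (Equiv.prodComm ℤ ℤ).tsum_eq]
  refine tsum_congr fun p => ?_
  simp only [Equiv.prodComm_apply, Prod.fst_swap, Prod.snd_swap]
  rw [sub_right_comm]; ring

/-- The involution `(k₂,k₃) ↦ (k₁,k₃)`, where `k₁ = k - k₂ - k₃`. -/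
def swap12 (k : ℤ) : ℤ × ℤ ≃ ℤ × ℤ where
  toFun p := (k - p.1 - p.2, p.2)
  invFun p := (k - p.1 - p.2, p.2)
  left_inv p := by ext <;> simp; ring
  right_inv p := by ext <;> simp; ring

lemma tri_swap12 (A B C : ℤ → ℝ≥0∞) : tri A B C = tri B A C := by
  funext k
  unfold tri
  rw [← (swap12 k).tsum_eq]
  refine tsum_congr fun p => ?_
  simp only [swap12, Equiv.coe_fn_mk]
  rw [show k - (k - p.1 - p.2) - p.2 = p.1 by ring]; ring

/-- Young's inequality `ℓ¹ * ℓ² → ℓ²` with an arbitrary kernel in the two `ℓ¹` slots. -/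
lemma young_kernel (q : ℤ × ℤ → ℝ≥0∞) (A : ℤ → ℝ≥0∞) :
    S2 (fun k => ∑' p : ℤ × ℤ, q p * A (k - p.1 - p.2)) ≤ (∑' p, q p) ^ 2 * S2 A := by
  calc S2 (fun k => ∑' p : ℤ × ℤ, q p * A (k - p.1 - p.2))
      ≤ ∑' k, (∑' p, q p) * ∑' p : ℤ × ℤ, q p * A (k - p.1 - p.2) ^ 2 :=
        ENNReal.tsum_le_tsum fun k => cs_weight _ _
    _ = (∑' p, q p) * ∑' p : ℤ × ℤ, q p * ∑' k, A (k - p.1 - p.2) ^ 2 := by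
        rw [ENNReal.tsum_mul_left, ENNReal.tsum_comm]
        congr 1
        exact tsum_congr fun p => ENNReal.tsum_mul_left
    _ = (∑' p, q p) ^ 2 * S2 A := by
        have : ∀ p : ℤ × ℤ, ∑' k, A (k - p.1 - p.2) ^ 2 = S2 A := fun p => by
          rw [← S2_shift A (p.1 + p.2)]
          exact tsum_congr fun k => by rw [sub_sub]
        simp_rw [this]
        rw [ENNReal.tsum_mul_right]; ring

lemma tsum_prod_mul (B C : ℤ → ℝ≥0∞) : ∑' p : ℤ × ℤ, B p.1 * C p.2 = (∑' k, B k) * ∑' k, C k := by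
  rw [ENNReal.tsum_prod']
  simp only
  simp_rw [ENNReal.tsum_mul_left]
  rw [ENNReal.tsum_mul_right]

lemma tri_young (A B C : ℤ → ℝ≥0∞) : S2 (tri A B C) ≤ S2 A * S1 B ^ 2 * S1 C ^ 2 := by
  have h := young_kernel (fun p => B p.1 * C p.2) A
  rw [tsum_prod_mul] at h
  calc S2 (tri A B C) = _ := by
        congr 1; funext k; unfold tri; exact tsum_congr fun p => by ring
    _ ≤ _ := h
    _ = _ := by unfold S1; ring

lemma conv_sup (A B : ℤ → ℝ≥0∞) (j : ℤ) : (∑' i, A (j - i) * B i) ^ 2 ≤ S2 A * S2 B := by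
  refine (cs_sq _ _).trans ?_
  rw [S2_reflect]

lemma tri_eq_iter (A B C : ℤ → ℝ≥0∞) (k : ℤ) :
    tri A B C k = ∑' j, C j * ∑' i, A (k - j - i) * B i := by
  unfold tri
  rw [ENNReal.tsum_prod', ENNReal.tsum_comm]
  refine tsum_congr fun j => ?_
  rw [← ENNReal.tsum_mul_left]
  refine tsum_congr fun i => ?_
  simp only
  rw [sub_right_comm]; ring

lemma tri_sup (A B C : ℤ → ℝ≥0∞) (k : ℤ) : tri A B C k ^ 2 ≤ S2 A * S2 B * S1 C ^ 2 := by
  rw [tri_eq_iter]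
  calc _ ≤ (∑' j, C j) * ∑' j, C j * (∑' i, A (k - j - i) * B i) ^ 2 := cs_weight _ _
    _ ≤ (∑' j, C j) * ∑' j, C j * (S2 A * S2 B) := by
        gcongr with j
        exact conv_sup A B _
    _ = _ := by rw [ENNReal.tsum_mul_right]; unfold S1; ring

/-- Hilbert–Schmidt bound for a weight depending on the frequencies `(k₂,k₃)`. -/
lemma tri_HS_in (W : ℤ → ℤ → ℝ≥0∞) (A B C : ℤ → ℝ≥0∞) :
    S2 (fun k => ∑' p : ℤ × ℤ, W p.1 p.2 * (A (k - p.1 - p.2) * B p.1 * C p.2)) ≤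
      (∑' x, ∑' y, W x y ^ 2) * (S2 A * S2 B * S2 C) := by
  have h := young_kernel (fun p => W p.1 p.2 * (B p.1 * C p.2)) A
  have h2 := cs_sq (fun p : ℤ × ℤ => W p.1 p.2) (fun p => B p.1 * C p.2)
  have e1 : S2 (fun p : ℤ × ℤ => W p.1 p.2) = ∑' x, ∑' y, W x y ^ 2 := by
    unfold S2; rw [ENNReal.tsum_prod']
  have e2 : S2 (fun p : ℤ × ℤ => B p.1 * C p.2) = S2 B * S2 C := by
    unfold S2; rw [← tsum_prod_mul]; exact tsum_congr fun p => by ring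
  rw [e1, e2] at h2
  calc _ = _ := by congr 1; funext k; exact tsum_congr fun p => by ring
    _ ≤ _ := h
    _ ≤ _ := mul_le_mul_left h2 (S2 A)
    _ = _ := by ring

/-- Hilbert–Schmidt bound for a weight depending on the frequencies `(k,k₃)`. -/
lemma tri_HS_out (W : ℤ → ℤ → ℝ≥0∞) (A B C : ℤ → ℝ≥0∞) :
    S2 (fun k => ∑' p : ℤ × ℤ, W k p.2 * (A (k - p.1 - p.2) * B p.1 * C p.2)) ≤
      (∑' x, ∑' y, W x y ^ 2) * (S2 A * S2 B * S2 C) := by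
  have e : ∀ k, ∑' p : ℤ × ℤ, W k p.2 * (A (k - p.1 - p.2) * B p.1 * C p.2)
      = ∑' j, W k j * (C j * ∑' i, A (k - j - i) * B i) := fun k => by
    rw [ENNReal.tsum_prod', ENNReal.tsum_comm]
    refine tsum_congr fun j => ?_
    rw [← ENNReal.tsum_mul_left, ← ENNReal.tsum_mul_left]
    refine tsum_congr fun i => ?_
    simp only
    rw [sub_right_comm]; ring
  rw [← ENNReal.tsum_mul_right]
  refine ENNReal.tsum_le_tsum fun k => ?_
  simp only [e]
  refine (cs_sq _ _).trans ?_
  refine mul_le_mul_right ?_ (S2 fun j => W k j)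
  calc S2 (fun j => C j * ∑' i, A (k - j - i) * B i)
      ≤ ∑' j, C j ^ 2 * (S2 A * S2 B) := ENNReal.tsum_le_tsum fun j => by
        rw [mul_pow]; gcongr; exact conv_sup A B _
    _ = _ := by rw [ENNReal.tsum_mul_right]; unfold S2; ring

/-! ### Weighted trilinear estimates -/

/-- The weight `1 + |k|`, equivalent to the Sobolev weight `(1+k²)^{1/2}`. -/
def jr (k : ℤ) : ℝ := 1 + |(k : ℝ)|

lemma jr_pos (k : ℤ) : 0 < jr k := by unfold jr; positivity
lemma one_le_jr (k : ℤ) : 1 ≤ jr k := by unfold jr; linarith [abs_nonneg (k : ℝ)]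
lemma abs_le_jr (k : ℤ) : |(k : ℝ)| ≤ jr k := by unfold jr; linarith
lemma jr_neg (k : ℤ) : jr (-k) = jr k := by simp [jr]
lemma jr_add_le (k l : ℤ) : jr (k + l) ≤ jr k + |(l : ℝ)| := by
  unfold jr; push_cast; linarith [abs_add_le (k : ℝ) l]

/-- Multiplication by the weight `1 + |k|`. -/
def Jw (A : ℤ → ℝ≥0∞) (k : ℤ) : ℝ≥0∞ := ENNReal.ofReal (jr k) * A k

/-- `∑_k (1+|k|)⁻²`. -/
def cJ : ℝ≥0∞ := ∑' k : ℤ, ENNReal.ofReal (jr k)⁻¹ ^ 2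

lemma summable_jr : Summable fun k : ℤ => ((jr k)⁻¹) ^ 2 := by
  have h := (Real.summable_one_div_int_pow (p := 2)).2 (by norm_num)
  have h2 : Summable fun k : ℤ => 1 / (k : ℝ) ^ 2 + if k = 0 then (1 : ℝ) else 0 :=
    h.add (summable_of_hasFiniteSupport ((Set.finite_singleton (0 : ℤ)).subset fun k hk => by
      by_contra hne; simp_all))
  refine Summable.of_nonneg_of_le (fun k => by positivity) (fun k => ?_) h2
  by_cases hk : k = 0
  · simp [hk, jr]
  · simp only [hk, if_false, add_zero]
    have : 0 < |(k : ℝ)| := abs_pos.2 (by exact_mod_cast hk)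
    rw [← sq_abs (k : ℝ), one_div, ← inv_pow]
    exact pow_le_pow_left₀ (inv_pos.2 (jr_pos k)).le (inv_anti₀ this (abs_le_jr k)) 2

lemma cJ_ne_top : cJ ≠ ⊤ := by
  have : cJ = ENNReal.ofReal (∑' k : ℤ, ((jr k)⁻¹) ^ 2) := by
    rw [ENNReal.ofReal_tsum_of_nonneg (fun k => by positivity) summable_jr]
    exact tsum_congr fun k => by rw [ENNReal.ofReal_pow (inv_nonneg.2 (jr_pos k).le)]
  rw [this]; exact ENNReal.ofReal_ne_top

lemma le_Jw (A : ℤ → ℝ≥0∞) (k : ℤ) : A k ≤ Jw A k := by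
  unfold Jw
  exact le_mul_of_one_le_left' (ENNReal.one_le_ofReal.2 (one_le_jr k))

lemma S2_le_Jw (A : ℤ → ℝ≥0∞) : S2 A ≤ S2 (Jw A) := S2_mono (le_Jw A)

/-- The embedding `H¹ ⊂ ℓ¹` of Fourier coefficients. -/
lemma S1_sq_le (A : ℤ → ℝ≥0∞) : S1 A ^ 2 ≤ cJ * S2 (Jw A) := by
  have h := cs_sq (fun k => ENNReal.ofReal (jr k)⁻¹) (Jw A)
  have e : ∀ k, ENNReal.ofReal (jr k)⁻¹ * Jw A k = A k := fun k => by
    unfold Jw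
    rw [← mul_assoc, ← ENNReal.ofReal_mul (inv_nonneg.2 (jr_pos k).le),
      inv_mul_cancel₀ (jr_pos k).ne']
    simp
  simp_rw [e] at h
  exact h

/-- Triple convolution with a real weight `w(k₁,k₂,k₃)`. -/
def triw (w : ℤ → ℤ → ℤ → ℝ) (A B C : ℤ → ℝ≥0∞) (k : ℤ) : ℝ≥0∞ :=
  ∑' p : ℤ × ℤ, ENNReal.ofReal (w (k - p.1 - p.2) p.1 p.2) * (A (k - p.1 - p.2) * B p.1 * C p.2)

lemma triw_mono {w w' : ℤ → ℤ → ℤ → ℝ} (h : ∀ a b c, w a b c ≤ w' a b c) (A B C : ℤ → ℝ≥0∞)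
    (k : ℤ) : triw w A B C k ≤ triw w' A B C k :=
  ENNReal.tsum_le_tsum fun p => by gcongr; exact h _ _ _

lemma triw_add {w w' : ℤ → ℤ → ℤ → ℝ} (h : ∀ a b c, 0 ≤ w a b c) (h' : ∀ a b c, 0 ≤ w' a b c)
    (A B C : ℤ → ℝ≥0∞) (k : ℤ) :
    triw (fun a b c => w a b c + w' a b c) A B C k = triw w A B C k + triw w' A B C k := by
  unfold triw
  rw [← ENNReal.tsum_add]
  exact tsum_congr fun p => by rw [ENNReal.ofReal_add (h _ _ _) (h' _ _ _), add_mul]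

lemma triw_outer {w : ℤ → ℤ → ℤ → ℝ} {v : ℤ → ℝ} (hv : ∀ k, 0 ≤ v k)
    (A B C : ℤ → ℝ≥0∞) (k : ℤ) :
    triw (fun a b c => v (a + b + c) * w a b c) A B C k = ENNReal.ofReal (v k) * triw w A B C k := by
  unfold triw
  rw [← ENNReal.tsum_mul_left]
  refine tsum_congr fun p => ?_
  dsimp only
  rw [show k - p.1 - p.2 + p.1 + p.2 = k by ring, ENNReal.ofReal_mul (hv _), mul_assoc]

lemma triw_one (A B C : ℤ → ℝ≥0∞) (k : ℤ) : triw (fun _ _ _ => 1) A B C k = tri A B C k := by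
  simp [triw, tri]

lemma triw_jr1 (A B C : ℤ → ℝ≥0∞) (k : ℤ) :
    triw (fun a _ _ => jr a) A B C k = tri (Jw A) B C k :=
  tsum_congr fun p => by unfold Jw; ring
lemma triw_jr2 (A B C : ℤ → ℝ≥0∞) (k : ℤ) :
    triw (fun _ b _ => jr b) A B C k = tri A (Jw B) C k :=
  tsum_congr fun p => by unfold Jw; ring
lemma triw_jr3 (A B C : ℤ → ℝ≥0∞) (k : ℤ) :
    triw (fun _ _ c => jr c) A B C k = tri A B (Jw C) k :=
  tsum_congr fun p => by unfold Jw; ring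
lemma triw_jr12 (A B C : ℤ → ℝ≥0∞) (k : ℤ) :
    triw (fun a b _ => jr a * jr b) A B C k = tri (Jw A) (Jw B) C k :=
  tsum_congr fun p => by unfold Jw; rw [ENNReal.ofReal_mul (jr_pos _).le]; ring
lemma triw_jr13 (A B C : ℤ → ℝ≥0∞) (k : ℤ) :
    triw (fun a _ c => jr a * jr c) A B C k = tri (Jw A) B (Jw C) k :=
  tsum_congr fun p => by unfold Jw; rw [ENNReal.ofReal_mul (jr_pos _).le]; ring
lemma triw_jr23 (A B C : ℤ → ℝ≥0∞) (k : ℤ) :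
    triw (fun _ b c => jr b * jr c) A B C k = tri A (Jw B) (Jw C) k :=
  tsum_congr fun p => by unfold Jw; rw [ENNReal.ofReal_mul (jr_pos _).le]; ring

lemma triw_swap23 (w : ℤ → ℤ → ℤ → ℝ) (A B C : ℤ → ℝ≥0∞) (k : ℤ) :
    triw w A B C k = triw (fun a b c => w a c b) A C B k := by
  unfold triw
  rw [← (Equiv.prodComm ℤ ℤ).tsum_eq]
  refine tsum_congr fun p => ?_
  simp only [Equiv.prodComm_apply, Prod.fst_swap, Prod.snd_swap]
  rw [sub_right_comm]; ring

lemma triw_swap12 (w : ℤ → ℤ → ℤ → ℝ) (A B C : ℤ → ℝ≥0∞) (k : ℤ) :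
    triw w A B C k = triw (fun a b c => w b a c) B A C k := by
  unfold triw
  rw [← (swap12 k).tsum_eq]
  refine tsum_congr fun p => ?_
  simp only [swap12, Equiv.coe_fn_mk]
  rw [show k - (k - p.1 - p.2) - p.2 = p.1 by ring]; ring

/-- The weight controlling all kernels of the scheme. -/
def Om (a b c : ℤ) : ℝ := (jr (a + b + c))⁻¹ * (jr a + jr b + jr c)

/-- A sequence dominated by `(1+|k|)⁻¹` times a bounded sequence is in `ℓ²`. -/
lemma S2_inv_jr_le {X : ℤ → ℝ≥0∞} {Y : ℝ≥0∞} (h : ∀ k, X k ^ 2 ≤ Y) :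
    S2 (fun k => ENNReal.ofReal (jr k)⁻¹ * X k) ≤ cJ * Y := by
  unfold S2 cJ
  rw [← ENNReal.tsum_mul_right]
  refine ENNReal.tsum_le_tsum fun k => ?_
  rw [mul_pow]; gcongr; exact h k

/-- `L²` stability estimate: the first slot in `ℓ²`, the other two in `H¹`. -/
lemma Om_L2_1 (A B C : ℤ → ℝ≥0∞) :
    S2 (triw Om A B C) ≤ (36 * cJ ^ 2) * (S2 A * S2 (Jw B) * S2 (Jw C)) := by
  have hpt : ∀ k, triw Om A B C k ≤ tri A B C k
      + 2 * (ENNReal.ofReal (jr k)⁻¹ * tri A (Jw B) C k)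
      + 2 * (ENNReal.ofReal (jr k)⁻¹ * tri A B (Jw C) k) := fun k => by
    have h1 : ∀ a b c, Om a b c ≤ (1 + (jr (a + b + c))⁻¹ * (jr b + jr b))
        + (jr (a + b + c))⁻¹ * (jr c + jr c) := fun a b c => by
      have h3 : jr a ≤ jr (a + b + c) + jr b + jr c := by
        have e : jr a = jr ((a + b + c) + (-b + -c)) := by congr 1; ring
        rw [e]
        refine (jr_add_le _ _).trans ?_
        have := abs_add_le (-b : ℝ) (-c : ℝ)
        push_cast
        rw [abs_neg, abs_neg] at this
        linarith [abs_le_jr b, abs_le_jr c]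
      have hp := jr_pos (a + b + c)
      unfold Om
      have : (1 : ℝ) = (jr (a + b + c))⁻¹ * jr (a + b + c) := (inv_mul_cancel₀ hp.ne').symm
      rw [this, ← mul_add, ← mul_add]
      refine mul_le_mul_of_nonneg_left ?_ (inv_pos.2 hp).le
      linarith
    have hi : ∀ k, 0 ≤ (jr k)⁻¹ := fun k => (inv_pos.2 (jr_pos k)).le
    have hj := fun k => (jr_pos k).le
    refine (triw_mono h1 A B C k).trans_eq ?_
    rw [triw_add (w := fun a b c => 1 + (jr (a + b + c))⁻¹ * (jr b + jr b))
        (fun a b c => add_nonneg zero_le_one (mul_nonneg (hi _) (add_nonneg (hj _) (hj _))))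
        (fun a b c => mul_nonneg (hi _) (add_nonneg (hj _) (hj _))),
      triw_add (w := fun _ _ _ => 1) (fun a b c => zero_le_one)
        (fun a b c => mul_nonneg (hi _) (add_nonneg (hj _) (hj _))),
      triw_outer (v := fun k => (jr k)⁻¹) (w := fun _ b _ => jr b + jr b) hi,
      triw_outer (v := fun k => (jr k)⁻¹) (w := fun _ _ c => jr c + jr c) hi,
      triw_add (w := fun _ b _ => jr b) (fun _ _ _ => hj _) (fun _ _ _ => hj _),
      triw_add (w := fun _ _ c => jr c) (fun _ _ _ => hj _) (fun _ _ _ => hj _),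
      triw_one, triw_jr2, triw_jr3]
    ring
  refine (S2_mono hpt).trans ((S2_add3_le _ _ _).trans ?_)
  rw [S2_mul_left, S2_mul_left]
  have e1 : S2 (tri A B C) ≤ cJ ^ 2 * (S2 A * S2 (Jw B) * S2 (Jw C)) := by
    refine (tri_young A B C).trans ?_
    calc _ ≤ S2 A * (cJ * S2 (Jw B)) * (cJ * S2 (Jw C)) := by
          gcongr
          · exact S1_sq_le B
          · exact S1_sq_le C
      _ = _ := by ring
  have e2 : S2 (fun k => ENNReal.ofReal (jr k)⁻¹ * tri A (Jw B) C k) ≤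
      cJ ^ 2 * (S2 A * S2 (Jw B) * S2 (Jw C)) := by
    refine (S2_inv_jr_le (tri_sup A (Jw B) C)).trans ?_
    calc _ ≤ cJ * (S2 A * S2 (Jw B) * (cJ * S2 (Jw C))) := by
          gcongr; exact S1_sq_le C
      _ = _ := by ring
  have e3 : S2 (fun k => ENNReal.ofReal (jr k)⁻¹ * tri A B (Jw C) k) ≤
      cJ ^ 2 * (S2 A * S2 (Jw B) * S2 (Jw C)) := by
    rw [tri_swap23]
    refine (S2_inv_jr_le (tri_sup A (Jw C) B)).trans ?_
    calc _ ≤ cJ * (S2 A * S2 (Jw C) * (cJ * S2 (Jw B))) := by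
          gcongr; exact S1_sq_le B
      _ = _ := by ring
  calc _ ≤ 4 * (cJ ^ 2 * (S2 A * S2 (Jw B) * S2 (Jw C))
        + 2 ^ 2 * (cJ ^ 2 * (S2 A * S2 (Jw B) * S2 (Jw C)))
        + 2 ^ 2 * (cJ ^ 2 * (S2 A * S2 (Jw B) * S2 (Jw C)))) := by gcongr
    _ = _ := by ring

lemma Om_swap12 (a b c : ℤ) : Om b a c = Om a b c := by
  unfold Om; rw [add_comm b a, add_comm (jr b)]

lemma Om_swap23 (a b c : ℤ) : Om a c b = Om a b c := by
  unfold Om; rw [add_right_comm a c b, add_right_comm (jr a)]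

lemma Om_L2_2 (A B C : ℤ → ℝ≥0∞) :
    S2 (triw Om A B C) ≤ (36 * cJ ^ 2) * (S2 (Jw A) * S2 B * S2 (Jw C)) := by
  have : triw Om A B C = triw Om B A C := by
    funext k; rw [triw_swap12]; simp_rw [Om_swap12]
  rw [this, mul_comm (S2 (Jw A))]
  exact Om_L2_1 B A C

lemma Om_L2_3 (A B C : ℤ → ℝ≥0∞) :
    S2 (triw Om A B C) ≤ (36 * cJ ^ 2) * (S2 (Jw A) * S2 (Jw B) * S2 C) := by
  have : triw Om A B C = triw Om A C B := by
    funext k; rw [triw_swap23]; simp_rw [Om_swap23]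
  rw [this, mul_right_comm (S2 (Jw A))]
  exact Om_L2_2 A C B

/-- Tame `H¹` estimate: only one factor is measured in `H¹`. -/
lemma Om_H1 (A B C : ℤ → ℝ≥0∞) :
    S2 (Jw (triw Om A B C)) ≤ 4 * (S2 (Jw A) * S1 B ^ 2 * S1 C ^ 2
      + S1 A ^ 2 * S2 (Jw B) * S1 C ^ 2 + S1 A ^ 2 * S1 B ^ 2 * S2 (Jw C)) := by
  have hj := fun k => (jr_pos k).le
  have e : ∀ k, Jw (triw Om A B C) k = tri (Jw A) B C k + tri A (Jw B) C k + tri A B (Jw C) k :=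
    fun k => by
    unfold Jw
    rw [← triw_outer (v := jr) hj]
    have : (fun a b c => jr (a + b + c) * Om a b c) = fun a b c => (jr a + jr b) + jr c := by
      funext a b c
      unfold Om
      rw [← mul_assoc, mul_inv_cancel₀ (jr_pos _).ne', one_mul]
    rw [this, triw_add (w := fun a b _ => jr a + jr b) (fun _ _ _ => add_nonneg (hj _) (hj _))
      (fun _ _ _ => hj _), triw_add (w := fun a _ _ => jr a) (fun _ _ _ => hj _) (fun _ _ _ => hj _),
      triw_jr1, triw_jr2, triw_jr3]
    rfl
  refine (S2_mono fun k => (e k).le).trans ((S2_add3_le _ _ _).trans ?_)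
  gcongr
  · exact tri_young _ _ _
  · rw [tri_swap12]
    exact (tri_young _ _ _).trans_eq (by ring)
  · rw [tri_swap23, tri_swap12]
    exact (tri_young _ _ _).trans_eq (by ring)

/-- The weight controlling the frequency truncation errors. -/
def Om2 (a b c : ℤ) : ℝ := (jr a + jr b + jr c)
  + (jr (a + b + c))⁻¹ * (jr a * jr b + jr a * jr c + jr b * jr c)

lemma Om2_L2 (A B C : ℤ → ℝ≥0∞) :
    S2 (triw Om2 A B C) ≤ (48 * cJ ^ 2) * (S2 (Jw A) * S2 (Jw B) * S2 (Jw C)) := by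
  have hj := fun k => (jr_pos k).le
  have hi : ∀ k, 0 ≤ (jr k)⁻¹ := fun k => (inv_pos.2 (jr_pos k)).le
  have e : ∀ k, triw Om2 A B C k = (tri (Jw A) B C k + tri A (Jw B) C k + tri A B (Jw C) k)
      + ENNReal.ofReal (jr k)⁻¹ * (tri (Jw A) (Jw B) C k + tri (Jw A) B (Jw C) k
        + tri A (Jw B) (Jw C) k) := fun k => by
    have h2 : ∀ a b : ℤ, 0 ≤ jr a * jr b := fun a b => mul_nonneg (hj _) (hj _)
    have h3 : ∀ a b c : ℤ, 0 ≤ jr a * jr b + jr a * jr c + jr b * jr c := fun a b c =>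
      add_nonneg (add_nonneg (h2 _ _) (h2 _ _)) (h2 _ _)
    unfold Om2
    rw [triw_add (w := fun a b c => jr a + jr b + jr c)
        (fun _ _ _ => add_nonneg (add_nonneg (hj _) (hj _)) (hj _))
        (fun _ _ _ => mul_nonneg (hi _) (h3 _ _ _)),
      triw_outer (v := fun k => (jr k)⁻¹)
        (w := fun a b c => jr a * jr b + jr a * jr c + jr b * jr c) hi,
      triw_add (w := fun a b _ => jr a + jr b) (fun _ _ _ => add_nonneg (hj _) (hj _))
        (fun _ _ _ => hj _),
      triw_add (w := fun a _ _ => jr a) (fun _ _ _ => hj _) (fun _ _ _ => hj _),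
      triw_add (w := fun a b c => jr a * jr b + jr a * jr c)
        (fun _ _ _ => add_nonneg (h2 _ _) (h2 _ _)) (fun _ _ _ => h2 _ _),
      triw_add (w := fun a b _ => jr a * jr b) (fun _ _ _ => h2 _ _) (fun _ _ _ => h2 _ _),
      triw_jr1, triw_jr2, triw_jr3, triw_jr12, triw_jr13, triw_jr23]
  set P := S2 (Jw A) * S2 (Jw B) * S2 (Jw C) with hP
  have b1 : S2 (tri (Jw A) B C) ≤ cJ ^ 2 * P := (tri_young _ _ _).trans <| by
    calc _ ≤ S2 (Jw A) * (cJ * S2 (Jw B)) * (cJ * S2 (Jw C)) := by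
          gcongr <;> exact S1_sq_le _
      _ = _ := by ring
  have b2 : S2 (tri A (Jw B) C) ≤ cJ ^ 2 * P := by
    rw [tri_swap12]
    refine (tri_young _ _ _).trans ?_
    calc _ ≤ S2 (Jw B) * (cJ * S2 (Jw A)) * (cJ * S2 (Jw C)) := by
          gcongr <;> exact S1_sq_le _
      _ = _ := by ring
  have b3 : S2 (tri A B (Jw C)) ≤ cJ ^ 2 * P := by
    rw [tri_swap23, tri_swap12]
    refine (tri_young _ _ _).trans ?_
    calc _ ≤ S2 (Jw C) * (cJ * S2 (Jw A)) * (cJ * S2 (Jw B)) := by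
          gcongr <;> exact S1_sq_le _
      _ = _ := by ring
  have b4 : ∀ k, tri (Jw A) (Jw B) C k ^ 2 ≤ cJ * P := fun k => (tri_sup _ _ _ k).trans <| by
    calc _ ≤ S2 (Jw A) * S2 (Jw B) * (cJ * S2 (Jw C)) := by gcongr; exact S1_sq_le _
      _ = _ := by ring
  have b5 : ∀ k, tri (Jw A) B (Jw C) k ^ 2 ≤ cJ * P := fun k => by
    rw [tri_swap23]
    refine (tri_sup _ _ _ k).trans ?_
    calc _ ≤ S2 (Jw A) * S2 (Jw C) * (cJ * S2 (Jw B)) := by gcongr; exact S1_sq_le _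
      _ = _ := by ring
  have b6 : ∀ k, tri A (Jw B) (Jw C) k ^ 2 ≤ cJ * P := fun k => by
    rw [tri_swap12, tri_swap23]
    refine (tri_sup _ _ _ k).trans ?_
    calc _ ≤ S2 (Jw B) * S2 (Jw C) * (cJ * S2 (Jw A)) := by gcongr; exact S1_sq_le _
      _ = _ := by ring
  have b7 : S2 (fun k => ENNReal.ofReal (jr k)⁻¹ * (tri (Jw A) (Jw B) C k + tri (Jw A) B (Jw C) k
        + tri A (Jw B) (Jw C) k)) ≤ cJ * (12 * (cJ * P)) := S2_inv_jr_le fun k => by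
    refine (ennreal_sq_add3_le _ _ _).trans ?_
    calc _ ≤ 4 * (cJ * P + cJ * P + cJ * P) := by gcongr; exacts [b4 k, b5 k, b6 k]
      _ = _ := by ring
  have b8 := (S2_add3_le (tri (Jw A) B C) (tri A (Jw B) C) (tri A B (Jw C)))
  refine (S2_mono fun k => (e k).le).trans ((S2_add_le _ _).trans ?_)
  calc _ ≤ 2 * (4 * (cJ ^ 2 * P + cJ ^ 2 * P + cJ ^ 2 * P) + cJ * (12 * (cJ * P))) := by
        gcongr
        refine b8.trans ?_
        gcongr
    _ = _ := by ring

/-! ### The logarithmic Hilbert–Schmidt weight -/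

/-- The weight `max(|x|,|y|)⁻¹ min(1, (s|x||y|)⁻¹)`; it vanishes when `x = 0` or `y = 0`
because `0⁻¹ = 0`. -/
def wr (s : ℝ) (x y : ℤ) : ℝ := (max |(x : ℝ)| |(y : ℝ)|)⁻¹ * min 1 (s * |(x : ℝ)| * |(y : ℝ)|)⁻¹

/-- The part of `wr²` with `0 < |y| ≤ |x|`. -/
def wV (s : ℝ) (x y : ℤ) : ℝ :=
  if y ≠ 0 ∧ |y| ≤ |x| then (|(x : ℝ)|⁻¹ * min 1 (s * |(x : ℝ)| * |(y : ℝ)|)⁻¹) ^ 2 else 0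

lemma wr_nonneg {s : ℝ} (hs : 0 < s) (x y : ℤ) : 0 ≤ wr s x y := by unfold wr; positivity

lemma wV_nonneg (s : ℝ) (x y : ℤ) : 0 ≤ wV s x y := by
  unfold wV; split_ifs <;> positivity

lemma wr_symm (s : ℝ) (x y : ℤ) : wr s x y = wr s y x := by
  unfold wr; rw [max_comm, mul_right_comm]

lemma wr_zero_right (s : ℝ) (x : ℤ) : wr s x 0 = 0 := by simp [wr]

lemma wr_sq_le (s : ℝ) (x y : ℤ) : wr s x y ^ 2 ≤ wV s x y + wV s y x := by
  have key : ∀ x y : ℤ, |y| ≤ |x| → wr s x y ^ 2 ≤ wV s x y := fun x y h => by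
    by_cases hy : y = 0
    · subst hy; rw [wr_zero_right]; simpa using wV_nonneg s x 0
    · have h' : |(y : ℝ)| ≤ |(x : ℝ)| := by exact_mod_cast h
      unfold wr wV
      rw [if_pos ⟨hy, h⟩, max_eq_left h']
  rcases le_total |y| |x| with h | h
  · exact (key x y h).trans (by linarith [wV_nonneg s y x])
  · rw [wr_symm]; exact (key y x h).trans (by linarith [wV_nonneg s x y])

lemma abs_int_one_le {x : ℤ} (hx : x ≠ 0) : (1 : ℝ) ≤ |(x : ℝ)| := by
  exact_mod_cast Int.one_le_abs hx

lemma inv_abs_le {x : ℤ} (hx : x ≠ 0) : |(x : ℝ)|⁻¹ ≤ 2 * (jr x)⁻¹ := by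
  have h := abs_int_one_le hx
  rw [← div_eq_mul_inv, inv_eq_one_div, div_le_div_iff₀ (by linarith) (jr_pos x)]
  unfold jr; linarith

lemma wV_sum_small {s : ℝ} (hs : 0 < s) {x : ℤ} (hx : x ≠ 0) :
    ∑' y, ENNReal.ofReal (wV s x y) ≤ ENNReal.ofReal (3 * |(x : ℝ)|⁻¹) := by
  have h1 := abs_int_one_le hx
  have hz : ∀ y ∉ Finset.Icc (-|x|) |x|, ENNReal.ofReal (wV s x y) = 0 := fun y hy => by
    have : ¬ |y| ≤ |x| := fun h => hy (Finset.mem_Icc.2 (abs_le.1 h))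
    simp [wV, this]
  rw [tsum_eq_sum hz, ← ENNReal.ofReal_sum_of_nonneg (fun y _ => wV_nonneg s x y)]
  refine ENNReal.ofReal_le_ofReal ?_
  have hb : ∀ y ∈ Finset.Icc (-|x|) |x|, wV s x y ≤ (|(x : ℝ)|⁻¹) ^ 2 := fun y _ => by
    unfold wV
    split_ifs
    · refine pow_le_pow_left₀ (by positivity) ?_ 2
      exact mul_le_of_le_one_right (by positivity) (min_le_left _ _)
    · positivity
  refine (Finset.sum_le_card_nsmul _ _ _ hb).trans ?_
  rw [Int.card_Icc, nsmul_eq_mul]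
  have hc : ((|x| + 1 - -|x|).toNat : ℝ) = 2 * |(x : ℝ)| + 1 := by
    have h0 : 0 ≤ |x| + 1 - -|x| := by have := abs_nonneg x; omega
    have : (((|x| + 1 - -|x|).toNat : ℤ) : ℝ) = ((|x| + 1 - -|x| : ℤ) : ℝ) := by
      rw [Int.toNat_of_nonneg h0]
    push_cast at this
    rw [← Int.cast_natCast (R := ℝ), Int.toNat_of_nonneg h0]; push_cast; ring
  rw [hc]
  calc (2 * |(x : ℝ)| + 1) * (|(x : ℝ)|⁻¹) ^ 2 ≤ (3 * |(x : ℝ)|) * (|(x : ℝ)|⁻¹) ^ 2 := by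
        gcongr; linarith
    _ = _ := by field_simp

lemma wV_sum_large {s : ℝ} (hs : 0 < s) {x : ℤ} (hx : x ≠ 0) :
    ∑' y, ENNReal.ofReal (wV s x y) ≤ ENNReal.ofReal (4 * (s ^ 2 * |(x : ℝ)| ^ 4)⁻¹) * cJ := by
  unfold cJ
  rw [← ENNReal.tsum_mul_left]
  refine ENNReal.tsum_le_tsum fun y => ?_
  rw [← ENNReal.ofReal_pow (inv_pos.2 (jr_pos y)).le, ← ENNReal.ofReal_mul (by positivity)]
  refine ENNReal.ofReal_le_ofReal ?_
  have h1 := abs_int_one_le hx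
  unfold wV
  split_ifs with h
  · have h2 := abs_int_one_le h.1
    calc (|(x : ℝ)|⁻¹ * min 1 (s * |(x : ℝ)| * |(y : ℝ)|)⁻¹) ^ 2
        ≤ (|(x : ℝ)|⁻¹ * (s * |(x : ℝ)| * |(y : ℝ)|)⁻¹) ^ 2 := by
          gcongr; exact min_le_right _ _
      _ = (s ^ 2 * |(x : ℝ)| ^ 4)⁻¹ * (|(y : ℝ)|⁻¹) ^ 2 := by
          have : |(x : ℝ)| ≠ 0 := by linarith
          have : |(y : ℝ)| ≠ 0 := by linarith
          field_simp
      _ ≤ (s ^ 2 * |(x : ℝ)| ^ 4)⁻¹ * (2 * (jr y)⁻¹) ^ 2 := by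
          gcongr; exact inv_abs_le h.1
      _ = _ := by ring
  · have := jr_pos y
    positivity

lemma harmonic_int_sum (X : ℕ) :
    ∑ x ∈ Finset.Icc (-(X : ℤ)) X, |(x : ℝ)|⁻¹ ≤ 2 * (1 + Real.log X) := by
  have he : Function.Even fun x : ℤ => |(x : ℝ)|⁻¹ := fun x => by simp
  rw [Finset.sum_Icc_of_even_eq_range he, Finset.sum_range_succ']
  simp only [Int.cast_zero, Nat.cast_zero, abs_zero, inv_zero, add_zero, sub_zero, nsmul_eq_mul]
  have h := harmonic_le_one_add_log X
  have e : ((harmonic X : ℚ) : ℝ) = ∑ i ∈ Finset.range X, |(((i + 1 : ℕ) : ℤ) : ℝ)|⁻¹ := by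
    unfold harmonic
    push_cast
    refine Finset.sum_congr rfl fun i _ => ?_
    rw [abs_of_nonneg (by positivity)]
  rw [e] at h
  norm_num at h ⊢
  linarith

/-- The Hilbert–Schmidt norm of `wr` grows like the square root of a logarithm. -/
lemma wr_HS : ∃ C : ℝ, 0 < C ∧ ∀ s : ℝ, 0 < s → s ≤ 1 / 3 →
    ∑' x, ∑' y, ENNReal.ofReal (wr s x y) ^ 2 ≤ ENNReal.ofReal (C * Real.log (1 / s)) := by
  set c : ℝ := cJ.toReal with hc
  have hcJ : cJ = ENNReal.ofReal c := (ENNReal.ofReal_toReal cJ_ne_top).symm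
  have hc0 : 0 ≤ c := ENNReal.toReal_nonneg
  refine ⟨2 * (18 + 16 * c ^ 2), by positivity, fun s hs hs3 => ?_⟩
  have hlog : 1 ≤ Real.log (1 / s) := by
    rw [Real.le_log_iff_exp_le (by positivity), le_div_iff₀ hs]
    have := Real.exp_one_lt_d9
    nlinarith
  have hW : ∑' x, ∑' y, ENNReal.ofReal (wr s x y) ^ 2 ≤
      2 * ∑' x, ∑' y, ENNReal.ofReal (wV s x y) := by
    calc _ ≤ ∑' x, ∑' y, (ENNReal.ofReal (wV s x y) + ENNReal.ofReal (wV s y x)) := by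
          refine ENNReal.tsum_le_tsum fun x => ENNReal.tsum_le_tsum fun y => ?_
          rw [← ENNReal.ofReal_pow (wr_nonneg hs x y),
            ← ENNReal.ofReal_add (wV_nonneg _ _ _) (wV_nonneg _ _ _)]
          exact ENNReal.ofReal_le_ofReal (wr_sq_le s x y)
      _ = _ := by
          simp_rw [ENNReal.tsum_add]
          rw [ENNReal.tsum_comm (f := fun x y => ENNReal.ofReal (wV s y x)), two_mul]
  -- frequencies beyond `X ≥ 1/s` are summed with the decay in `s`
  set X : ℕ := ⌈1 / s⌉₊ with hX
  have hX1 : 1 / s ≤ X := Nat.le_ceil _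
  have hX2 : (X : ℝ) < 1 / s + 1 := Nat.ceil_lt_add_one (by positivity)
  have hs1 : 3 ≤ 1 / s := by rw [le_div_iff₀ hs]; linarith
  have hXlog : Real.log X ≤ 2 * Real.log (1 / s) := by
    rw [← Real.log_rpow (by positivity)]
    refine Real.log_le_log (by linarith) ?_
    norm_cast
    rw [show (1 / s : ℝ) ^ 2 = (1 / s) * (1 / s) by ring]
    nlinarith
  have hx : ∀ x, ∑' y, ENNReal.ofReal (wV s x y) ≤
      (if x ∈ Finset.Icc (-(X : ℤ)) X then ENNReal.ofReal (3 * |(x : ℝ)|⁻¹) else 0)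
      + ENNReal.ofReal (16 * c) * ENNReal.ofReal (jr x)⁻¹ ^ 2 := fun x => by
    by_cases h0 : x = 0
    · have : ∀ y, wV s x y = 0 := fun y => by
        simp only [h0, wV, abs_zero, abs_nonpos_iff, ite_eq_right_iff]
        exact fun h => absurd h.2 h.1
      simp [this]
    by_cases hm : x ∈ Finset.Icc (-(X : ℤ)) X
    · rw [if_pos hm]
      exact (wV_sum_small hs h0).trans le_self_add
    · rw [if_neg hm, zero_add]
      refine (wV_sum_large hs h0).trans ?_
      rw [hcJ, ← ENNReal.ofReal_pow (inv_pos.2 (jr_pos x)).le, ← ENNReal.ofReal_mul (by positivity),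
        ← ENNReal.ofReal_mul (by positivity)]
      refine ENNReal.ofReal_le_ofReal ?_
      have hxX : (X : ℝ) ≤ |(x : ℝ)| := by
        have : ¬ |x| ≤ X := fun h => hm (Finset.mem_Icc.2 (abs_le.1 h))
        push Not at this
        exact_mod_cast this.le
      have h1 := abs_int_one_le h0
      have h2 : 1 ≤ s * |(x : ℝ)| := by
        have := hX1.trans hxX
        rwa [div_le_iff₀ hs, mul_comm] at this
      have h3 := inv_abs_le h0
      calc 4 * (s ^ 2 * |(x : ℝ)| ^ 4)⁻¹ * c
          = 4 * c * (((s * |(x : ℝ)|) ^ 2)⁻¹ * (|(x : ℝ)|⁻¹) ^ 2) := by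
            rw [show s ^ 2 * |(x : ℝ)| ^ 4 = (s * |(x : ℝ)|) ^ 2 * |(x : ℝ)| ^ 2 by ring, mul_inv,
              inv_pow]; ring
        _ ≤ 4 * c * (1 * (2 * (jr x)⁻¹) ^ 2) := by
            gcongr
            exact inv_le_one_of_one_le₀ (one_le_pow₀ h2)
        _ = _ := by ring
  refine hW.trans ?_
  calc 2 * ∑' x, ∑' y, ENNReal.ofReal (wV s x y)
      ≤ 2 * ∑' x : ℤ, ((if x ∈ Finset.Icc (-(X : ℤ)) X then ENNReal.ofReal (3 * |(x : ℝ)|⁻¹) else 0)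
      + ENNReal.ofReal (16 * c) * ENNReal.ofReal (jr x)⁻¹ ^ 2) := by
        gcongr with x; exact hx x
    _ = 2 * (∑ x ∈ Finset.Icc (-(X : ℤ)) X, ENNReal.ofReal (3 * |(x : ℝ)|⁻¹)
        + ENNReal.ofReal (16 * c) * cJ) := by
        rw [ENNReal.tsum_add, ENNReal.tsum_mul_left]
        congr 2
        rw [tsum_eq_sum (s := Finset.Icc (-(X : ℤ)) X) (fun x hx => if_neg hx)]
        exact Finset.sum_congr rfl fun x hx => if_pos hx
    _ = ENNReal.ofReal (2 * (3 * (∑ x ∈ Finset.Icc (-(X : ℤ)) X, |(x : ℝ)|⁻¹) + 16 * c * c)) := by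
        rw [← ENNReal.ofReal_sum_of_nonneg (fun x _ => by positivity), hcJ,
          ← ENNReal.ofReal_mul (by positivity),
          ← ENNReal.ofReal_add (Finset.sum_nonneg fun x _ => by positivity) (by positivity),
          ← Finset.mul_sum, ENNReal.ofReal_mul (p := 2) (by norm_num)]
        norm_num
    _ ≤ _ := by
        refine ENNReal.ofReal_le_ofReal ?_
        have := harmonic_int_sum X
        nlinarith [sq_nonneg c]

/-! ### Quantitative membership in `ℓ²`, `H¹` and the Wiener algebra -/

/-- `a` has `ℓ²` norm at most `r`. -/
def B2 (a : FSeq) (r : ℝ) : Prop := S2 (fun k => ‖a k‖ₑ) ≤ ENNReal.ofReal r ^ 2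

/-- `a` has `ℓ¹` norm at most `r`. -/
def B1 (a : FSeq) (r : ℝ) : Prop := S1 (fun k => ‖a k‖ₑ) ≤ ENNReal.ofReal r

/-- The Fourier multiplier `1+|k|`; `B2 (JJ a) r` is an `H¹` bound on `a`. -/
def JJ (a : FSeq) : FSeq := fun k => (jr k : ℂ) * a k

/-- The constant `∑_k (1+|k|)⁻²` as a real number. -/
def cj : ℝ := cJ.toReal

lemma cJ_eq : cJ = ENNReal.ofReal cj := (ENNReal.ofReal_toReal cJ_ne_top).symm

lemma one_le_cj : 1 ≤ cj := by
  have h : (1 : ℝ≥0∞) ≤ cJ := by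
    have := ENNReal.le_tsum (f := fun k : ℤ => ENNReal.ofReal (jr k)⁻¹ ^ 2) 0
    unfold cJ; simpa [jr] using this
  rw [cJ_eq] at h
  exact ENNReal.one_le_ofReal.1 h

lemma cj_pos : 0 < cj := lt_of_lt_of_le one_pos one_le_cj

lemma enorm_JJ (a : FSeq) (k : ℤ) : ‖JJ a k‖ₑ = Jw (fun k => ‖a k‖ₑ) k := by
  unfold JJ Jw
  rw [enorm_mul]
  congr 1
  rw [← ofReal_norm, Complex.norm_real, Real.norm_of_nonneg (jr_pos k).le]

lemma B2_JJ_iff (a : FSeq) (r : ℝ) :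
    B2 (JJ a) r ↔ S2 (Jw fun k => ‖a k‖ₑ) ≤ ENNReal.ofReal r ^ 2 := by
  unfold B2
  rw [show (fun k => ‖JJ a k‖ₑ) = Jw fun k => ‖a k‖ₑ from funext (enorm_JJ a)]

lemma B2.mono {a : FSeq} {r s : ℝ} (h : B2 a r) (hrs : r ≤ s) : B2 a s :=
  le_trans h (by gcongr)

lemma B1.mono {a : FSeq} {r s : ℝ} (h : B1 a r) (hrs : r ≤ s) : B1 a s :=
  le_trans h (by gcongr)

lemma B2.dom {a b : FSeq} {r : ℝ} (h : B2 b r) (hab : ∀ k, ‖a k‖ ≤ ‖b k‖) : B2 a r :=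
  le_trans (S2_mono fun k => enorm_le_iff_norm_le.2 (hab k)) h

lemma B1.dom {a b : FSeq} {r : ℝ} (h : B1 b r) (hab : ∀ k, ‖a k‖ ≤ ‖b k‖) : B1 a r :=
  le_trans (S1_mono fun k => enorm_le_iff_norm_le.2 (hab k)) h

lemma B2.add {a b : FSeq} {r s : ℝ} (hr : 0 ≤ r) (hs : 0 ≤ s) (ha : B2 a r) (hb : B2 b s) :
    B2 (fun k => a k + b k) (r + s) := by
  unfold B2
  rw [ENNReal.ofReal_add hr hs]
  exact le_trans (S2_mono fun k => enorm_add_le _ _) (minkowski ha hb)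

lemma B2.sub {a b : FSeq} {r s : ℝ} (hr : 0 ≤ r) (hs : 0 ≤ s) (ha : B2 a r) (hb : B2 b s) :
    B2 (fun k => a k - b k) (r + s) := by
  have hb' : B2 (fun k => - b k) s := hb.dom fun k => by simp
  simpa [sub_eq_add_neg] using ha.add hr hs hb'

lemma B2.smul {a b : FSeq} {r c : ℝ} (hc : 0 ≤ c) (hb : B2 b r)
    (hab : ∀ k, ‖a k‖ ≤ c * ‖b k‖) : B2 a (c * r) := by
  unfold B2
  rw [ENNReal.ofReal_mul hc, mul_pow]
  calc S2 (fun k => ‖a k‖ₑ) ≤ S2 (fun k => ENNReal.ofReal c * ‖b k‖ₑ) := S2_mono fun k => by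
        rw [← ofReal_norm, ← ofReal_norm, ← ENNReal.ofReal_mul hc]
        exact ENNReal.ofReal_le_ofReal (hab k)
    _ = _ := S2_mul_left _ _
    _ ≤ _ := by gcongr; exact hb

lemma norm_JJ (a : FSeq) (k : ℤ) : ‖JJ a k‖ = jr k * ‖a k‖ := by
  unfold JJ
  rw [norm_mul, Complex.norm_real, Real.norm_of_nonneg (jr_pos k).le]

lemma B2.of_JJ {a : FSeq} {r : ℝ} (h : B2 (JJ a) r) : B2 a r :=
  h.dom fun k => by
    rw [norm_JJ]; exact le_mul_of_one_le_left (norm_nonneg _) (one_le_jr k)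

lemma B2.JJ_dom {a b : FSeq} {r : ℝ} (h : B2 (JJ b) r) (hab : ∀ k, ‖a k‖ ≤ ‖b k‖) :
    B2 (JJ a) r :=
  h.dom fun k => by
    rw [norm_JJ, norm_JJ]; exact mul_le_mul_of_nonneg_left (hab k) (jr_pos k).le

lemma JJ_add (a b : FSeq) : JJ (fun k => a k + b k) = fun k => JJ a k + JJ b k := by
  funext k; unfold JJ; ring

lemma JJ_sub (a b : FSeq) : JJ (fun k => a k - b k) = fun k => JJ a k - JJ b k := by
  funext k; unfold JJ; ring

lemma B1_of_JJ {a : FSeq} {r : ℝ} (h : B2 (JJ a) r) : B1 a (cj * r) := by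
  have h1 := S1_sq_le (fun k => ‖a k‖ₑ)
  rw [B2_JJ_iff] at h
  unfold B1
  have h2 : S1 (fun k => ‖a k‖ₑ) ^ 2 ≤ ENNReal.ofReal (cj * r) ^ 2 := by
    calc _ ≤ cJ * ENNReal.ofReal r ^ 2 := h1.trans (by gcongr)
      _ ≤ cJ ^ 2 * ENNReal.ofReal r ^ 2 := by
        gcongr
        rw [cJ_eq]
        exact le_self_pow (ENNReal.one_le_ofReal.2 one_le_cj) (by norm_num)
      _ = _ := by rw [ENNReal.ofReal_mul cj_pos.le, mul_pow, cJ_eq]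
  exact (ENNReal.pow_le_pow_left_iff (by norm_num)).1 h2

lemma B1.summable {a : FSeq} {r : ℝ} (h : B1 a r) : Summable fun k => ‖a k‖ := by
  have : ∑' k, ‖a k‖ₑ ≠ ⊤ := ne_top_of_le_ne_top ENNReal.ofReal_ne_top h
  have h2 := ENNReal.summable_toReal this
  simpa using h2

lemma B2.summable {a : FSeq} {r : ℝ} (h : B2 a r) : Summable fun k => ‖a k‖ ^ 2 := by
  have : ∑' k, ‖a k‖ₑ ^ 2 ≠ ⊤ := ne_top_of_le_ne_top (by simp) h
  have h2 := ENNReal.summable_toReal this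
  simpa using h2

lemma B2_iff {a : FSeq} {r : ℝ} (hr : 0 ≤ r) :
    B2 a r ↔ (Summable fun k => ‖a k‖ ^ 2) ∧ ∑' k, ‖a k‖ ^ 2 ≤ r ^ 2 := by
  have key : (Summable fun k => ‖a k‖ ^ 2) →
      S2 (fun k => ‖a k‖ₑ) = ENNReal.ofReal (∑' k, ‖a k‖ ^ 2) := fun h => by
    rw [ENNReal.ofReal_tsum_of_nonneg (fun k => by positivity) h]
    exact tsum_congr fun k => by rw [ENNReal.ofReal_pow (norm_nonneg _), ofReal_norm]
  constructor
  · intro h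
    refine ⟨h.summable, ?_⟩
    unfold B2 at h
    rw [key (B2.summable h), ← ENNReal.ofReal_pow hr] at h
    exact (ENNReal.ofReal_le_ofReal_iff (by positivity)).1 h
  · rintro ⟨h1, h2⟩
    unfold B2
    rw [key h1, ← ENNReal.ofReal_pow hr]
    exact ENNReal.ofReal_le_ofReal h2

/-- Interpolation: the `ℓ¹` norm is controlled by the `ℓ²` norm up to a small multiple of the
`H¹` norm. -/
lemma B1_interp {ε : ℝ} (hε : 0 < ε) : ∃ C : ℝ, 0 < C ∧ ∀ (a : FSeq) (r s : ℝ), 0 ≤ r → 0 ≤ s →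
    B2 a r → B2 (JJ a) s → B1 a (C * r + ε * s) := by
  classical
  have ht : Filter.Tendsto (fun S : Finset ℤ => ∑' k : { x // x ∉ S }, ((jr (k : ℤ))⁻¹) ^ 2)
      Filter.atTop (nhds 0) :=
    tendsto_tsum_compl_atTop_zero fun k : ℤ => ((jr k)⁻¹) ^ 2
  obtain ⟨S, hS⟩ : ∃ S : Finset ℤ, ∑' k : { x // x ∉ S }, ((jr (k : ℤ))⁻¹) ^ 2 < ε ^ 2 :=
    (ht.eventually_lt_const (show 0 < ε ^ 2 by positivity)).exists
  refine ⟨S.card + 1, by positivity, fun a r s hr hs h2 hJ => ?_⟩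
  unfold B1 S1
  rw [ENNReal.ofReal_add (by positivity) (by positivity)]
  have e : ∑' k, ‖a k‖ₑ = ∑ k ∈ S, ‖a k‖ₑ + ∑' k : { x // x ∉ S }, ‖a k‖ₑ := by
    exact (ENNReal.sum_add_tsum_compl S (fun k => ‖a k‖ₑ)).symm
  rw [e]
  refine add_le_add ?_ ?_
  · calc ∑ k ∈ S, ‖a k‖ₑ ≤ ∑ k ∈ S, ENNReal.ofReal r := by
          refine Finset.sum_le_sum fun k _ => ?_
          have : ‖a k‖ₑ ^ 2 ≤ ENNReal.ofReal r ^ 2 :=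
            (ENNReal.le_tsum (f := fun k => ‖a k‖ₑ ^ 2) k).trans h2
          exact (ENNReal.pow_le_pow_left_iff (by norm_num)).1 this
      _ = ENNReal.ofReal (S.card * r) := by
          rw [Finset.sum_const, nsmul_eq_mul, ENNReal.ofReal_mul (by positivity)]; simp
      _ ≤ _ := ENNReal.ofReal_le_ofReal (by nlinarith)
  · have h := cs_sq (fun k : { x // x ∉ S } => ENNReal.ofReal (jr k)⁻¹)
      (fun k : { x // x ∉ S } => ‖JJ a k‖ₑ)
    have e1 : ∀ k : { x // x ∉ S }, ENNReal.ofReal (jr k)⁻¹ * ‖JJ a k‖ₑ = ‖a k‖ₑ := fun k => by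
      rw [enorm_JJ, Jw, ← mul_assoc, ← ENNReal.ofReal_mul (inv_nonneg.2 (jr_pos _).le),
        inv_mul_cancel₀ (jr_pos _).ne']
      simp
    simp_rw [e1] at h
    have h3 : S2 (fun k : { x // x ∉ S } => ENNReal.ofReal (jr k)⁻¹) ≤ ENNReal.ofReal ε ^ 2 := by
      unfold S2
      simp_rw [← ENNReal.ofReal_pow (inv_nonneg.2 (jr_pos _).le)]
      have hsum : Summable fun k : { x // x ∉ S } => ((jr (k : ℤ))⁻¹) ^ 2 := summable_jr.subtype _
      rw [← ENNReal.ofReal_tsum_of_nonneg (fun k => by positivity) hsum, ← ENNReal.ofReal_pow hε.le]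
      exact ENNReal.ofReal_le_ofReal hS.le
    have h4 : S2 (fun k : { x // x ∉ S } => ‖JJ a k‖ₑ) ≤ ENNReal.ofReal s ^ 2 :=
      le_trans (ENNReal.tsum_comp_le_tsum_of_injective Subtype.val_injective
        (fun k => ‖JJ a k‖ₑ ^ 2)) hJ
    have h5 : (∑' k : { x // x ∉ S }, ‖a k‖ₑ) ^ 2 ≤ ENNReal.ofReal (ε * s) ^ 2 := by
      rw [ENNReal.ofReal_mul hε.le, mul_pow]
      exact h.trans (mul_le_mul' h3 h4)
    exact (ENNReal.pow_le_pow_left_iff (by norm_num)).1 h5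

/-! ### Bridge to the Sobolev norms -/

lemma jr_sq_le (k : ℤ) : jr k ^ 2 ≤ 2 * (1 + (k : ℝ) ^ 2) := by
  unfold jr; nlinarith [sq_abs (k : ℝ), sq_nonneg (1 - |(k : ℝ)|)]

lemma le_jr_sq (k : ℤ) : 1 + (k : ℝ) ^ 2 ≤ jr k ^ 2 := by
  unfold jr; nlinarith [sq_abs (k : ℝ), abs_nonneg (k : ℝ)]

lemma InHs.B2_JJ {a : FSeq} (h : InHs 1 a) : B2 (JJ a) (hnorm 1 a) := by
  unfold InHs at h
  simp only [Real.rpow_one] at h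
  have e : ∀ k, ‖JJ a k‖ ^ 2 ≤ 2 * ((1 + (k : ℝ) ^ 2) * ‖a k‖ ^ 2) := fun k => by
    rw [norm_JJ, mul_pow, ← mul_assoc]
    exact mul_le_mul_of_nonneg_right (jr_sq_le k) (by positivity)
  have hs := Summable.of_nonneg_of_le (fun k => by positivity) e (h.mul_left 2)
  have h0 : 0 ≤ ∑' k : ℤ, (1 + (k : ℝ) ^ 2) * ‖a k‖ ^ 2 := tsum_nonneg fun k => by positivity
  refine (B2_iff (Real.sqrt_nonneg _)).2 ⟨hs, ?_⟩
  simp only [Real.rpow_one]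
  rw [Real.sq_sqrt (by positivity)]
  calc _ ≤ ∑' k : ℤ, 2 * ((1 + (k : ℝ) ^ 2) * ‖a k‖ ^ 2) := hs.tsum_le_tsum e (h.mul_left 2)
    _ = 2 * ∑' k : ℤ, (1 + (k : ℝ) ^ 2) * ‖a k‖ ^ 2 := tsum_mul_left
    _ ≤ _ := by
      have := Real.pi_gt_three
      nlinarith

lemma B2.hnorm_zero_le {a : FSeq} {r : ℝ} (hr : 0 ≤ r) (h : B2 a r) : hnorm 0 a ≤ 3 * r := by
  obtain ⟨h1, h2⟩ := (B2_iff hr).1 h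
  unfold hnorm
  simp only [Real.rpow_zero, one_mul]
  rw [Real.sqrt_le_left (by positivity)]
  have := Real.pi_lt_d2
  have h0 : 0 ≤ ∑' k : ℤ, ‖a k‖ ^ 2 := tsum_nonneg fun k => by positivity
  nlinarith [Real.pi_pos]

/-! ### Trilinear Fourier multipliers -/

/-- The trilinear multiplier `∑_{k₁+k₂+k₃=k} m(k₁,k₂,k₃) a_{k₁} b_{k₂} c_{k₃}`, with the sum
indexed by `(k₂,k₃)`. -/
def Tri (m : ℤ → ℤ → ℤ → ℂ) (a b c : FSeq) : FSeq := fun k =>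
  ∑' p : ℤ × ℤ, m (k - p.1 - p.2) p.1 p.2 * (a (k - p.1 - p.2) * b p.1 * c p.2)

/-- All sums defining `Tri m a b c` converge absolutely. -/
def Sm (m : ℤ → ℤ → ℤ → ℂ) (a b c : FSeq) : Prop := ∀ k : ℤ,
  Summable fun p : ℤ × ℤ => m (k - p.1 - p.2) p.1 p.2 * (a (k - p.1 - p.2) * b p.1 * c p.2)

lemma enorm_Tri_le {m : ℤ → ℤ → ℤ → ℂ} {w : ℤ → ℤ → ℤ → ℝ} {M : ℝ} (hM : 0 ≤ M)
    (h : ∀ x y z, ‖m x y z‖ ≤ M * w x y z) (a b c : FSeq) (k : ℤ) :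
    ‖Tri m a b c k‖ₑ ≤ ENNReal.ofReal M *
      triw w (fun k => ‖a k‖ₑ) (fun k => ‖b k‖ₑ) (fun k => ‖c k‖ₑ) k := by
  unfold Tri triw
  rw [← ENNReal.tsum_mul_left]
  refine enorm_tsum_le_tsum_enorm.trans (ENNReal.tsum_le_tsum fun p => ?_)
  rw [enorm_mul, enorm_mul, enorm_mul, ← mul_assoc (ENNReal.ofReal M), ← ENNReal.ofReal_mul hM]
  gcongr
  rw [← ofReal_norm]
  exact ENNReal.ofReal_le_ofReal (h _ _ _)

lemma S2_Tri_le {m : ℤ → ℤ → ℤ → ℂ} {w : ℤ → ℤ → ℤ → ℝ} {M : ℝ} (hM : 0 ≤ M)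
    (h : ∀ x y z, ‖m x y z‖ ≤ M * w x y z) (a b c : FSeq) :
    S2 (fun k => ‖Tri m a b c k‖ₑ) ≤ ENNReal.ofReal M ^ 2 *
      S2 (triw w (fun k => ‖a k‖ₑ) (fun k => ‖b k‖ₑ) (fun k => ‖c k‖ₑ)) := by
  rw [← S2_mul_left]
  exact S2_mono fun k => enorm_Tri_le hM h a b c k

lemma ofReal_prod_sq {M q r s t : ℝ} (hM : 0 ≤ M) (hq : 0 ≤ q) (hr : 0 ≤ r) (hs : 0 ≤ s) :
    ENNReal.ofReal (M * (q * (r * s * t))) ^ 2 = ENNReal.ofReal M ^ 2 * (ENNReal.ofReal q ^ 2 *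
      (ENNReal.ofReal r ^ 2 * ENNReal.ofReal s ^ 2 * ENNReal.ofReal t ^ 2)) := by
  rw [ENNReal.ofReal_mul hM, ENNReal.ofReal_mul hq, ENNReal.ofReal_mul (by positivity),
    ENNReal.ofReal_mul hr]
  ring

lemma ofReal_six_cj : ENNReal.ofReal (6 * cj) ^ 2 = 36 * cJ ^ 2 := by
  rw [ENNReal.ofReal_mul (by norm_num), cJ_eq, mul_pow]
  norm_num

section
variable {m : ℤ → ℤ → ℤ → ℂ} {a b c : FSeq} {M r s t : ℝ}

lemma Tri_L2_1 (hM : 0 ≤ M) (h : ∀ x y z, ‖m x y z‖ ≤ M * Om x y z) (hr : 0 ≤ r) (hs : 0 ≤ s)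
    (ha : B2 a r) (hb : B2 (JJ b) s) (hc : B2 (JJ c) t) :
    B2 (Tri m a b c) (M * (6 * cj * (r * s * t))) := by
  rw [B2_JJ_iff] at hb hc
  unfold B2
  rw [ofReal_prod_sq hM (by linarith [cj_pos]) hr hs, ofReal_six_cj]
  refine (S2_Tri_le hM h a b c).trans ?_
  gcongr
  refine (Om_L2_1 _ _ _).trans ?_
  gcongr
  exact ha

lemma Tri_L2_2 (hM : 0 ≤ M) (h : ∀ x y z, ‖m x y z‖ ≤ M * Om x y z) (hr : 0 ≤ r) (hs : 0 ≤ s)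
    (ha : B2 (JJ a) r) (hb : B2 b s) (hc : B2 (JJ c) t) :
    B2 (Tri m a b c) (M * (6 * cj * (r * s * t))) := by
  rw [B2_JJ_iff] at ha hc
  unfold B2
  rw [ofReal_prod_sq hM (by linarith [cj_pos]) hr hs, ofReal_six_cj]
  refine (S2_Tri_le hM h a b c).trans ?_
  gcongr
  refine (Om_L2_2 _ _ _).trans ?_
  gcongr
  exact hb

lemma Tri_L2_3 (hM : 0 ≤ M) (h : ∀ x y z, ‖m x y z‖ ≤ M * Om x y z) (hr : 0 ≤ r) (hs : 0 ≤ s)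
    (ha : B2 (JJ a) r) (hb : B2 (JJ b) s) (hc : B2 c t) :
    B2 (Tri m a b c) (M * (6 * cj * (r * s * t))) := by
  rw [B2_JJ_iff] at ha hb
  unfold B2
  rw [ofReal_prod_sq hM (by linarith [cj_pos]) hr hs, ofReal_six_cj]
  refine (S2_Tri_le hM h a b c).trans ?_
  gcongr
  refine (Om_L2_3 _ _ _).trans ?_
  gcongr
  exact hc

lemma Tri_Om2 (hM : 0 ≤ M) (h : ∀ x y z, ‖m x y z‖ ≤ M * Om2 x y z) (hr : 0 ≤ r) (hs : 0 ≤ s)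
    (ha : B2 (JJ a) r) (hb : B2 (JJ b) s) (hc : B2 (JJ c) t) :
    B2 (Tri m a b c) (M * (7 * cj * (r * s * t))) := by
  rw [B2_JJ_iff] at ha hb hc
  unfold B2
  rw [ofReal_prod_sq hM (by linarith [cj_pos]) hr hs]
  refine (S2_Tri_le hM h a b c).trans ?_
  gcongr
  refine (Om2_L2 _ _ _).trans ?_
  gcongr
  rw [ENNReal.ofReal_mul (by norm_num), cJ_eq, mul_pow]
  gcongr
  norm_num

/-- Tame `H¹` estimate: linear in the `H¹` norm, quadratic in the `ℓ¹` norm. -/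
lemma Tri_H1 (hM : 0 ≤ M) (h : ∀ x y z, ‖m x y z‖ ≤ M * Om x y z) (hs : 0 ≤ s)
    (ha : B2 (JJ a) r) (hb : B2 (JJ b) r) (hc : B2 (JJ c) r)
    (ha1 : B1 a s) (hb1 : B1 b s) (hc1 : B1 c s) :
    B2 (JJ (Tri m a b c)) (M * (4 * (s * s * r))) := by
  rw [B2_JJ_iff] at *
  rw [ofReal_prod_sq hM (by norm_num) hs hs]
  have h1 : S2 (Jw fun k => ‖Tri m a b c k‖ₑ) ≤ ENNReal.ofReal M ^ 2 *
      S2 (Jw (triw Om (fun k => ‖a k‖ₑ) (fun k => ‖b k‖ₑ) (fun k => ‖c k‖ₑ))) := by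
    rw [← S2_mul_left]
    refine S2_mono fun k => ?_
    unfold Jw
    rw [mul_left_comm]
    gcongr
    exact enorm_Tri_le hM h a b c k
  refine h1.trans ?_
  gcongr
  refine (Om_H1 _ _ _).trans ?_
  unfold B1 at ha1 hb1 hc1
  calc _ ≤ 4 * (ENNReal.ofReal r ^ 2 * ENNReal.ofReal s ^ 2 * ENNReal.ofReal s ^ 2
      + ENNReal.ofReal s ^ 2 * ENNReal.ofReal r ^ 2 * ENNReal.ofReal s ^ 2
      + ENNReal.ofReal s ^ 2 * ENNReal.ofReal s ^ 2 * ENNReal.ofReal r ^ 2) := by gcongr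
    _ = 12 * (ENNReal.ofReal s ^ 2 * ENNReal.ofReal s ^ 2 * ENNReal.ofReal r ^ 2) := by ring
    _ ≤ _ := by
      gcongr
      norm_num

end

/-- Telescoping of a trilinear expression. -/
lemma Tri_telescope {m : ℤ → ℤ → ℤ → ℂ} {a b c a' b' c' : FSeq} (h1 : Sm m a b c)
    (h2 : Sm m a' b c) (h3 : Sm m a' b' c) (h4 : Sm m a' b' c') (k : ℤ) :
    Tri m a b c k - Tri m a' b' c' k = Tri m (fun k => a k - a' k) b c k
      + Tri m a' (fun k => b k - b' k) c k + Tri m a' b' (fun k => c k - c' k) k := by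
  have e1 : Tri m (fun k => a k - a' k) b c k = Tri m a b c k - Tri m a' b c k := by
    unfold Tri; rw [← (h1 k).tsum_sub (h2 k)]; exact tsum_congr fun p => by ring
  have e2 : Tri m a' (fun k => b k - b' k) c k = Tri m a' b c k - Tri m a' b' c k := by
    unfold Tri; rw [← (h2 k).tsum_sub (h3 k)]; exact tsum_congr fun p => by ring
  have e3 : Tri m a' b' (fun k => c k - c' k) k = Tri m a' b' c k - Tri m a' b' c' k := by
    unfold Tri; rw [← (h3 k).tsum_sub (h4 k)]; exact tsum_congr fun p => by ring
  rw [e1, e2, e3]; ring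

lemma conjS_sub (a b : FSeq) : conjS (fun k => a k - b k) = fun k => conjS a k - conjS b k := by
  funext k; simp [conjS]

lemma JJ_conjS (a : FSeq) : JJ (conjS a) = conjS (JJ a) := by
  funext k; simp [conjS, JJ, jr_neg]

lemma norm_conjS (a : FSeq) (k : ℤ) : ‖conjS a k‖ = ‖a (-k)‖ := by simp [conjS]

lemma enorm_conjS (a : FSeq) (k : ℤ) : ‖conjS a k‖ₑ = ‖a (-k)‖ₑ := by
  rw [← ofReal_norm, norm_conjS, ofReal_norm]

lemma B2.conjS {a : FSeq} {r : ℝ} (h : B2 a r) : B2 (conjS a) r := by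
  unfold B2
  simp_rw [enorm_conjS]
  have := S2_reflect (fun k => ‖a k‖ₑ) 0
  simp only [zero_sub] at this
  rw [this]; exact h

lemma B2.JJ_conjS {a : FSeq} {r : ℝ} (h : B2 (JJ a) r) : B2 (JJ (_root_.conjS a)) r := by
  rw [_root_.JJ_conjS]; exact B2.conjS h

lemma B1.conjS {a : FSeq} {r : ℝ} (h : B1 a r) : B1 (conjS a) r := by
  unfold B1 S1
  simp_rw [enorm_conjS]
  have : ∑' k, ‖a (-k)‖ₑ = ∑' k, ‖a k‖ₑ := (Equiv.neg ℤ).tsum_eq (fun k => ‖a k‖ₑ)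
  rw [this]; exact h

lemma Tri_diff {m : ℤ → ℤ → ℤ → ℂ} {f g : FSeq} {M r d : ℝ} (hM : 0 ≤ M)
    (h : ∀ x y z, ‖m x y z‖ ≤ M * Om x y z) (hr : 0 ≤ r) (hd : 0 ≤ d)
    (hf : B2 (JJ f) r) (hg : B2 (JJ g) r) (hfg : B2 (fun k => f k - g k) d)
    (h1 : Sm m (conjS f) f f) (h2 : Sm m (conjS g) f f) (h3 : Sm m (conjS g) g f)
    (h4 : Sm m (conjS g) g g) :
    B2 (fun k => Tri m (conjS f) f f k - Tri m (conjS g) g g k) (M * (18 * cj * (r * r * d))) := by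
  simp_rw [Tri_telescope h1 h2 h3 h4]
  have hc := cj_pos
  have hd' : B2 (fun k => conjS f k - conjS g k) d := by rw [← conjS_sub]; exact hfg.conjS
  have := B2.add (by positivity) (by positivity) (B2.add (by positivity) (by positivity)
    (Tri_L2_1 hM h hd hr hd' hf hf) (Tri_L2_2 hM h hr hd hg.JJ_conjS hfg hf))
    (Tri_L2_3 hM h hr hr hg.JJ_conjS hg hfg)
  exact this.mono (by nlinarith)

/-! ### Convolutions as trilinear multipliers -/

lemma conv_comm (a b : FSeq) : conv a b = conv b a := by
  funext k
  unfold conv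
  rw [← (Equiv.subLeft k).tsum_eq]
  exact tsum_congr fun j => by simp [mul_comm]

lemma conv_mult_left {m : ℤ → ℂ} {a b c : FSeq} (h : Sm (fun x y _ => m (x + y)) a b c) (k : ℤ) :
    conv (fun j => m j * conv a b j) c k = Tri (fun x y _ => m (x + y)) a b c k := by
  unfold conv Tri
  have h' := (Equiv.prodComm ℤ ℤ).summable_iff.2 (h k)
  rw [← (Equiv.prodComm ℤ ℤ).tsum_eq]
  refine Eq.trans ?_ (Summable.tsum_prod h').symm
  refine tsum_congr fun j => ?_
  beta_reduce
  rw [← tsum_mul_left, ← tsum_mul_right]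
  refine tsum_congr fun i => ?_
  simp only [Function.comp_apply, Equiv.prodComm_apply, Prod.fst_swap, Prod.snd_swap]
  rw [show k - i - j + i = k - j by ring, sub_right_comm]; ring

/-- The change of variables `(k₂+k₃, k₃) ↦ (k₂, k₃)`. -/
def shear : ℤ × ℤ ≃ ℤ × ℤ where
  toFun p := (p.1 - p.2, p.2)
  invFun p := (p.1 + p.2, p.2)
  left_inv p := by ext <;> simp
  right_inv p := by ext <;> simp

lemma conv_mult_right {m : ℤ → ℂ} {a b c : FSeq} (h : Sm (fun _ y z => m (y + z)) a b c) (k : ℤ) :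
    conv a (fun j => m j * conv b c j) k = Tri (fun _ y z => m (y + z)) a b c k := by
  unfold conv Tri
  have h' := shear.summable_iff.2 (h k)
  rw [← shear.tsum_eq]
  refine Eq.trans ?_ (Summable.tsum_prod h').symm
  refine tsum_congr fun j => ?_
  beta_reduce
  rw [← tsum_mul_left, ← tsum_mul_left]
  refine tsum_congr fun i => ?_
  simp only [Function.comp_apply, shear, Equiv.coe_fn_mk]
  rw [show k - (j - i) - i = k - j by ring, sub_add_cancel]; ring

lemma Tri_swap23 (m : ℤ → ℤ → ℤ → ℂ) (a b c : FSeq) (k : ℤ) :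
    Tri m a b c k = Tri (fun x y z => m x z y) a c b k := by
  unfold Tri
  rw [← (Equiv.prodComm ℤ ℤ).tsum_eq]
  refine tsum_congr fun p => ?_
  simp only [Equiv.prodComm_apply, Prod.fst_swap, Prod.snd_swap]
  rw [sub_right_comm]; ring

lemma Sm_of_l1 {m : ℤ → ℤ → ℤ → ℂ} {a b c : FSeq} {M : ℝ} (hm : ∀ x y z, ‖m x y z‖ ≤ M)
    (ha : Summable fun k => ‖a k‖) (hb : Summable fun k => ‖b k‖) (hc : Summable fun k => ‖c k‖) :
    Sm m a b c := by
  intro k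
  have hbc := Summable.mul_of_nonneg hb hc (fun _ => norm_nonneg _) (fun _ => norm_nonneg _)
  refine Summable.of_norm_bounded (hbc.mul_left (M * ∑' k, ‖a k‖)) fun p => ?_
  have h1 : ‖a (k - p.1 - p.2)‖ ≤ ∑' k, ‖a k‖ := ha.le_tsum _ fun _ _ => norm_nonneg _
  have h2 := hm (k - p.1 - p.2) p.1 p.2
  have h3 : 0 ≤ M := (norm_nonneg _).trans h2
  rw [norm_mul, norm_mul, norm_mul]
  calc _ ≤ M * ((∑' k, ‖a k‖) * ‖b p.1‖ * ‖c p.2‖) := by gcongr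
    _ = _ := by ring

/-- `f` is a trigonometric polynomial with modes `|k| ≤ N`. -/
def SuppN (N : ℕ) (f : FSeq) : Prop := ∀ k : ℤ, (N : ℤ) < |k| → f k = 0

lemma SuppN.finite {N : ℕ} {f : FSeq} (h : SuppN N f) : f.support.Finite :=
  (Set.finite_Icc (-(N : ℤ)) N).subset fun k hk => by
    by_contra hc
    exact hk (h k (by by_contra h2; exact hc (Set.mem_Icc.2 (abs_le.1 (not_lt.1 h2)))))

lemma Sm_of_supp {N : ℕ} {m : ℤ → ℤ → ℤ → ℂ} {a b c : FSeq} (hb : SuppN N b) (hc : SuppN N c) :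
    Sm m a b c := by
  intro k
  refine summable_of_hasFiniteSupport ((hb.finite.prod hc.finite).subset fun p hp => ?_)
  rw [Function.mem_support] at hp
  refine Set.mem_prod.2 ⟨fun h => hp ?_, fun h => hp ?_⟩ <;> simp [h]

lemma SuppN.conjS {N : ℕ} {f : FSeq} (h : SuppN N f) : SuppN N (conjS f) := fun k hk => by
  unfold _root_.conjS; rw [h (-k) (by rwa [abs_neg])]; simp

lemma cubicTerm_eq {a : FSeq} (h : Summable fun k => ‖a k‖) :
    cubicTerm a = Tri (fun _ _ _ => 1) (conjS a) a a := by
  funext k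
  have hc : Summable fun k => ‖conjS a k‖ := by
    simp_rw [norm_conjS]
    exact (Equiv.neg ℤ).summable_iff.2 h
  have := conv_mult_left (m := fun _ => 1) (Sm_of_l1 (M := 1) (by simp) hc h h) k
  simpa [cubicTerm] using this

/-! ### The numerical scheme in kernel form -/

/-- The oscillatory integral `∫₀^τ e^{isa} ds`. -/
def Ek (τ : ℝ) (a : ℤ) : ℂ := ∫ s in (0 : ℝ)..τ, Complex.exp (I * (s : ℂ) * (a : ℂ))

lemma Ek_zero (τ : ℝ) : Ek τ 0 = τ := by simp [Ek]

lemma Ek_spec (τ : ℝ) (a : ℤ) : I * (a : ℂ) * Ek τ a = Complex.exp (I * τ * a) - 1 := by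
  by_cases ha : a = 0
  · subst ha; simp
  · unfold Ek
    have hc : I * (a : ℂ) ≠ 0 := mul_ne_zero I_ne_zero (by exact_mod_cast ha)
    have e : ∀ s : ℝ, Complex.exp (I * (s : ℂ) * (a : ℂ)) = Complex.exp (I * (a : ℂ) * s) :=
      fun s => by ring_nf
    simp_rw [e]
    rw [integral_exp_mul_complex hc, mul_div_cancel₀ _ hc]
    rw [mul_right_comm]; simp

lemma norm_exp_I_mul (s : ℝ) (a : ℤ) : ‖Complex.exp (I * (s : ℂ) * (a : ℂ))‖ = 1 := by
  rw [show I * (s : ℂ) * (a : ℂ) = ((s * a : ℝ) : ℂ) * I by push_cast; ring]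
  exact Complex.norm_exp_ofReal_mul_I _

lemma norm_Ek_le {τ : ℝ} (hτ : 0 ≤ τ) (a : ℤ) : ‖Ek τ a‖ ≤ τ := by
  unfold Ek
  have := intervalIntegral.norm_integral_le_of_norm_le_const (a := 0) (b := τ) (C := 1)
    (f := fun s : ℝ => Complex.exp (I * (s : ℂ) * (a : ℂ))) (fun s _ => (norm_exp_I_mul s a).le)
  simpa [abs_of_nonneg hτ] using this

/-- The indicator of `|j| ≤ N`. -/
def chi (N : ℕ) (j : ℤ) : ℂ := if |j| ≤ (N : ℤ) then 1 else 0

lemma norm_chi_le (N : ℕ) (j : ℤ) : ‖chi N j‖ ≤ 1 := by unfold chi; split_ifs <;> simp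

/-- The symbol of `∂ₓ⁻¹`. -/
def dl (j : ℤ) : ℂ := if j = 0 then 0 else (I * (j : ℂ))⁻¹

/-- The trilinear kernel of the numerical scheme. -/
def KK (τ : ℝ) (N : ℕ) (x y z : ℤ) : ℂ :=
  if x + y + z = 0 then τ * chi N (x + y) else
    (if x + y = 0 then 0 else
      chi N (x + y) * (2 * (x + z : ℤ) / (x + y + z : ℤ)) * Ek τ (2 * (x + y) * (x + z)))
    - (x : ℂ) / (x + y + z : ℤ) * chi N (y + z) *
        (Ek τ (2 * (x + y + z) * x) + Ek τ (2 * y * z) - τ)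

/-- The linear multiplier of the scheme, with the free flow removed. -/
def ell (lam τ : ℝ) (M P : ℂ) (k : ℤ) : ℂ :=
  if k = 0 then 1 else Complex.exp (-2 * I * lam * τ * (M + P / (I * k)))

lemma Tri_mult (m : ℤ → ℤ → ℤ → ℂ) (μ ν ρ : ℤ → ℂ) (a b c : FSeq) (k : ℤ) :
    Tri m (fun k => μ k * a k) (fun k => ν k * b k) (fun k => ρ k * c k) k
      = Tri (fun x y z => m x y z * (μ x * ν y * ρ z)) a b c k :=
  tsum_congr fun p => by ring

lemma Tri_smul (m : ℤ → ℤ → ℤ → ℂ) (t : ℂ) (a b c : FSeq) (k : ℤ) :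
    t * Tri m a b c k = Tri (fun x y z => t * m x y z) a b c k := by
  unfold Tri; rw [← tsum_mul_left]; exact tsum_congr fun p => by ring

lemma Tri_add {m m' : ℤ → ℤ → ℤ → ℂ} {a b c : FSeq} (h : Sm m a b c) (h' : Sm m' a b c) (k : ℤ) :
    Tri m a b c k + Tri m' a b c k = Tri (fun x y z => m x y z + m' x y z) a b c k := by
  unfold Tri; rw [← (h k).tsum_add (h' k)]; exact tsum_congr fun p => by ring

lemma Tri_sub {m m' : ℤ → ℤ → ℤ → ℂ} {a b c : FSeq} (h : Sm m a b c) (h' : Sm m' a b c) (k : ℤ) :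
    Tri m a b c k - Tri m' a b c k = Tri (fun x y z => m x y z - m' x y z) a b c k := by
  unfold Tri; rw [← (h k).tsum_sub (h' k)]; exact tsum_congr fun p => by ring

/-- The kernel matters only on `k₁+k₂+k₃=k` and on the supports of the second and third factor. -/
lemma Tri_congr {N : ℕ} {m m' : ℤ → ℤ → ℤ → ℂ} {a b c : FSeq} (hb : SuppN N b) (hc : SuppN N c)
    {k : ℤ} (h : ∀ x y z, x + y + z = k → |y| ≤ (N : ℤ) → |z| ≤ (N : ℤ) → m x y z = m' x y z) :
    Tri m a b c k = Tri m' a b c k := by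
  unfold Tri
  refine tsum_congr fun p => ?_
  by_cases h1 : |p.1| ≤ (N : ℤ)
  · by_cases h2 : |p.2| ≤ (N : ℤ)
    · rw [h _ _ _ (by ring) h1 h2]
    · rw [hc _ (not_le.1 h2)]; simp
  · rw [hb _ (not_le.1 h1)]; simp

lemma dxInv_apply (a : FSeq) (k : ℤ) : dxInv a k = dl k * a k := by
  unfold dxInv dl; split_ifs <;> simp [div_eq_inv_mul]

lemma piN_apply (N : ℕ) (a : FSeq) (k : ℤ) : piN N a k = chi N k * a k := by
  unfold piN chi; split_ifs <;> simp

lemma expD_apply (t : ℝ) (a : FSeq) (k : ℤ) :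
    expD t a k = Complex.exp (-I * t * (k : ℂ) ^ 2) * a k := rfl

lemma conjS_expD (t : ℝ) (a : FSeq) : conjS (expD t a) = expD (-t) (conjS a) := by
  funext k
  simp only [conjS, expD, map_mul]
  rw [← Complex.exp_conj]
  simp

lemma SuppN.mult {N : ℕ} {f : FSeq} (h : SuppN N f) (μ : ℤ → ℂ) : SuppN N fun k => μ k * f k :=
  fun k hk => by simp [h k hk]

lemma SuppN.expD {N : ℕ} {f : FSeq} (h : SuppN N f) (t : ℝ) : SuppN N (expD t f) := h.mult _

section kernelForm
variable {N : ℕ} {f g : FSeq} (k : ℤ)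

lemma term_modSq (hg : SuppN N g) :
    conv (piN N (modSq g)) g k = Tri (fun x y _ => chi N (x + y)) (conjS g) g g k := by
  rw [← conv_mult_left (Sm_of_supp hg hg)]
  congr 1; funext j; rw [piN_apply]; rfl

lemma term_A (hg : SuppN N g) : conv g (dxInv (piN N (modSq g))) k
    = Tri (fun x y _ => dl (x + y) * chi N (x + y)) (conjS g) g g k := by
  rw [conv_comm, ← conv_mult_left (m := fun j => dl j * chi N j) (Sm_of_supp hg hg)]
  congr 1; funext j; rw [dxInv_apply, piN_apply, ← mul_assoc]; rfl

lemma term_B (a : FSeq) (μ : ℤ → ℂ) (hg : SuppN N g) :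
    conv a (fun j => μ j * sqS g j) k = Tri (fun _ y z => μ (y + z)) a g g k :=
  conv_mult_right (Sm_of_supp hg hg) k

lemma term_C (a : FSeq) (f : FSeq) :
    f 0 * conv a f k = Tri (fun _ _ z => if z = 0 then 1 else 0) a f f k := by
  unfold conv Tri
  rw [← tsum_mul_left]
  have hi : Function.Injective fun j : ℤ => (j, (0 : ℤ)) := fun i j h => by simpa using h
  rw [← hi.tsum_eq]
  · exact tsum_congr fun j => by simp; ring
  · intro q hq
    rw [Function.mem_support] at hq
    by_cases h : q.2 = 0
    · exact ⟨q.1, by ext <;> simp [h]⟩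
    · simp [h] at hq

lemma term_D (a : FSeq) (f : FSeq) :
    f 0 ^ 2 * a k = Tri (fun _ y z => if y = 0 ∧ z = 0 then 1 else 0) a f f k := by
  unfold Tri
  rw [tsum_eq_single ((0 : ℤ), (0 : ℤ))]
  · simp; ring
  · intro p hp
    have : ¬ (p.1 = 0 ∧ p.2 = 0) := fun h => hp (Prod.ext h.1 h.2)
    simp [this]

end kernelForm

lemma conv_sub_right {N : ℕ} {a b c : FSeq} (ha : SuppN N a) (k : ℤ) :
    conv a (b - c) k = conv a b k - conv a c k := by
  have hs : ∀ b : FSeq, Summable fun j => a (k - j) * b j := fun b => by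
    refine summable_of_hasFiniteSupport ((ha.finite.preimage
      (f := fun j => k - j) (fun x _ y _ h => by simpa using h)).subset fun j hj => ?_)
    rw [Function.mem_support] at hj
    exact fun h => hj (by simp [h])
  unfold conv
  rw [← (hs b).tsum_sub (hs c)]
  exact tsum_congr fun j => by simp [mul_sub]

/-! ### The one-step map as a trilinear multiplier -/

/-- The symbol of the free flow. -/
def ex (t : ℝ) (k : ℤ) : ℂ := Complex.exp (-I * t * (k : ℂ) ^ 2)

lemma ex_phi (τ : ℝ) (x y z : ℤ) : ex (-τ) x * ex τ y * ex τ z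
    = ex τ (x + y + z) * (1 + I * (2 * (x + y) * (x + z) : ℤ) * Ek τ (2 * (x + y) * (x + z))) := by
  rw [Ek_spec, add_sub_cancel]
  unfold ex
  rw [← Complex.exp_add, ← Complex.exp_add, ← Complex.exp_add]
  congr 1; push_cast; ring

lemma ex_kx (τ : ℝ) (x y z : ℤ) : ex τ (y + z) * ex (-τ) x
    = ex τ (x + y + z) * (1 + I * (2 * (x + y + z) * x : ℤ) * Ek τ (2 * (x + y + z) * x)) := by
  rw [Ek_spec, add_sub_cancel]
  unfold ex
  rw [← Complex.exp_add, ← Complex.exp_add]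
  congr 1; push_cast; ring

lemma ex_yz (τ : ℝ) (y z : ℤ) : ex (-τ) (y + z) * (ex τ y * ex τ z)
    = 1 + I * (2 * y * z : ℤ) * Ek τ (2 * y * z) := by
  rw [Ek_spec, add_sub_cancel]
  unfold ex
  rw [← Complex.exp_add, ← Complex.exp_add]
  congr 1; push_cast; ring

lemma dl_of_ne {j : ℤ} (h : j ≠ 0) : dl j = (I * (j : ℂ))⁻¹ := by simp [dl, h]

lemma kernel_identity (lam τ : ℝ) (N : ℕ) (x y z k : ℤ) (hk : x + y + z = k) (hk0 : k ≠ 0)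
    (hy : |y| ≤ (N : ℤ)) (hz : |z| ≤ (N : ℤ)) :
    (lam : ℂ) * dl k * (dl (x + y) * chi N (x + y) * (ex (-τ) x * ex τ y * ex τ z))
    - lam * (ex τ k * dl k) * (dl (x + y) * chi N (x + y))
    - (lam / 2) * (dl k * dl k * (ex τ (y + z) * chi N (y + z) * ex (-τ) x)
        - ex τ k * (dl k * dl k) * chi N (y + z))
    - (lam / 2) * (ex τ k * dl k) * ((ex (-τ) (y + z) * chi N (y + z) *
        (I * x * (ex τ y * dl y) * (ex τ z * dl z)))
        - chi N (y + z) * (I * x * dl y * dl z))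
    - (I * lam * τ) * (ex τ k * dl k) * (chi N (y + z) * (I * x))
    + (I * lam * τ) * (ex τ k * dl k) * ((if z = 0 then 1 else 0) * (I * x)
        + (if y = 0 then 1 else 0) * (I * x))
    - (I * lam * τ) * ex τ k * (if y = 0 ∧ z = 0 then 1 else 0)
    = ex τ k * (-(I * lam) * KK τ N x y z) := by
  have h1 := ex_phi τ x y z
  have h2 := ex_kx τ x y z
  have h3 := ex_yz τ y z
  rw [hk] at h1 h2
  have hkc : (k : ℂ) ≠ 0 := by exact_mod_cast hk0
  have hxk : (x : ℂ) = k - y - z := by rw [← hk]; push_cast; ring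
  have hI := I_sq
  have hII : I⁻¹ = -I := Complex.inv_I
  have hA : (lam : ℂ) * dl k * (dl (x + y) * chi N (x + y) * (ex (-τ) x * ex τ y * ex τ z))
    - lam * (ex τ k * dl k) * (dl (x + y) * chi N (x + y))
    = ex τ k * (-(I * lam) * (if x + y = 0 then 0 else
      chi N (x + y) * (2 * (x + z : ℤ) / k) * Ek τ (2 * (x + y) * (x + z)))) := by
    rw [h1]
    by_cases h : x + y = 0
    · simp [h, dl]
    · have hc : ((x + y : ℤ) : ℂ) ≠ 0 := by exact_mod_cast h
      simp only [dl_of_ne h, dl_of_ne hk0, if_neg h, mul_inv, hII]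
      push_cast at hc ⊢
      field_simp
      linear_combination (2 * (lam : ℂ) * chi N (x + y) * ex τ k * (x + y) *
        (x + z) * Ek τ (2 * (x + y) * (x + z))) * hI
  have hB : (lam / 2 : ℂ) * (dl k * dl k * (ex τ (y + z) * chi N (y + z) * ex (-τ) x)
        - ex τ k * (dl k * dl k) * chi N (y + z))
      = ex τ k * (-(I * lam) * ((x : ℂ) / k * chi N (y + z) * Ek τ (2 * k * x))) := by
    rw [mul_right_comm (ex τ (y + z)), h2]
    simp only [dl_of_ne hk0, mul_inv, hII]
    push_cast
    field_simp
    linear_combination ((lam : ℂ) * chi N (y + z) * ex τ k * k * x * Ek τ (2 * k * x) * 2) * hI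
  have hC : (lam / 2 : ℂ) * (ex τ k * dl k) * ((ex (-τ) (y + z) * chi N (y + z) *
        (I * x * (ex τ y * dl y) * (ex τ z * dl z)))
        - chi N (y + z) * (I * x * dl y * dl z)) =
      ex τ k * (-(I * lam) * ((x : ℂ) / k * chi N (y + z) *
        (if y = 0 ∨ z = 0 then 0 else Ek τ (2 * y * z)))) := by
    have : ex (-τ) (y + z) * chi N (y + z) *
        (I * x * (ex τ y * dl y) * (ex τ z * dl z)) = chi N (y + z) * (I * x * dl y * dl z) *
        (ex (-τ) (y + z) * (ex τ y * ex τ z)) := by ring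
    rw [this, h3]
    by_cases hy0 : y = 0
    · simp [hy0, dl]
    by_cases hz0 : z = 0
    · simp [hz0, dl]
    have hyc : (y : ℂ) ≠ 0 := by exact_mod_cast hy0
    have hzc : (z : ℂ) ≠ 0 := by exact_mod_cast hz0
    simp only [dl_of_ne hk0, dl_of_ne hy0, dl_of_ne hz0, hy0, hz0, or_self, if_false, mul_inv, hII]
    push_cast
    field_simp
    linear_combination (-(lam : ℂ) * chi N (y + z) * ex τ k * x * y * z * Ek τ (2 * y * z) *
      (I ^ 2 - 1) * 2) * hI
  have hD : - (I * lam * τ : ℂ) * (ex τ k * dl k) * (chi N (y + z) * (I * x))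
    + (I * lam * τ) * (ex τ k * dl k) * ((if z = 0 then 1 else 0) * (I * x)
        + (if y = 0 then 1 else 0) * (I * x))
    - (I * lam * τ) * ex τ k * (if y = 0 ∧ z = 0 then 1 else 0) =
      ex τ k * (-(I * lam) * ((x : ℂ) / k * chi N (y + z) *
        (if y = 0 ∨ z = 0 then 0 else (τ : ℂ)))) := by
    simp only [dl_of_ne hk0, mul_inv, hII]
    by_cases hy0 : y = 0
    · have hch : chi N (y + z) = 1 := by simp [chi, hy0, hz]
      by_cases hz0 : z = 0
      · have : (x : ℂ) = k := by rw [hxk, hy0, hz0]; simp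
        rw [hch, this]
        simp only [hy0, hz0, if_true, and_self, or_self, mul_zero]
        field_simp
        linear_combination (-(lam : ℂ) * ex τ k * I * τ) * hI
      · rw [hch]
        simp only [hy0, hz0, if_true, if_false, and_false, or_false, mul_zero]
        ring
    · by_cases hz0 : z = 0
      · have hch : chi N (y + z) = 1 := by simp [chi, hz0, hy]
        rw [hch]
        simp only [hy0, hz0, if_true, if_false, false_and, or_true, mul_zero]
        ring
      · simp only [hy0, hz0, if_false, or_self, and_self]
        field_simp
        linear_combination ((lam : ℂ) * chi N (y + z) * ex τ k * x * τ) * hI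
  have hE : (if y = 0 ∨ z = 0 then (0 : ℂ) else Ek τ (2 * y * z)) -
      (if y = 0 ∨ z = 0 then (0 : ℂ) else τ) = Ek τ (2 * y * z) - τ := by
    by_cases h : y = 0 ∨ z = 0
    · have : 2 * y * z = 0 := by rcases h with h | h <;> simp [h]
      simp [h, this, Ek_zero]
    · simp [h]
  have hKK : KK τ N x y z = (if x + y = 0 then 0 else
      chi N (x + y) * (2 * (x + z : ℤ) / k) * Ek τ (2 * (x + y) * (x + z)))
      - (x : ℂ) / k * chi N (y + z) * (Ek τ (2 * k * x) + (Ek τ (2 * y * z) - τ)) := by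
    unfold KK
    rw [hk, if_neg hk0, add_sub_assoc]
  rw [hKK, ← hE]
  linear_combination hA - hB - hC + hD

lemma ex_mul_ell (lam τ : ℝ) (M P : ℂ) {k : ℤ} (hk : k ≠ 0) (f : FSeq) :
    expMain lam τ M P f k = ex τ k * (ell lam τ M P k * f k) := by
  unfold expMain ex ell
  rw [if_neg hk, if_neg hk, ← mul_assoc, ← Complex.exp_add]
  congr 2
  ring

lemma expD_apply_ex (t : ℝ) (a : FSeq) (k : ℤ) : expD t a k = ex t k * a k := rfl

section PsiTerms
variable (τ : ℝ) {N : ℕ} {f : FSeq} (hf : SuppN N f) (k : ℤ)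

lemma SuppN.dxInv (hf : SuppN N f) : SuppN N (dxInv f) :=
  fun j hj => by rw [dxInv_apply, hf j hj, mul_zero]

lemma Psi_e1 (hf : SuppN N f) :
    conv (expD τ f) (dxInv (piN N (modSq (expD τ f)))) k = Tri (fun x y z =>
      dl (x + y) * chi N (x + y) * (ex (-τ) x * ex τ y * ex τ z)) (conjS f) f f k := by
  rw [term_A k (hf.expD τ), conjS_expD]
  exact Tri_mult _ (ex (-τ)) (ex τ) (ex τ) _ _ _ _

lemma Psi_e3 (hf : SuppN N f) (F : FSeq) :
    conv (expD (-τ) F) (expD τ (piN N (sqS f))) k = Tri (fun x y z =>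
      ex τ (y + z) * chi N (y + z) * ex (-τ) x) F f f k := by
  have : expD τ (piN N (sqS f)) = fun j => (ex τ j * chi N j) * sqS f j := by
    funext j; rw [expD_apply_ex, piN_apply, ← mul_assoc]
  rw [this, term_B k _ _ hf]
  exact tsum_congr fun p => by rw [expD_apply_ex]; ring

lemma Psi_e4 (hf : SuppN N f) (F : FSeq) :
    conv F (piN N (sqS f)) k = Tri (fun _ y z => chi N (y + z)) F f f k := by
  have : piN N (sqS f) = fun j => chi N j * sqS f j := by funext j; rw [piN_apply]
  rw [this, term_B k _ _ hf]

lemma Psi_e5 (hf : SuppN N f) (F : FSeq) :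
    conv (dx F) (expD (-τ) (piN N (sqS (expD τ (dxInv f))))) k = Tri (fun x y z =>
      ex (-τ) (y + z) * chi N (y + z) * (I * x * (ex τ y * dl y) * (ex τ z * dl z))) F f f k := by
  have : expD (-τ) (piN N (sqS (expD τ (dxInv f)))) =
      fun j => (ex (-τ) j * chi N j) * sqS (expD τ (dxInv f)) j := by
    funext j; rw [expD_apply_ex, piN_apply, ← mul_assoc]
  rw [this, term_B k _ _ (hf.dxInv.expD τ)]
  exact tsum_congr fun p => by
    rw [expD_apply_ex, expD_apply_ex, dxInv_apply, dxInv_apply]; simp only [dx]; ring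

lemma Psi_e6 (hf : SuppN N f) (F : FSeq) :
    conv (dx F) (piN N (sqS (dxInv f))) k = Tri (fun x y z =>
      chi N (y + z) * (I * x * dl y * dl z)) F f f k := by
  have : piN N (sqS (dxInv f)) = fun j => chi N j * sqS (dxInv f) j := by
    funext j; rw [piN_apply]
  rw [this, term_B k _ _ hf.dxInv]
  exact tsum_congr fun p => by
    rw [dxInv_apply, dxInv_apply]; simp only [dx]; ring

lemma Psi_e7 (hf : SuppN N f) (F : FSeq) : conv (dx F) (piN N (sqS f)) k =
    Tri (fun x y z => chi N (y + z) * (I * x)) F f f k := by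
  rw [Psi_e4 k hf]
  exact tsum_congr fun p => by simp only [dx]; ring

lemma Psi_e8 (F : FSeq) : f 0 * conv (dx F) f k = Tri (fun x _ z =>
      (if z = 0 then 1 else 0) * (I * x)) F f f k := by
  rw [term_C]
  exact tsum_congr fun p => by simp only [dx]; ring

lemma Psi_key (lam : ℝ) {F : FSeq} (hf : SuppN N f) (hk0 : k ≠ 0) :
    ex τ k * (-(I * lam) * Tri (KK τ N) F f f k) =
      (lam : ℂ) * dl k * Tri (fun x y z =>
        dl (x + y) * chi N (x + y) * (ex (-τ) x * ex τ y * ex τ z)) F f f k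
    - lam * (ex τ k * dl k) * Tri (fun x y _ => dl (x + y) * chi N (x + y)) F f f k
    - (lam / 2) * (dl k * dl k * Tri (fun x y z => ex τ (y + z) * chi N (y + z) * ex (-τ) x) F f f k
        - ex τ k * (dl k * dl k) * Tri (fun _ y z => chi N (y + z)) F f f k)
    - (lam / 2) * (ex τ k * dl k) * (Tri (fun x y z =>
      ex (-τ) (y + z) * chi N (y + z) * (I * x * (ex τ y * dl y) * (ex τ z * dl z))) F f f k
        - Tri (fun x y z => chi N (y + z) * (I * x * dl y * dl z)) F f f k)
    - (I * lam * τ) * (ex τ k * dl k) * Tri (fun x y z => chi N (y + z) * (I * x)) F f f k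
    + (I * lam * τ) * (ex τ k * dl k) * (Tri (fun x _ z => (if z = 0 then 1 else 0) * (I * x)) F f f k
        + Tri (fun x y _ => (if y = 0 then 1 else 0) * (I * x)) F f f k)
    - (I * lam * τ) * ex τ k * Tri (fun _ y z => if y = 0 ∧ z = 0 then 1 else 0) F f f k := by
  have hS : ∀ m, Sm m F f f := fun m => Sm_of_supp hf hf
  have ha : ∀ m m', Tri m F f f k + Tri m' F f f k = Tri (fun x y z => m x y z + m' x y z) F f f k :=
    fun m m' => Tri_add (hS m) (hS m') k
  have hs : ∀ m m', Tri m F f f k - Tri m' F f f k = Tri (fun x y z => m x y z - m' x y z) F f f k :=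
    fun m m' => Tri_sub (hS m) (hS m') k
  simp only [Tri_smul]
  rw [hs, ha, hs, hs, Tri_smul, Tri_smul, Tri_smul, hs, hs, hs, ha, hs]
  refine Tri_congr hf hf fun x y z h hy hz => ?_
  exact (kernel_identity lam τ N x y z k h hk0 hy hz).symm

end PsiTerms

lemma Psi_eq_ne (lam τ : ℝ) {N : ℕ} (M P : ℂ) {f : FSeq} (hf : SuppN N f) {k : ℤ} (hk0 : k ≠ 0)
    (hk : |k| ≤ (N : ℤ)) : Psi lam τ N M P f k
      = ex τ k * (ell lam τ M P k * f k - I * lam * Tri (KK τ N) (conjS f) f f k) := by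
  have hch : chi N k = 1 := by simp [chi, hk]
  have hdF : SuppN N (dx (conjS f)) := hf.conjS.mult _
  have e9 := term_D k (conjS f) f
  have e8 := Psi_e8 (f := f) k (conjS f)
  have e8' := e8
  rw [Tri_swap23] at e8'
  have key := Psi_key τ k lam (F := conjS f) hf hk0
  rw [← e8, ← e8', ← e9] at key
  rw [mul_sub, show ∀ A B : ℂ, A - ex τ k * (I * lam * B) = A + ex τ k * (-(I * lam) * B) from
    fun A B => by ring, key, ← ex_mul_ell lam τ M P hk0]
  unfold Psi
  simp only [Pi.add_apply, Pi.sub_apply, Pi.smul_apply, smul_eq_mul, expD_apply_ex τ, dxInv_apply,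
    piN_apply, hch, if_neg hk0, pi0, piNe, mul_zero, add_zero, one_mul]
  rw [conv_sub_right hdF, Psi_e1 τ k hf, term_A k hf, Psi_e3 τ k hf, Psi_e4 k hf, Psi_e5 τ k hf,
    Psi_e6 k hf, Psi_e7 k hf]
  ring

lemma ex_zero_right (t : ℝ) : ex t 0 = 1 := by simp [ex]

lemma Psi_eq_zero (lam τ : ℝ) {N : ℕ} (M P : ℂ) {f : FSeq} (hf : SuppN N f) :
    Psi lam τ N M P f 0 = f 0 - I * lam * Tri (KK τ N) (conjS f) f f 0 := by
  have h1 : Tri (KK τ N) (conjS f) f f 0 = τ * conv (piN N (modSq f)) f 0 := by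
    rw [term_modSq 0 hf, Tri_smul]
    refine Tri_congr hf hf fun x y z h _ _ => ?_
    simp [KK, h]
  have hdl : dl 0 = 0 := by simp [dl]
  rw [h1]
  unfold Psi
  simp only [Pi.add_apply, Pi.sub_apply, Pi.smul_apply, smul_eq_mul, expD_apply_ex τ, dxInv_apply,
    if_true, pi0, piNe, mul_zero, add_zero, zero_mul, sub_zero, hdl, expMain]
  rw [show (-2 * (lam : ℂ) * M * I * (τ : ℂ)) = -2 * I * (lam : ℂ) * (τ : ℂ) * M by ring]
  ring

lemma Psi_eq (lam τ : ℝ) {N : ℕ} (M P : ℂ) {f : FSeq} (hf : SuppN N f) {k : ℤ}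
    (hk : |k| ≤ (N : ℤ)) : Psi lam τ N M P f k
      = ex τ k * (ell lam τ M P k * f k - I * lam * Tri (KK τ N) (conjS f) f f k) := by
  by_cases h0 : k = 0
  · subst h0
    rw [Psi_eq_zero lam τ M P hf, ex_zero_right]; simp [ell]
  · exact Psi_eq_ne lam τ M P hf h0 hk

lemma Psi_supp (lam τ : ℝ) {N : ℕ} (M P : ℂ) {f : FSeq} (hf : SuppN N f) :
    SuppN N (Psi lam τ N M P f) := by
  intro k hk
  have h0 : k ≠ 0 := by rintro rfl; simp at hk; omega
  have hch : chi N k = 0 := by simp [chi, hk]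
  have hfc : conjS f k = 0 := hf.conjS k hk
  unfold Psi
  simp [expD_apply_ex τ, dxInv_apply, piN_apply, hch, h0, pi0, piNe, hfc,
    ex_mul_ell _ _ _ _ h0, hf k hk]

/-! ### Stability of the scheme -/

lemma Om_pos (x y z : ℤ) : 0 < Om x y z := by
  have := jr_pos x; have := jr_pos y; have := jr_pos z; have := jr_pos (x + y + z)
  unfold Om; positivity

lemma norm_KK_le {τ : ℝ} (hτ : 0 ≤ τ) (N : ℕ) (x y z : ℤ) :
    ‖KK τ N x y z‖ ≤ (10 * τ) * Om x y z := by
  have hx := abs_le_jr x; have hz := abs_le_jr z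
  have h1 := one_le_jr x; have h2 := one_le_jr y; have h3 := one_le_jr z
  unfold KK
  split_ifs with h h'
  · have : Om x y z = jr x + jr y + jr z := by
      unfold Om; rw [h]; simp [jr]
    rw [this, norm_mul, Complex.norm_real, Real.norm_of_nonneg hτ]
    have := norm_chi_le N (x + y)
    nlinarith
  all_goals
    set k := x + y + z with hk
    have hi := inv_abs_le h
    have hkp : 0 < |(k : ℝ)|⁻¹ := inv_pos.2 (by linarith [abs_int_one_le h])
    have hB : ‖(x : ℂ) / (k : ℤ) * chi N (y + z) *
        (Ek τ (2 * k * x) + Ek τ (2 * y * z) - τ)‖ ≤ |(k : ℝ)|⁻¹ * (3 * τ * jr x) := by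
      have e1 : ‖Ek τ (2 * k * x) + Ek τ (2 * y * z) - τ‖ ≤ 3 * τ := by
        refine (norm_sub_le _ _).trans ?_
        have := norm_add_le (Ek τ (2 * k * x)) (Ek τ (2 * y * z))
        have := norm_Ek_le hτ (2 * k * x)
        have := norm_Ek_le hτ (2 * y * z)
        rw [Complex.norm_real, Real.norm_of_nonneg hτ]
        linarith
      rw [norm_mul, norm_mul, norm_div, Complex.norm_intCast, Complex.norm_intCast]
      calc |(x : ℝ)| / |(k : ℝ)| * ‖chi N (y + z)‖ * _ ≤ jr x / |(k : ℝ)| * 1 * (3 * τ) := by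
            gcongr
            exact norm_chi_le _ _
        _ = _ := by rw [div_eq_mul_inv]; ring
  · rw [zero_sub, norm_neg]
    refine hB.trans ?_
    unfold Om
    rw [← hk]
    calc |(k : ℝ)|⁻¹ * (3 * τ * jr x) ≤ (2 * (jr k)⁻¹) * (3 * τ * (jr x + jr y + jr z)) := by
          have := (jr_pos k).le
          gcongr
          linarith
      _ ≤ 10 * τ * ((jr k)⁻¹ * (jr x + jr y + jr z)) := by
          have : 0 ≤ τ * ((jr k)⁻¹ * (jr x + jr y + jr z)) :=
            mul_nonneg hτ (mul_nonneg (inv_nonneg.2 (jr_pos k).le) (by linarith))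
          linarith
  · have hA : ‖chi N (x + y) * (2 * (x + z : ℤ) / (k : ℤ)) * Ek τ (2 * (x + y) * (x + z))‖
        ≤ |(k : ℝ)|⁻¹ * (2 * τ * (jr x + jr z)) := by
      rw [norm_mul, norm_mul, norm_div, norm_mul, Complex.norm_intCast, Complex.norm_intCast,
        Complex.norm_ofNat]
      have e : |((x + z : ℤ) : ℝ)| ≤ jr x + jr z := by
        push_cast; exact (abs_add_le _ _).trans (by linarith)
      calc ‖chi N (x + y)‖ * (2 * |((x + z : ℤ) : ℝ)| / |(k : ℝ)|) * _
          ≤ 1 * (2 * (jr x + jr z) / |(k : ℝ)|) * τ := by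
            gcongr
            · exact norm_chi_le _ _
            · exact norm_Ek_le hτ _
        _ = _ := by rw [div_eq_mul_inv]; ring
    refine (norm_sub_le _ _).trans ((add_le_add hA hB).trans ?_)
    unfold Om
    rw [← hk, ← mul_add]
    calc |(k : ℝ)|⁻¹ * (2 * τ * (jr x + jr z) + 3 * τ * jr x)
        ≤ (2 * (jr k)⁻¹) * (5 * τ * (jr x + jr y + jr z)) := by
          have := (jr_pos k).le
          gcongr
          nlinarith
      _ ≤ 10 * τ * ((jr k)⁻¹ * (jr x + jr y + jr z)) := by linarith

lemma norm_ex (t : ℝ) (k : ℤ) : ‖ex t k‖ = 1 := by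
  unfold ex
  rw [show -I * (t : ℂ) * (k : ℂ) ^ 2 = ((-t * k ^ 2 : ℝ) : ℂ) * I by push_cast; ring]
  exact Complex.norm_exp_ofReal_mul_I _

lemma norm_ell (lam τ : ℝ) {M P : ℂ} (hM : M.im = 0) (hP : P.re = 0) (k : ℤ) :
    ‖ell lam τ M P k‖ = 1 := by
  unfold ell
  split_ifs with h
  · simp
  · have e1 : M = (M.re : ℂ) := Complex.ext rfl (by simp [hM])
    have e2 : P = I * (P.im : ℂ) := Complex.ext (by simp [hP]) (by simp)
    have : -2 * I * lam * τ * (M + P / (I * k)) =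
        ((-2 * lam * τ * (M.re + P.im / k) : ℝ) : ℂ) * I := by
      rw [e2, mul_div_mul_left _ _ I_ne_zero]
      nth_rewrite 1 [e1]
      push_cast
      simp
      ring
    rw [this]
    exact Complex.norm_exp_ofReal_mul_I _

section
variable {lam τ r : ℝ} {N : ℕ} {M P : ℂ} {f g : FSeq}

lemma Psi_L2 {d : ℝ} (hlam : |lam| ≤ 1) (hτ : 0 ≤ τ) (hM : M.im = 0) (hP : P.re = 0) (hr : 0 ≤ r)
    (hd : 0 ≤ d) (hfN : SuppN N f) (hgN : SuppN N g) (hf : B2 (JJ f) r) (hg : B2 (JJ g) r)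
    (hfg : B2 (fun k => f k - g k) d) :
    B2 (fun k => Psi lam τ N M P f k - Psi lam τ N M P g k)
      (d + 10 * τ * (18 * cj * (r * r * d))) := by
  have hc := cj_pos
  have h := Tri_diff (m := KK τ N) (by positivity) (norm_KK_le hτ N) hr hd hf hg hfg
    (Sm_of_supp hfN hfN) (Sm_of_supp hfN hfN) (Sm_of_supp hgN hfN) (Sm_of_supp hgN hgN)
  have h2 : B2 (fun k => ‖f k - g k‖ + ‖Tri (KK τ N) (conjS f) f f k
      - Tri (KK τ N) (conjS g) g g k‖ : FSeq) (d + 10 * τ * (18 * cj * (r * r * d))) := by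
    refine B2.add hd (by positivity) (hfg.dom fun k => by simp) (h.dom fun k => by simp)
  refine h2.dom fun k => ?_
  rw [← Complex.ofReal_add, Complex.norm_real, Real.norm_of_nonneg (by positivity)]
  by_cases hk : |k| ≤ (N : ℤ)
  · rw [Psi_eq lam τ M P hfN hk, Psi_eq lam τ M P hgN hk, ← mul_sub, norm_mul, norm_ex, one_mul]
    rw [show ell lam τ M P k * f k - I * lam * Tri (KK τ N) (conjS f) f f k
        - (ell lam τ M P k * g k - I * lam * Tri (KK τ N) (conjS g) g g k)
        = ell lam τ M P k * (f k - g k) - I * lam * (Tri (KK τ N) (conjS f) f f k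
        - Tri (KK τ N) (conjS g) g g k) by ring]
    refine (norm_sub_le _ _).trans ?_
    rw [norm_mul, norm_ell lam τ hM hP, one_mul, norm_mul, norm_mul, norm_I, one_mul,
      Complex.norm_real, Real.norm_eq_abs]
    gcongr
    exact mul_le_of_le_one_left (norm_nonneg _) hlam
  · rw [Psi_supp lam τ M P hfN k (not_le.1 hk), Psi_supp lam τ M P hgN k (not_le.1 hk)]
    simp; positivity

lemma Psi_H1 {s : ℝ} (hlam : |lam| ≤ 1) (hτ : 0 ≤ τ) (hM : M.im = 0) (hP : P.re = 0) (hr : 0 ≤ r)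
    (hs : 0 ≤ s) (hfN : SuppN N f) (hf : B2 (JJ f) r) (hf1 : B1 f s) :
    B2 (JJ (Psi lam τ N M P f)) (r + 10 * τ * (4 * (s * s * r))) := by
  have h := Tri_H1 (m := KK τ N) (by positivity) (norm_KK_le hτ N) hs hf.JJ_conjS hf hf
    hf1.conjS hf1 hf1
  have h2 : B2 (fun k => ‖JJ f k‖ + ‖JJ (Tri (KK τ N) (conjS f) f f) k‖ : FSeq)
      (r + 10 * τ * (4 * (s * s * r))) := by
    refine B2.add hr (by positivity) (hf.dom fun k => by simp) (h.dom fun k => by simp)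
  refine h2.dom fun k => ?_
  rw [← Complex.ofReal_add, Complex.norm_real, Real.norm_of_nonneg (by positivity)]
  rw [norm_JJ, norm_JJ, norm_JJ, ← mul_add]
  refine mul_le_mul_of_nonneg_left ?_ (jr_pos k).le
  by_cases hk : |k| ≤ (N : ℤ)
  · rw [Psi_eq lam τ M P hfN hk, norm_mul, norm_ex, one_mul]
    refine (norm_sub_le _ _).trans ?_
    rw [norm_mul, norm_ell lam τ hM hP, one_mul, norm_mul, norm_mul, norm_I, one_mul,
      Complex.norm_real, Real.norm_eq_abs]
    gcongr
    exact mul_le_of_le_one_left (norm_nonneg _) hlam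
  · rw [Psi_supp lam τ M P hfN k (not_le.1 hk)]
    simp; positivity

end

/-! ### Comparison of the exact and the numerical kernel -/

/-- The product remainder `∫₀^τ (e^{isa}-1)(e^{isb}-1) ds`. -/
def Qk (τ : ℝ) (a b : ℤ) : ℂ :=
  ∫ s in (0 : ℝ)..τ, (Complex.exp (I * (s : ℂ) * (a : ℂ)) - 1) * (Complex.exp (I * (s : ℂ) * (b : ℂ)) - 1)

lemma intervalIntegrable_exp (τ : ℝ) (a : ℤ) :
    IntervalIntegrable (fun s : ℝ => Complex.exp (I * (s : ℂ) * (a : ℂ))) volume 0 τ := by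
  apply Continuous.intervalIntegrable; fun_prop

lemma Qk_eq (τ : ℝ) (a b : ℤ) : Qk τ a b = Ek τ (a + b) - Ek τ a - Ek τ b + τ := by
  have h : ∀ s : ℝ, (Complex.exp (I * (s : ℂ) * (a : ℂ)) - 1) * (Complex.exp (I * (s : ℂ) * (b : ℂ)) - 1)
      = Complex.exp (I * (s : ℂ) * ((a + b : ℤ) : ℂ)) - Complex.exp (I * (s : ℂ) * (a : ℂ))
        - Complex.exp (I * (s : ℂ) * (b : ℂ)) + 1 := fun s => by
    rw [show I * (s : ℂ) * ((a + b : ℤ) : ℂ) = I * s * a + I * s * b by push_cast; ring,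
      Complex.exp_add]
    ring
  unfold Qk Ek
  simp_rw [h]
  rw [intervalIntegral.integral_add, intervalIntegral.integral_sub, intervalIntegral.integral_sub]
  · simp
  all_goals apply Continuous.intervalIntegrable; fun_prop

lemma norm_exp_sub_one_le (s : ℝ) (a : ℤ) :
    ‖Complex.exp (I * (s : ℂ) * (a : ℂ)) - 1‖ ≤ |s * a| := by
  have := Real.norm_exp_I_mul_ofReal_sub_one_le (x := s * a)
  rw [show I * (s : ℂ) * (a : ℂ) = I * ((s * a : ℝ) : ℂ) by push_cast; ring]
  simpa using this

lemma norm_exp_sub_one_le_two (s : ℝ) (a : ℤ) :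
    ‖Complex.exp (I * (s : ℂ) * (a : ℂ)) - 1‖ ≤ 2 := by
  refine (norm_sub_le _ _).trans ?_
  rw [norm_exp_I_mul]; norm_num

lemma norm_exp_sub_one_le_min {s τ : ℝ} (hs : 0 ≤ s) (hsτ : s ≤ τ) (a : ℤ) :
    ‖Complex.exp (I * (s : ℂ) * ((2 * a : ℤ) : ℂ)) - 1‖ ≤ 2 * min 1 (τ * |(a : ℝ)|) := by
  rcases min_choice 1 (τ * |(a : ℝ)|) with h | h <;> rw [h]
  · simpa using norm_exp_sub_one_le_two s (2 * a)
  · refine (norm_exp_sub_one_le s (2 * a)).trans ?_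
    push_cast
    rw [abs_mul, abs_mul, abs_of_nonneg hs, abs_two]
    have := mul_le_mul_of_nonneg_right hsτ (abs_nonneg (a : ℝ))
    linarith

lemma norm_Qk_le {τ : ℝ} (hτ : 0 ≤ τ) (a b : ℤ) :
    ‖Qk τ (2 * a) (2 * b)‖ ≤ 4 * τ * (min 1 (τ * |(a : ℝ)|) * min 1 (τ * |(b : ℝ)|)) := by
  unfold Qk
  have := intervalIntegral.norm_integral_le_of_norm_le_const (a := 0) (b := τ)
    (C := 4 * (min 1 (τ * |(a : ℝ)|) * min 1 (τ * |(b : ℝ)|)))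
    (f := fun s : ℝ => (Complex.exp (I * (s : ℂ) * ((2 * a : ℤ) : ℂ)) - 1) *
      (Complex.exp (I * (s : ℂ) * ((2 * b : ℤ) : ℂ)) - 1)) (fun s hs => by
      rw [Set.uIoc_of_le hτ] at hs
      rw [norm_mul]
      have h1 := norm_exp_sub_one_le_min hs.1.le hs.2 a
      have h2 := norm_exp_sub_one_le_min hs.1.le hs.2 b
      calc _ ≤ (2 * min 1 (τ * |(a : ℝ)|)) * (2 * min 1 (τ * |(b : ℝ)|)) := by gcongr
        _ = _ := by ring)
  refine this.trans (le_of_eq ?_)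
  rw [sub_zero, abs_of_nonneg hτ]; ring

/-- The pointwise estimate behind the `√log` loss: the remainder kernel is dominated by three
Hilbert-Schmidt weights. -/
lemma wr_bound {s : ℝ} (hs : 0 < s) {x y z : ℤ} (hk : x + y + z ≠ 0) (hy : y ≠ 0)
    (hz : z ≠ 0) : |((x + y + z : ℤ) : ℝ)|⁻¹ * min 1 (s * (|((x + y + z : ℤ) : ℝ)| * |(x : ℝ)|)) *
      min 1 (s * (|(y : ℝ)| * |(z : ℝ)|))⁻¹ ≤
    3 * (wr s y z + wr s (x + y + z) z + wr s (x + y + z) y) := by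
  wlog hyz : |(z : ℝ)| ≤ |(y : ℝ)| generalizing y z
  · have := this (y := z) (z := y) (by rwa [add_right_comm]) hz hy (le_of_not_ge hyz)
    rw [add_right_comm x z y] at this
    rw [mul_comm |(y : ℝ)|, wr_symm s y z]
    linarith
  have hk1 := abs_int_one_le hk
  have hy1 := abs_int_one_le hy
  have hz1 := abs_int_one_le hz
  have hxle : |(x : ℝ)| ≤ |((x + y + z : ℤ) : ℝ)| + |(y : ℝ)| + |(z : ℝ)| := by
    have : (x : ℝ) = ((x + y + z : ℤ) : ℝ) - y - z := by push_cast; ring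
    rw [this]
    exact (abs_sub _ _).trans (by gcongr; exact abs_sub _ _)
  have n1 := wr_nonneg hs y z
  have n2 := wr_nonneg hs (x + y + z) z
  have n3 := wr_nonneg hs (x + y + z) y
  have hX0 := abs_nonneg (x : ℝ)
  generalize hA : |((x + y + z : ℤ) : ℝ)| = A at *
  have e1 : wr s y z = |(y : ℝ)|⁻¹ * min 1 (s * (|(y : ℝ)| * |(z : ℝ)|))⁻¹ := by
    unfold wr; rw [max_eq_left hyz, mul_assoc s]
  have e2 : wr s (x + y + z) z = (max A |(z : ℝ)|)⁻¹ * min 1 (s * (A * |(z : ℝ)|))⁻¹ := by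
    unfold wr; rw [hA, mul_assoc s]
  generalize wr s y z = W1 at *
  generalize wr s (x + y + z) z = W2 at *
  generalize wr s (x + y + z) y = W3 at *
  generalize |(x : ℝ)| = X at *
  generalize |(y : ℝ)| = Y at *
  generalize |(z : ℝ)| = Z at *
  have hX : min 1 (s * (A * X)) ≤ 1 := min_le_left _ _
  have hXp : 0 ≤ min 1 (s * (A * X)) := le_min zero_le_one (by positivity)
  have hp : 0 ≤ min 1 (s * (Y * Z))⁻¹ := le_min zero_le_one (by positivity)
  rcases le_total Y A with h | h
  · have : A⁻¹ * min 1 (s * (A * X)) * min 1 (s * (Y * Z))⁻¹ ≤ Y⁻¹ * 1 * min 1 (s * (Y * Z))⁻¹ := by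
      gcongr
    rw [mul_one, ← e1] at this
    linarith
  · have hX3 : X ≤ 3 * Y := by linarith
    rcases le_total Z A with h' | h'
    · rw [max_eq_left h'] at e2
      have : A⁻¹ * min 1 (s * (A * X)) * min 1 (s * (Y * Z))⁻¹ ≤
          A⁻¹ * 1 * min 1 (s * (A * Z))⁻¹ := by
        gcongr
      rw [mul_one, ← e2] at this
      linarith
    · rw [max_eq_right h'] at e2
      have h3 : A⁻¹ * min 1 (s * (A * X)) * min 1 (s * (Y * Z))⁻¹ ≤ 3 * (Z⁻¹ * 1) := by
        calc A⁻¹ * min 1 (s * (A * X)) * min 1 (s * (Y * Z))⁻¹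
            ≤ A⁻¹ * (s * (A * (3 * Y))) * (s * (Y * Z))⁻¹ := by
              gcongr
              · exact (min_le_right _ _).trans (by gcongr)
              · exact min_le_right _ _
          _ = 3 * (Z⁻¹ * 1) := by field_simp
      have h4 : A⁻¹ * min 1 (s * (A * X)) * min 1 (s * (Y * Z))⁻¹ ≤ 3 * (Z⁻¹ * (s * (A * Z))⁻¹) := by
        calc A⁻¹ * min 1 (s * (A * X)) * min 1 (s * (Y * Z))⁻¹
            ≤ A⁻¹ * 1 * (s * (Y * Z))⁻¹ := by
              gcongr
              exact min_le_right _ _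
          _ ≤ A⁻¹ * 1 * (s * (Z * Z))⁻¹ := by gcongr
          _ = 1 * (Z⁻¹ * (s * (A * Z))⁻¹) := by field_simp
          _ ≤ _ := by gcongr; norm_num
      have : A⁻¹ * min 1 (s * (A * X)) * min 1 (s * (Y * Z))⁻¹ ≤ 3 * W2 := by
        rw [e2, mul_min_of_nonneg 1 (s * (A * Z))⁻¹ (by positivity : 0 ≤ Z⁻¹),
          mul_min_of_nonneg _ _ (by positivity : (0 : ℝ) ≤ 3)]
        exact le_min h3 h4
      linarith

/-- The kernel of the nonresonant remainder. -/
def errQ (τ : ℝ) (N : ℕ) (x y z : ℤ) : ℂ :=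
  if x + y + z = 0 then 0 else
    -((x : ℂ) / (x + y + z : ℤ) * chi N (y + z) * Qk τ (2 * ((x + y + z) * x)) (2 * (y * z)))

/-- The kernel of the truncation error (and of the remainder at frequency zero). -/
def errT (τ : ℝ) (N : ℕ) (x y z : ℤ) : ℂ :=
  if x + y + z = 0 then Ek τ (2 * (x + y) * (x + z)) - τ else
    (1 - chi N (x + y)) * (2 * (x + z : ℤ) / (x + y + z : ℤ)) * Ek τ (2 * (x + y) * (x + z))
    - (x : ℂ) / (x + y + z : ℤ) * (1 - chi N (y + z)) * Ek τ (2 * (x + y) * (x + z))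

/-- The resonant part `k₁+k₂=0` of the exact kernel. -/
def resK (τ : ℝ) (x y z : ℤ) : ℂ :=
  if x + y + z = 0 then 0 else
    if x + y = 0 then 2 * τ * (x + z : ℤ) / (x + y + z : ℤ) else 0

/-- A symmetrising weight: its average over the exchange of the last two frequencies is one. -/
def symW (x y z : ℤ) : ℂ :=
  if x + y + z = 0 then 1 else (2 * (x + z : ℤ) - x) / (x + y + z : ℤ)

lemma chi_zero (N : ℕ) : chi N 0 = 1 := by simp [chi]

lemma kernel_split (τ : ℝ) {N : ℕ} {x y z : ℤ} (hz : |z| ≤ (N : ℤ)) :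
    Ek τ (2 * (x + y) * (x + z)) * symW x y z
      = KK τ N x y z + resK τ x y z + errT τ N x y z + errQ τ N x y z := by
  unfold KK resK errT errQ symW
  by_cases h : x + y + z = 0
  · have : x + y = -z := by linarith
    have hc : chi N (-z) = 1 := by simp [chi, hz]
    rw [if_pos h, if_pos h, if_pos h, if_pos h, if_pos h, this, hc]; ring
  · simp only [h, if_false]
    have hc : ((x + y + z : ℤ) : ℂ) ≠ 0 := by exact_mod_cast h
    rw [Qk_eq, show 2 * ((x + y + z) * x) + 2 * (y * z) = 2 * (x + y) * (x + z) by ring,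
      show 2 * ((x + y + z) * x) = 2 * (x + y + z) * x by ring, ← mul_assoc 2 y z]
    by_cases h' : x + y = 0
    · simp only [h', if_true, chi_zero, mul_zero, zero_mul, Ek_zero]
      ring
    · simp only [h', if_false]
      ring

lemma norm_errQ_le {τ : ℝ} (hτ : 0 < τ) (N : ℕ) (x y z : ℤ) : ‖errQ τ N x y z‖ ≤
    12 * τ ^ 2 * (|(x : ℝ)| * |(y : ℝ)| * |(z : ℝ)| *
      (wr τ y z + wr τ (x + y + z) z + wr τ (x + y + z) y)) := by
  have n1 := wr_nonneg hτ y z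
  have n2 := wr_nonneg hτ (x + y + z) z
  have n3 := wr_nonneg hτ (x + y + z) y
  unfold errQ
  split_ifs with h
  · simp; positivity
  by_cases hy : y = 0
  · simp [hy, Qk]
  by_cases hz : z = 0
  · simp [hz, Qk]
  have hb := wr_bound hτ h hy hz
  have hy1 := abs_int_one_le hy
  have hz1 := abs_int_one_le hz
  have hQ := norm_Qk_le hτ.le ((x + y + z) * x) (y * z)
  rw [norm_neg, norm_mul, norm_mul, norm_div, Complex.norm_intCast, Complex.norm_intCast]
  rw [Int.cast_mul (x + y + z) x, Int.cast_mul y z, abs_mul, abs_mul] at hQ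
  have hmin : min 1 (τ * (|(y : ℝ)| * |(z : ℝ)|)) =
      τ * (|(y : ℝ)| * |(z : ℝ)|) * min 1 (τ * (|(y : ℝ)| * |(z : ℝ)|))⁻¹ := by
    rw [mul_min_of_nonneg _ _ (by positivity), mul_one, mul_inv_cancel₀ (by positivity), min_comm]
  rw [hmin] at hQ
  have hA := abs_nonneg ((x + y + z : ℤ) : ℝ)
  generalize |((x + y + z : ℤ) : ℝ)| = A at *
  calc |(x : ℝ)| / A * ‖chi N (y + z)‖ * ‖Qk τ (2 * ((x + y + z) * x)) (2 * (y * z))‖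
      ≤ |(x : ℝ)| / A * 1 * (4 * τ * (min 1 (τ * (A * |(x : ℝ)|)) *
        (τ * (|(y : ℝ)| * |(z : ℝ)|) * min 1 (τ * (|(y : ℝ)| * |(z : ℝ)|))⁻¹))) := by
        gcongr
        exact norm_chi_le _ _
    _ = 4 * τ ^ 2 * (|(x : ℝ)| * |(y : ℝ)| * |(z : ℝ)| * (A⁻¹ * min 1 (τ * (A * |(x : ℝ)|)) *
          min 1 (τ * (|(y : ℝ)| * |(z : ℝ)|))⁻¹)) := by rw [div_eq_mul_inv]; ring
    _ ≤ 4 * τ ^ 2 * (|(x : ℝ)| * |(y : ℝ)| * |(z : ℝ)| *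
        (3 * (wr τ y z + wr τ (x + y + z) z + wr τ (x + y + z) y))) := by gcongr
    _ = _ := by ring

lemma norm_Ek_sub_le {τ : ℝ} (hτ : 0 ≤ τ) (a : ℤ) : ‖Ek τ a - τ‖ ≤ τ ^ 2 * |(a : ℝ)| := by
  have e : Ek τ a - τ = ∫ s in (0 : ℝ)..τ, (Complex.exp (I * (s : ℂ) * (a : ℂ)) - 1) := by
    rw [intervalIntegral.integral_sub (intervalIntegrable_exp τ a) (by simp)]
    simp [Ek]
  rw [e]
  have := intervalIntegral.norm_integral_le_of_norm_le_const (a := 0) (b := τ) (C := τ * |(a : ℝ)|)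
    (f := fun s : ℝ => Complex.exp (I * (s : ℂ) * (a : ℂ)) - 1) (fun s hs => by
      rw [Set.uIoc_of_le hτ] at hs
      refine (norm_exp_sub_one_le s a).trans ?_
      rw [abs_mul, abs_of_nonneg hs.1.le]
      gcongr; exact hs.2)
  refine this.trans (le_of_eq ?_)
  rw [sub_zero, abs_of_nonneg hτ]; ring

lemma norm_one_sub_chi {N : ℕ} (hN : 0 < N) (j : ℤ) : ‖1 - chi N j‖ ≤ |(j : ℝ)| * (N : ℝ)⁻¹ := by
  have hN' : (0 : ℝ) < N := by exact_mod_cast hN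
  unfold chi
  split_ifs with h
  · simp; positivity
  · rw [sub_zero, norm_one, ← div_eq_mul_inv, one_le_div hN']
    exact_mod_cast (not_le.1 h).le

lemma norm_errT_le {τ : ℝ} (hτ : 0 ≤ τ) {N : ℕ} (hN : 0 < N) (x y z : ℤ) : ‖errT τ N x y z‖ ≤
    (6 * τ * (τ + (N : ℝ)⁻¹)) * Om2 x y z := by
  have hN' : (0 : ℝ) < N := by exact_mod_cast hN
  have hx := abs_le_jr x; have hy := abs_le_jr y; have hz := abs_le_jr z
  have px := jr_pos x; have py := jr_pos y; have pz := jr_pos z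
  have pk := jr_pos (x + y + z)
  unfold errT
  split_ifs with h
  · refine (norm_Ek_sub_le hτ _).trans ?_
    have e : 2 * (x + y) * (x + z) = 2 * (y * z) := by
      have : x = -y - z := by linarith
      rw [this]; ring
    have hO : jr y * jr z ≤ Om2 x y z := by
      unfold Om2; rw [h]; simp only [jr, Int.cast_zero, abs_zero, add_zero, inv_one, one_mul]
      unfold jr at px py pz
      nlinarith [mul_pos px py, mul_pos px pz]
    rw [e]; push_cast; rw [abs_mul, abs_mul, abs_two]
    calc τ ^ 2 * (2 * (|(y : ℝ)| * |(z : ℝ)|)) ≤ τ ^ 2 * (2 * (jr y * jr z)) := by gcongr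
      _ ≤ τ ^ 2 * (2 * Om2 x y z) := by gcongr
      _ ≤ 6 * τ * (τ + (N : ℝ)⁻¹) * Om2 x y z := by
        have h0 : 0 ≤ Om2 x y z := le_trans (by positivity) hO
        have : 0 ≤ τ * (N : ℝ)⁻¹ * Om2 x y z := by positivity
        nlinarith [mul_nonneg (sq_nonneg τ) h0]
  · set k := x + y + z with hk
    have hk1 := abs_int_one_le h
    have hi := inv_abs_le h
    have hE := norm_Ek_le hτ (2 * (x + y) * (x + z))
    have hprod : |((x + y : ℤ) : ℝ)| * |((x + z : ℤ) : ℝ)| ≤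
        |(k : ℝ)| * |(x : ℝ)| + |(y : ℝ)| * |(z : ℝ)| := by
      rw [← abs_mul, ← abs_mul, ← abs_mul]
      refine le_trans (le_of_eq ?_) (abs_add_le _ _)
      rw [hk]; congr 1; push_cast; ring
    have hA : ‖(1 - chi N (x + y)) * (2 * (x + z : ℤ) / (k : ℤ)) * Ek τ (2 * (x + y) * (x + z))‖
        ≤ 4 * τ * (N : ℝ)⁻¹ * (jr x + (jr k)⁻¹ * (jr y * jr z)) := by
      rw [norm_mul, norm_mul, norm_div, norm_mul, Complex.norm_intCast, Complex.norm_intCast,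
        Complex.norm_ofNat]
      calc ‖1 - chi N (x + y)‖ * (2 * |((x + z : ℤ) : ℝ)| / |(k : ℝ)|) * _
          ≤ (|((x + y : ℤ) : ℝ)| * (N : ℝ)⁻¹) * (2 * |((x + z : ℤ) : ℝ)| / |(k : ℝ)|) * τ := by
            gcongr; exact norm_one_sub_chi hN _
        _ = 2 * τ * (N : ℝ)⁻¹ * (|((x + y : ℤ) : ℝ)| * |((x + z : ℤ) : ℝ)|) * |(k : ℝ)|⁻¹ := by
            rw [div_eq_mul_inv]; ring
        _ ≤ 2 * τ * (N : ℝ)⁻¹ * (|(k : ℝ)| * |(x : ℝ)| + |(y : ℝ)| * |(z : ℝ)|) * |(k : ℝ)|⁻¹ := by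
            gcongr
        _ = 2 * τ * (N : ℝ)⁻¹ * (|(x : ℝ)| + |(k : ℝ)|⁻¹ * (|(y : ℝ)| * |(z : ℝ)|)) := by
            field_simp
        _ ≤ 2 * τ * (N : ℝ)⁻¹ * (2 * jr x + (2 * (jr k)⁻¹) * (jr y * jr z)) := by
            gcongr; linarith
        _ = _ := by ring
    have hB : ‖(x : ℂ) / (k : ℤ) * (1 - chi N (y + z)) * Ek τ (2 * (x + y) * (x + z))‖
        ≤ 2 * τ * (N : ℝ)⁻¹ * ((jr k)⁻¹ * (jr x * jr y + jr x * jr z)) := by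
      rw [norm_mul, norm_mul, norm_div, Complex.norm_intCast, Complex.norm_intCast]
      have e : |((y + z : ℤ) : ℝ)| ≤ jr y + jr z := by
        push_cast; exact (abs_add_le _ _).trans (by linarith)
      calc |(x : ℝ)| / |(k : ℝ)| * ‖1 - chi N (y + z)‖ * _
          ≤ |(x : ℝ)| * |(k : ℝ)|⁻¹ * (|((y + z : ℤ) : ℝ)| * (N : ℝ)⁻¹) * τ := by
            rw [div_eq_mul_inv]
            gcongr; exact norm_one_sub_chi hN _
        _ ≤ jr x * (2 * (jr k)⁻¹) * ((jr y + jr z) * (N : ℝ)⁻¹) * τ := by gcongr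
        _ = _ := by ring
    refine (norm_sub_le _ _).trans ((add_le_add hA hB).trans ?_)
    unfold Om2
    rw [← hk]
    have q1 : 0 ≤ (jr k)⁻¹ * (jr x * jr y) := by positivity
    have q2 : 0 ≤ (jr k)⁻¹ * (jr x * jr z) := by positivity
    have q3 : 0 ≤ (jr k)⁻¹ * (jr y * jr z) := by positivity
    calc _ ≤ 6 * τ * (N : ℝ)⁻¹ * (jr x + jr y + jr z + (jr k)⁻¹ * (jr x * jr y + jr x * jr z + jr y * jr z)) := by
          have hp : 0 ≤ τ * (N : ℝ)⁻¹ := by positivity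
          rw [mul_assoc 4, mul_assoc 2, mul_assoc 6]
          generalize τ * (N : ℝ)⁻¹ = p at *
          rw [mul_add (jr k)⁻¹, mul_add (jr k)⁻¹ (_ + _), mul_add (jr k)⁻¹]
          nlinarith [mul_nonneg hp q1, mul_nonneg hp q2, mul_nonneg hp q3, mul_nonneg hp px.le,
            mul_nonneg hp py.le, mul_nonneg hp pz.le]
      _ ≤ _ := by
          gcongr
          linarith

/-! ### The local error -/

/-- A trilinear form whose kernel is dominated by the Hilbert-Schmidt weights costs `√log(1/τ)`. -/
lemma Tri_wr : ∃ C : ℝ, 0 < C ∧ ∀ τ : ℝ, 0 < τ → τ ≤ 1 / 3 →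
    ∀ (m : ℤ → ℤ → ℤ → ℂ) (M r s t : ℝ) (a b c : FSeq), 0 ≤ M → 0 ≤ r → 0 ≤ s →
    (∀ x y z, ‖m x y z‖ ≤ M * (|(x : ℝ)| * |(y : ℝ)| * |(z : ℝ)| *
      (wr τ y z + wr τ (x + y + z) z + wr τ (x + y + z) y))) →
    B2 (JJ a) r → B2 (JJ b) s → B2 (JJ c) t →
    B2 (Tri m a b c) (M * (4 * Real.sqrt (C * Real.log (1 / τ)) * (r * s * t))) := by
  obtain ⟨C, hC, hHS⟩ := wr_HS
  refine ⟨C, hC, fun τ hτ hτ3 m M r s t a b c hM hr hs h ha hb hc => ?_⟩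
  have hH := hHS τ hτ hτ3
  rw [B2_JJ_iff] at ha hb hc
  have hlog : 0 ≤ Real.log (1 / τ) := Real.log_nonneg (by
    rw [le_div_iff₀ hτ]; linarith)
  unfold B2
  rw [ofReal_prod_sq hM (by positivity) hr hs]
  refine (S2_Tri_le hM h a b c).trans ?_
  gcongr
  set A := Jw fun k => ‖a k‖ₑ with hA
  set B := Jw fun k => ‖b k‖ₑ with hB
  set D := Jw fun k => ‖c k‖ₑ with hD
  set W : ℤ → ℤ → ℝ≥0∞ := fun x y => ENNReal.ofReal (wr τ x y) with hW
  have hpt : ∀ k, triw (fun x y z => |(x : ℝ)| * |(y : ℝ)| * |(z : ℝ)| *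
      (wr τ y z + wr τ (x + y + z) z + wr τ (x + y + z) y)) (fun k => ‖a k‖ₑ) (fun k => ‖b k‖ₑ)
      (fun k => ‖c k‖ₑ) k ≤
      (∑' p : ℤ × ℤ, W p.1 p.2 * (A (k - p.1 - p.2) * B p.1 * D p.2))
      + (∑' p : ℤ × ℤ, W k p.2 * (A (k - p.1 - p.2) * B p.1 * D p.2))
      + (∑' p : ℤ × ℤ, W k p.2 * (A (k - p.1 - p.2) * D p.1 * B p.2)) := fun k => by
    have e3 : (∑' p : ℤ × ℤ, W k p.2 * (A (k - p.1 - p.2) * D p.1 * B p.2)) =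
        ∑' p : ℤ × ℤ, W k p.1 * (A (k - p.1 - p.2) * B p.1 * D p.2) := by
      rw [← (Equiv.prodComm ℤ ℤ).tsum_eq]
      refine tsum_congr fun p => ?_
      simp only [Equiv.prodComm_apply, Prod.fst_swap, Prod.snd_swap]
      rw [sub_right_comm]; ring
    rw [e3, ← ENNReal.tsum_add, ← ENNReal.tsum_add]
    unfold triw
    refine ENNReal.tsum_le_tsum fun p => ?_
    beta_reduce
    rw [show k - p.1 - p.2 + p.1 + p.2 = k by ring, ← add_mul, ← add_mul]
    have n1 := wr_nonneg hτ p.1 p.2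
    have n2 := wr_nonneg hτ k p.2
    have n3 := wr_nonneg hτ k p.1
    rw [ENNReal.ofReal_mul (by positivity), ENNReal.ofReal_add (by positivity) n3,
      ENNReal.ofReal_add n1 n2, ENNReal.ofReal_mul (by positivity),
      ENNReal.ofReal_mul (by positivity), hA, hB, hD, hW]
    unfold Jw
    calc _ ≤ ENNReal.ofReal (jr (k - p.1 - p.2)) * ENNReal.ofReal (jr p.1) * ENNReal.ofReal (jr p.2) *
          (ENNReal.ofReal (wr τ p.1 p.2) + ENNReal.ofReal (wr τ k p.2) + ENNReal.ofReal (wr τ k p.1)) *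
          (‖a (k - p.1 - p.2)‖ₑ * ‖b p.1‖ₑ * ‖c p.2‖ₑ) := by
            gcongr <;> exact abs_le_jr _
      _ = _ := by ring
  refine (S2_mono hpt).trans ((S2_add3_le _ _ _).trans ?_)
  have i1 := tri_HS_in W A B D
  have i2 := tri_HS_out W A B D
  have i3 := tri_HS_out W A D B
  set H : ℝ≥0∞ := ∑' x, ∑' y, W x y ^ 2 with hHdef
  have hq : ENNReal.ofReal (4 * Real.sqrt (C * Real.log (1 / τ))) ^ 2
      = 16 * ENNReal.ofReal (C * Real.log (1 / τ)) := by
    rw [← ENNReal.ofReal_pow (by positivity), mul_pow, Real.sq_sqrt (by positivity),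
      ENNReal.ofReal_mul (by positivity)]
    norm_num
  rw [hq]
  calc _ ≤ 4 * (H * (S2 A * S2 B * S2 D) + H * (S2 A * S2 B * S2 D) + H * (S2 A * S2 D * S2 B)) := by
        gcongr
    _ = 12 * H * (S2 A * S2 B * S2 D) := by ring
    _ ≤ 16 * ENNReal.ofReal (C * Real.log (1 / τ)) *
        (ENNReal.ofReal r ^ 2 * ENNReal.ofReal s ^ 2 * ENNReal.ofReal t ^ 2) := by
        gcongr
        norm_num

/-- The exact trilinear kernel `∫₀^τ e^{2is(k₁+k₂)(k₁+k₃)} ds`. -/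
def EkPhi (τ : ℝ) (x y z : ℤ) : ℂ := Ek τ (2 * (x + y) * (x + z))

lemma symW_add (x y z : ℤ) : symW x y z + symW x z y = 2 := by
  unfold symW
  rw [add_right_comm x z y]
  split_ifs with h
  · norm_num
  · have hc : ((x + y + z : ℤ) : ℂ) ≠ 0 := by exact_mod_cast h
    rw [← add_div, div_eq_iff hc]; push_cast; ring

lemma Tri_EkPhi_split (τ : ℝ) {N : ℕ} {f : FSeq} (hf : SuppN N f) (F : FSeq) (k : ℤ) :
    Tri (EkPhi τ) F f f k = Tri (KK τ N) F f f k + Tri (resK τ) F f f k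
      + Tri (errT τ N) F f f k + Tri (errQ τ N) F f f k := by
  have hS : ∀ m, Sm m F f f := fun m => Sm_of_supp hf hf
  have h1 : (2 : ℂ) * Tri (EkPhi τ) F f f k =
      Tri (fun x y z => EkPhi τ x y z * symW x y z) F f f k +
      Tri (fun x y z => EkPhi τ x y z * symW x z y) F f f k := by
    rw [Tri_smul, Tri_add (hS _) (hS _)]
    refine Tri_congr hf hf fun x y z _ _ _ => ?_
    rw [← mul_add, symW_add, mul_comm]
  have h2 : Tri (fun x y z => EkPhi τ x y z * symW x z y) F f f k =
      Tri (fun x y z => EkPhi τ x y z * symW x y z) F f f k := by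
    rw [Tri_swap23]
    refine Tri_congr hf hf fun x y z _ _ _ => ?_
    unfold EkPhi; rw [mul_right_comm]
  have h3 : Tri (EkPhi τ) F f f k = Tri (fun x y z => EkPhi τ x y z * symW x y z) F f f k := by
    rw [h2] at h1; linear_combination h1 / 2
  rw [h3, Tri_add (hS _) (hS _), Tri_add (hS _) (hS _), Tri_add (hS _) (hS _)]
  exact Tri_congr hf hf fun x y z _ _ hz => kernel_split τ hz

/-- The mean of `|f|²`. -/
def mass (f : FSeq) : ℝ := ∑' j, ‖f j‖ ^ 2

/-- The momentum `∑ j |f_j|²`. -/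
def mom (f : FSeq) : ℝ := ∑' j : ℤ, (j : ℝ) * ‖f j‖ ^ 2

lemma conj_mul_self (z : ℂ) : (starRingEnd ℂ) z * z = ((‖z‖ ^ 2 : ℝ) : ℂ) := by
  rw [Complex.conj_mul']; push_cast; rfl

lemma Tri_resK (τ : ℝ) {N : ℕ} {f : FSeq} (hf : SuppN N f) {k : ℤ} (hk : k ≠ 0) :
    Tri (resK τ) (conjS f) f f k = 2 * τ * ((mass f : ℂ) - mom f / k) * f k := by
  have hkc : (k : ℂ) ≠ 0 := by exact_mod_cast hk
  have hi : Function.Injective fun j : ℤ => (j, k) := fun i j h => by simpa using h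
  have s1 : Summable fun j => ((‖f j‖ ^ 2 : ℝ) : ℂ) :=
    summable_of_hasFiniteSupport (hf.finite.subset fun j hj => by
      rw [Function.mem_support] at hj ⊢; intro h; simp [h] at hj)
  have s2 : Summable fun j : ℤ => ((j * ‖f j‖ ^ 2 : ℝ) : ℂ) :=
    summable_of_hasFiniteSupport (hf.finite.subset fun j hj => by
      rw [Function.mem_support] at hj ⊢; intro h; simp [h] at hj)
  have hR : 2 * τ * ((mass f : ℂ) - mom f / k) * f k =
      ∑' j : ℤ, (2 * τ * f k) * (((‖f j‖ ^ 2 : ℝ) : ℂ) - ((j * ‖f j‖ ^ 2 : ℝ) : ℂ) / k) := by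
    rw [tsum_mul_left, s1.tsum_sub (s2.div_const _), tsum_div_const]
    unfold mass mom
    rw [Complex.ofReal_tsum, Complex.ofReal_tsum]
    ring
  rw [hR]
  unfold Tri
  rw [← hi.tsum_eq]
  · refine tsum_congr fun j => ?_
    have e1 : k - j - k + j + k = k := by ring
    have e2 : k - j - k + j = 0 := by ring
    have e3 : k - j - k = -j := by ring
    simp only [resK, e2, zero_add, if_neg hk, if_true]
    rw [e3]
    have : conjS f (-j) * f j = ((‖f j‖ ^ 2 : ℝ) : ℂ) := by
      unfold conjS; rw [neg_neg, conj_mul_self]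
    rw [this]; push_cast; field_simp; ring
  · intro q hq
    rw [Function.mem_support] at hq
    by_cases h : q.2 = k
    · exact ⟨q.1, by ext <;> simp [h]⟩
    · exact absurd (by
        have e2 : k - q.1 - q.2 + q.1 ≠ 0 := fun h' => h (by linarith)
        simp [resK, e2]) hq

lemma Tri_resK_zero (τ : ℝ) (a b c : FSeq) : Tri (resK τ) a b c 0 = 0 := by
  unfold Tri
  refine (tsum_congr (g := fun _ => (0 : ℂ)) fun p => ?_).trans tsum_zero
  have : 0 - p.1 - p.2 + p.1 + p.2 = 0 := by ring
  simp only [resK, this, if_true, zero_mul]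

lemma norm_exp_second (θ : ℝ) : ‖Complex.exp (I * θ) - 1 - I * θ‖ ≤ 2 * θ ^ 2 := by
  have e : ‖I * (θ : ℂ)‖ = |θ| := by simp
  rcases le_total |θ| 1 with h | h
  · refine (Complex.norm_exp_sub_one_sub_id_le (by rwa [e])).trans ?_
    rw [e, sq_abs]; nlinarith [sq_nonneg θ]
  · refine (norm_sub_le _ _).trans ?_
    have := Real.norm_exp_I_mul_ofReal_sub_one_le (x := θ)
    rw [Real.norm_eq_abs] at this
    rw [e]
    nlinarith [sq_abs θ]

/-- The local error of one numerical step against the truncated twisted interaction. -/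
lemma local_error : ∃ C : ℝ, 0 < C ∧ ∀ (lam τ r δ K : ℝ) (N : ℕ) (f : FSeq) (m q : ℝ),
    |lam| ≤ 1 → 0 < τ → τ ≤ 1 / 3 → 0 < N → 0 ≤ r → 0 ≤ δ → SuppN N f → B2 (JJ f) r →
    |m - mass f| ≤ δ → |q - mom f| ≤ δ → |m| ≤ K → |q| ≤ K →
    B2 (fun k => if |k| ≤ (N : ℤ) then
        ex τ k * (f k - I * lam * Tri (EkPhi τ) (conjS f) f f k)
          - Psi lam τ N (m : ℂ) (-(I * (q : ℂ))) f k else 0)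
      ((32 * τ ^ 2 * K ^ 2 + 4 * τ * δ) * r + 6 * τ * (τ + (N : ℝ)⁻¹) * (7 * cj * (r * r * r))
        + 12 * τ ^ 2 * (4 * Real.sqrt (C * Real.log (1 / τ)) * (r * r * r))) := by
  obtain ⟨C, hC, hW⟩ := Tri_wr
  refine ⟨C, hC, fun lam τ r δ K N f m q hlam hτ hτ3 hN hr hδ hfN hf hm hq hmK hqK => ?_⟩
  have hc := cj_pos
  have hN' : (0 : ℝ) < N := by exact_mod_cast hN
  have hK : 0 ≤ K := (abs_nonneg m).trans hmK
  have hT := Tri_Om2 (m := errT τ N) (by positivity) (norm_errT_le hτ.le hN) hr hr hf.JJ_conjS hf hf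
  have hQ := hW τ hτ hτ3 (errQ τ N) (12 * τ ^ 2) r r r (conjS f) f f (by positivity) hr hr
    (norm_errQ_le hτ N) hf.JJ_conjS hf hf
  have hL : B2 (fun k => ((32 * τ ^ 2 * K ^ 2 + 4 * τ * δ : ℝ) : ℂ) * (‖f k‖ : ℂ))
      ((32 * τ ^ 2 * K ^ 2 + 4 * τ * δ) * r) := hf.of_JJ.smul (by positivity) fun k => by
    rw [norm_mul, Complex.norm_real, Complex.norm_real, norm_norm, Real.norm_of_nonneg (by positivity)]
  have h2 := B2.add (by positivity) (by positivity) (B2.add (by positivity) (by positivity) hL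
    (hT.dom (a := fun k => (‖Tri (errT τ N) (conjS f) f f k‖ : ℂ)) fun k => by simp))
    (hQ.dom (a := fun k => (‖Tri (errQ τ N) (conjS f) f f k‖ : ℂ)) fun k => by simp)
  refine h2.dom fun k => ?_
  rw [← Complex.ofReal_mul, ← Complex.ofReal_add, ← Complex.ofReal_add, Complex.norm_real,
    Real.norm_of_nonneg (by positivity)]
  split_ifs with hk
  swap
  · rw [norm_zero]; positivity
  rw [Psi_eq lam τ _ _ hfN hk, ← mul_sub, norm_mul, norm_ex, one_mul, Tri_EkPhi_split τ hfN]
  set eT := Tri (errT τ N) (conjS f) f f k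
  set eQ := Tri (errQ τ N) (conjS f) f f k
  have hmain : ‖(1 - ell lam τ (m : ℂ) (-(I * (q : ℂ))) k) * f k
      - I * lam * Tri (resK τ) (conjS f) f f k‖ ≤ (32 * τ ^ 2 * K ^ 2 + 4 * τ * δ) * ‖f k‖ := by
    by_cases h0 : k = 0
    · subst h0
      rw [Tri_resK_zero]; simp [ell]; positivity
    · have hkc : (k : ℂ) ≠ 0 := by exact_mod_cast h0
      have hk1 := abs_int_one_le h0
      set θ : ℝ := -2 * lam * τ * (m - q / k) with hθ
      have e1 : ell lam τ (m : ℂ) (-(I * (q : ℂ))) k = Complex.exp (I * θ) := by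
        unfold ell; rw [if_neg h0, neg_div, mul_div_mul_left _ _ I_ne_zero, hθ]
        congr 1; push_cast; ring
      have hdiv : ∀ a : ℝ, |a / k| ≤ |a| := fun a => by
        rw [abs_div]; exact div_le_self (abs_nonneg _) hk1
      have hθb : |θ| ≤ 4 * τ * K := by
        rw [hθ, abs_mul, abs_mul, abs_mul, abs_of_pos hτ]
        have := abs_sub m (q / k)
        have := hdiv q
        have h2 : |(-2 : ℝ)| = 2 := by norm_num
        rw [h2]
        calc 2 * |lam| * τ * |m - q / k| ≤ 2 * 1 * τ * (2 * K) := by gcongr; linarith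
          _ = _ := by ring
      rw [e1, Tri_resK τ hfN h0]
      have e2 : (1 - Complex.exp (I * θ)) * f k - I * lam * (2 * τ * ((mass f : ℂ) - mom f / k) * f k)
          = (-(Complex.exp (I * θ) - 1 - I * θ) +
            ((2 * lam * τ * ((m - mass f) - (q - mom f) / k) : ℝ) : ℂ) * I) * f k := by
        rw [hθ]; push_cast; ring
      rw [e2, norm_mul]
      refine mul_le_mul_of_nonneg_right ((norm_add_le _ _).trans (add_le_add ?_ ?_)) (norm_nonneg _)
      · rw [norm_neg]
        refine (norm_exp_second θ).trans ?_
        have : θ ^ 2 ≤ (4 * τ * K) ^ 2 := by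
          rw [← sq_abs]; gcongr
        nlinarith
      · rw [norm_mul, norm_I, mul_one, Complex.norm_real, Real.norm_eq_abs, abs_mul, abs_mul,
          abs_mul, abs_of_pos hτ, abs_two]
        have := abs_sub (m - mass f) ((q - mom f) / k)
        have := hdiv (q - mom f)
        calc 2 * |lam| * τ * |m - mass f - (q - mom f) / k| ≤ 2 * 1 * τ * (2 * δ) := by
              gcongr; linarith
          _ = _ := by ring
  have e3 : f k - I * lam * (Tri (KK τ N) (conjS f) f f k + Tri (resK τ) (conjS f) f f k + eT + eQ)
      - (ell lam τ (m : ℂ) (-(I * (q : ℂ))) k * f k - I * lam * Tri (KK τ N) (conjS f) f f k)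
      = ((1 - ell lam τ (m : ℂ) (-(I * (q : ℂ))) k) * f k
      - I * lam * Tri (resK τ) (conjS f) f f k) - I * lam * eT - I * lam * eQ := by ring
  rw [e3]
  have hI : ∀ z : ℂ, ‖I * lam * z‖ ≤ ‖z‖ := fun z => by
    rw [norm_mul, norm_mul, norm_I, one_mul, Complex.norm_real, Real.norm_eq_abs]
    exact mul_le_of_le_one_left (norm_nonneg _) hlam
  exact (norm_sub_le _ _).trans (add_le_add ((norm_sub_le _ _).trans
    (add_le_add hmain (hI eT))) (hI eQ))

/-! ### The cubic nonlinearity and mild solutions -/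

lemma B2_of_finset {a : FSeq} {r : ℝ} (hr : 0 ≤ r)
    (h : ∀ S : Finset ℤ, ∑ k ∈ S, ‖a k‖ ^ 2 ≤ r ^ 2) : B2 a r := by
  rw [B2_iff hr]
  have hs := summable_of_sum_le (fun k => sq_nonneg ‖a k‖) h
  exact ⟨hs, hs.tsum_le_of_sum_le h⟩

lemma B2.sum_le {a : FSeq} {r : ℝ} (hr : 0 ≤ r) (h : B2 a r) (S : Finset ℤ) :
    ∑ k ∈ S, ‖a k‖ ^ 2 ≤ r ^ 2 := by
  obtain ⟨h1, h2⟩ := (B2_iff hr).1 h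
  exact (h1.sum_le_tsum S fun k _ => sq_nonneg _).trans h2

lemma B2.norm_le {a : FSeq} {r : ℝ} (hr : 0 ≤ r) (h : B2 a r) (k : ℤ) : ‖a k‖ ≤ r := by
  have := h.sum_le hr {k}
  rw [Finset.sum_singleton] at this
  exact (pow_le_pow_iff_left₀ (norm_nonneg _) hr two_ne_zero).1 this

lemma cs_integral {f : ℝ → ℝ} {b : ℝ} (hb : 0 ≤ b) (hf : Continuous f) :
    (∫ s in (0 : ℝ)..b, f s) ^ 2 ≤ b * ∫ s in (0 : ℝ)..b, f s ^ 2 := by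
  rcases hb.eq_or_lt with rfl | hb'
  · simp
  set A := ∫ s in (0 : ℝ)..b, f s with hA
  have h0 : 0 ≤ ∫ s in (0 : ℝ)..b, (b * f s - A) ^ 2 :=
    intervalIntegral.integral_nonneg hb fun s _ => sq_nonneg _
  have e : ∫ s in (0 : ℝ)..b, (b * f s - A) ^ 2 =
      b ^ 2 * (∫ s in (0 : ℝ)..b, f s ^ 2) - 2 * b * A * A + b * A ^ 2 := by
    have e1 : (fun s => (b * f s - A) ^ 2) = fun s => b ^ 2 * f s ^ 2 - 2 * b * A * f s + A ^ 2 := by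
      funext s; ring
    rw [e1, intervalIntegral.integral_add, intervalIntegral.integral_sub,
      intervalIntegral.integral_const_mul, intervalIntegral.integral_const_mul,
      intervalIntegral.integral_const, ← hA]
    · simp
    all_goals exact Continuous.intervalIntegrable (by fun_prop) _ _
  rw [e] at h0
  have : 0 ≤ b * (b * (∫ s in (0 : ℝ)..b, f s ^ 2) - A ^ 2) := by linarith
  have := nonneg_of_mul_nonneg_right this hb'
  linarith

/-- Minkowski's integral inequality for sequence-valued integrals. -/
lemma B2_integral {F : ℝ → FSeq} {b r : ℝ} (hb : 0 ≤ b) (hr : 0 ≤ r)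
    (hF : ∀ k, Continuous fun s => F s k) (h : ∀ s ∈ Set.Icc (0 : ℝ) b, B2 (F s) r) :
    B2 (fun k => ∫ s in (0 : ℝ)..b, F s k) (b * r) := by
  refine B2_of_finset (by positivity) fun S => ?_
  have h1 : ∀ k, ‖∫ s in (0 : ℝ)..b, F s k‖ ^ 2 ≤ b * ∫ s in (0 : ℝ)..b, ‖F s k‖ ^ 2 := fun k => by
    refine le_trans ?_ (cs_integral hb (hF k).norm)
    have := intervalIntegral.norm_integral_le_integral_norm (f := fun s => F s k) (μ := volume) hb
    gcongr
  calc ∑ k ∈ S, ‖∫ s in (0 : ℝ)..b, F s k‖ ^ 2 ≤ ∑ k ∈ S, b * ∫ s in (0 : ℝ)..b, ‖F s k‖ ^ 2 :=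
        Finset.sum_le_sum fun k _ => h1 k
    _ = b * ∫ s in (0 : ℝ)..b, ∑ k ∈ S, ‖F s k‖ ^ 2 := by
        rw [← Finset.mul_sum, intervalIntegral.integral_finsetSum]
        exact fun k _ => ((hF k).norm.pow 2).intervalIntegrable _ _
    _ ≤ b * ∫ s in (0 : ℝ)..b, r ^ 2 := by
        refine mul_le_mul_of_nonneg_left (intervalIntegral.integral_mono_on hb ?_ ?_ fun s hs => ?_) hb
        · exact (continuous_finsetSum _ fun k _ => (hF k).norm.pow 2).intervalIntegrable _ _
        · exact continuous_const.intervalIntegrable _ _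
        · exact (h s hs).sum_le hr S
    _ = (b * r) ^ 2 := by rw [intervalIntegral.integral_const]; simp; ring

lemma InHs_of_B2_JJ {a : FSeq} {r : ℝ} (h : B2 (JJ a) r) : InHs 1 a := by
  refine Summable.of_nonneg_of_le (fun k => by positivity) (fun k => ?_) h.summable
  rw [norm_JJ, mul_pow, Real.rpow_one]
  exact mul_le_mul_of_nonneg_right (le_jr_sq k) (sq_nonneg _)

lemma one_le_Om (x y z : ℤ) : 1 ≤ Om x y z := by
  unfold Om
  rw [inv_mul_eq_div, one_le_div (jr_pos _)]
  have := jr_add_le (x + y) z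
  have := jr_add_le x y
  have := abs_le_jr y
  have := abs_le_jr z
  linarith

/-- The cubic nonlinearity is locally Lipschitz. -/
lemma cubic_diff {f g : FSeq} {r d : ℝ} (hr : 0 ≤ r) (hd : 0 ≤ d)
    (hf : B2 (JJ f) r) (hg : B2 (JJ g) r) (hfg : B2 (fun k => f k - g k) d) :
    B2 (fun k => cubicTerm f k - cubicTerm g k) (18 * cj * (r * r * d)) := by
  have sf := (B1_of_JJ hf).summable
  have sg := (B1_of_JJ hg).summable
  have cf := (B1_of_JJ hf).conjS.summable
  have cg := (B1_of_JJ hg).conjS.summable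
  have h1 : ∀ x y z : ℤ, ‖((fun _ _ _ => 1 : ℤ → ℤ → ℤ → ℂ)) x y z‖ ≤ 1 := by simp
  rw [cubicTerm_eq sf, cubicTerm_eq sg, ← one_mul (18 * cj * (r * r * d))]
  refine Tri_diff zero_le_one (fun x y z => ?_) hr hd hf hg hfg (Sm_of_l1 h1 cf sf sf)
    (Sm_of_l1 h1 cg sf sf) (Sm_of_l1 h1 cg sg sf) (Sm_of_l1 h1 cg sg sg)
  rw [one_mul]; exact (h1 x y z).trans (one_le_Om x y z)

lemma cubic_H1 {f : FSeq} {r : ℝ} (hr : 0 ≤ r) (hf : B2 (JJ f) r) :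
    B2 (JJ (cubicTerm f)) (4 * (cj * r * (cj * r) * r)) := by
  have h1 : ∀ x y z : ℤ, ‖((fun _ _ _ => 1 : ℤ → ℤ → ℤ → ℂ)) x y z‖ ≤ 1 := by simp
  rw [cubicTerm_eq (B1_of_JJ hf).summable, ← one_mul (4 * (cj * r * (cj * r) * r))]
  have := cj_pos
  refine Tri_H1 zero_le_one (fun x y z => ?_) (by positivity) hf.JJ_conjS hf hf (B1_of_JJ hf).conjS
    (B1_of_JJ hf) (B1_of_JJ hf)
  rw [one_mul]; exact (h1 x y z).trans (one_le_Om x y z)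

section Sol
variable {lam T : ℝ} {u0 : FSeq} {u : ℝ → FSeq}

lemma hnorm_nonneg (s : ℝ) (a : FSeq) : 0 ≤ hnorm s a := Real.sqrt_nonneg _

lemma sol_diff (hu : IsNLSSolution lam T u0 u) {s t : ℝ} (hs : s ∈ Set.Icc 0 T)
    (ht : t ∈ Set.Icc 0 T) : B2 (JJ fun k => u s k - u t k) (hnorm 1 (u s - u t)) := by
  have h := (hu.2.1 s hs).B2_JJ.sub (hnorm_nonneg _ _) (hnorm_nonneg _ _) (hu.2.1 t ht).B2_JJ
  rw [← JJ_sub] at h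
  exact (InHs_of_B2_JJ h).B2_JJ

lemma sol_bdd (hu : IsNLSSolution lam T u0 u) :
    ∃ r : ℝ, 0 ≤ r ∧ ∀ s ∈ Set.Icc 0 T, B2 (JJ (u s)) r := by
  have := (isCompact_Icc (a := (0 : ℝ)) (b := T)).induction_on
    (p := fun A => ∃ r : ℝ, 0 ≤ r ∧ ∀ s ∈ A ∩ Set.Icc 0 T, B2 (JJ (u s)) r)
    ⟨0, le_rfl, by simp⟩
    (fun A B hAB ⟨r, hr, h⟩ => ⟨r, hr, fun s hs => h s ⟨hAB hs.1, hs.2⟩⟩)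
    (fun A B ⟨r, hr, h⟩ ⟨r', hr', h'⟩ => ⟨max r r', le_max_of_le_left hr, fun s hs => by
      rcases hs.1 with h1 | h1
      · exact (h s ⟨h1, hs.2⟩).mono (le_max_left _ _)
      · exact (h' s ⟨h1, hs.2⟩).mono (le_max_right _ _)⟩)
    (fun t ht => by
      have h1 := (hu.2.2.1 t ht).eventually (gt_mem_nhds one_pos)
      refine ⟨_, h1, 1 + hnorm 1 (u t), by have := hnorm_nonneg 1 (u t); positivity, fun s hs => ?_⟩
      have h2 := ((sol_diff hu hs.2 ht).mono (le_of_lt hs.1)).add zero_le_one (hnorm_nonneg _ _)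
        (hu.2.1 t ht).B2_JJ
      rw [← JJ_add] at h2
      simpa using h2)
  obtain ⟨r, hr, h⟩ := this
  exact ⟨r, hr, fun s hs => h s ⟨hs, hs⟩⟩

lemma cubic_cont (hu : IsNLSSolution lam T u0 u) (k : ℤ) :
    ContinuousOn (fun s => cubicTerm (u s) k) (Set.Icc 0 T) := by
  obtain ⟨r, hr, h⟩ := sol_bdd hu
  intro t ht
  rw [ContinuousWithinAt, tendsto_iff_norm_sub_tendsto_zero]
  have h0 : Filter.Tendsto (fun s => 18 * cj * (r * r * hnorm 1 (u s - u t)))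
      (nhdsWithin t (Set.Icc 0 T)) (nhds 0) := by
    simpa using (((hu.2.2.1 t ht).const_mul (r * r)).const_mul (18 * cj))
  refine squeeze_zero' (Filter.Eventually.of_forall fun _ => norm_nonneg _) ?_ h0
  filter_upwards [self_mem_nhdsWithin] with s hs
  have := cj_pos
  have hn := hnorm_nonneg 1 (u s - u t)
  exact (cubic_diff hr hn (h s hs) (h t ht) (sol_diff hu hs ht).of_JJ).norm_le (by positivity) k

lemma ex_neg_mul (t : ℝ) (k : ℤ) : ex t k * ex (-t) k = 1 := by
  unfold ex; rw [← Complex.exp_add]; push_cast; ring_nf; simp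

lemma ex_add (s t : ℝ) (k : ℤ) : ex (s + t) k = ex s k * ex t k := by
  unfold ex; rw [← Complex.exp_add]; push_cast; ring_nf

lemma hasDerivAt_ex (t : ℝ) (k : ℤ) :
    HasDerivAt (fun t => ex t k) (-I * (k : ℂ) ^ 2 * ex t k) t := by
  have h1 : HasDerivAt (fun t : ℝ => -I * (t : ℂ) * (k : ℂ) ^ 2) (-I * (k : ℂ) ^ 2) t := by
    have := ((Complex.ofRealCLM.hasDerivAt (x := t)).const_mul (-I)).mul_const ((k : ℂ) ^ 2)
    simpa using this
  have := h1.cexp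
  unfold ex
  convert this using 1
  ring

lemma continuous_ex (k : ℤ) : Continuous fun t => ex t k :=
  continuous_iff_continuousAt.2 fun t => (hasDerivAt_ex t k).continuousAt

/-- A mild solution extends to a globally defined family with continuously differentiable
Fourier coefficients, which solves the equation mode by mode. -/
lemma sol_ext (hT : 0 < T) (hu : IsNLSSolution lam T u0 u) : ∃ g c : ℝ → FSeq,
    (∀ s ∈ Set.Icc 0 T, g s = u s) ∧ (∀ s ∈ Set.Icc 0 T, c s = cubicTerm (u s)) ∧
    (∀ k, Continuous fun s => c s k) ∧
    ∀ k t, HasDerivAt (fun s => g s k) (-I * (k : ℂ) ^ 2 * g t k - I * lam * c t k) t := by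
  set c : ℝ → FSeq := fun s => cubicTerm (u (Set.projIcc 0 T hT.le s)) with hc
  have hcc : ∀ k, Continuous fun s => c s k := fun k => by
    have h := (cubic_cont hu k).domRestrict
    exact h.comp continuous_projIcc
  have hc2 : ∀ s ∈ Set.Icc 0 T, c s = cubicTerm (u s) := fun s hs => by
    simp only [hc]; rw [Set.projIcc_of_mem hT.le hs]
  have hcont : ∀ k, Continuous fun s => ex (-s) k * c s k := fun k =>
    ((continuous_ex k).comp continuous_neg).mul (hcc k)
  refine ⟨fun t k => ex t k * (u0 k - I * lam * ∫ s in (0 : ℝ)..t, ex (-s) k * c s k), c,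
    fun t ht => ?_, hc2, hcc, fun k t => ?_⟩
  · funext k
    beta_reduce
    rw [hu.2.2.2 t ht k, mul_sub]
    congr 1
    rw [mul_left_comm, ← intervalIntegral.integral_const_mul]
    congr 1
    refine intervalIntegral.integral_congr fun s hs => ?_
    rw [Set.uIcc_of_le ht.1] at hs
    rw [hc2 s ⟨hs.1, hs.2.trans ht.2⟩, ← mul_assoc, ← ex_add]
    unfold ex; push_cast; ring_nf
  · have h1 : HasDerivAt (fun t => ∫ s in (0 : ℝ)..t, ex (-s) k * c s k) (ex (-t) k * c t k) t :=
      intervalIntegral.integral_hasDerivAt_right ((hcont k).intervalIntegrable _ _)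
        ((hcont k).stronglyMeasurableAtFilter _ _) (hcont k).continuousAt
    have h2 := (hasDerivAt_ex t k).mul ((h1.const_mul (I * lam)).const_sub (u0 k))
    refine h2.congr_deriv ?_
    linear_combination (-I * lam * c t k) * ex_neg_mul t k
end Sol

lemma Tri_H1' {m : ℤ → ℤ → ℤ → ℂ} {a b c : FSeq} {M r s t : ℝ} (hM : 0 ≤ M)
    (h : ∀ x y z, ‖m x y z‖ ≤ M * Om x y z) (hr : 0 ≤ r) (hs : 0 ≤ s)
    (ha : B2 (JJ a) r) (hb : B2 (JJ b) s) (hc : B2 (JJ c) t) :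
    B2 (JJ (Tri m a b c)) (M * (4 * cj ^ 2 * (r * s * t))) := by
  have ha1 := B1_of_JJ ha
  have hb1 := B1_of_JJ hb
  have hc1 := B1_of_JJ hc
  have hcj := cj_pos
  rw [B2_JJ_iff] at *
  rw [ofReal_prod_sq hM (by positivity) hr hs]
  have h1 : S2 (Jw fun k => ‖Tri m a b c k‖ₑ) ≤ ENNReal.ofReal M ^ 2 *
      S2 (Jw (triw Om (fun k => ‖a k‖ₑ) (fun k => ‖b k‖ₑ) (fun k => ‖c k‖ₑ))) := by
    rw [← S2_mul_left]
    refine S2_mono fun k => ?_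
    unfold Jw
    rw [mul_left_comm]
    gcongr
    exact enorm_Tri_le hM h a b c k
  refine h1.trans ?_
  gcongr
  refine (Om_H1 _ _ _).trans ?_
  unfold B1 at ha1 hb1 hc1
  rw [ENNReal.ofReal_mul hcj.le] at ha1 hb1 hc1
  have e4 : ENNReal.ofReal (4 * cj ^ 2) ^ 2 = 16 * ENNReal.ofReal cj ^ 4 := by
    rw [ENNReal.ofReal_mul (by norm_num), ENNReal.ofReal_pow hcj.le, mul_pow, ← pow_mul]
    norm_num
  rw [e4]
  calc _ ≤ 4 * (ENNReal.ofReal r ^ 2 * (ENNReal.ofReal cj * ENNReal.ofReal s) ^ 2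
        * (ENNReal.ofReal cj * ENNReal.ofReal t) ^ 2
      + (ENNReal.ofReal cj * ENNReal.ofReal r) ^ 2 * ENNReal.ofReal s ^ 2
        * (ENNReal.ofReal cj * ENNReal.ofReal t) ^ 2
      + (ENNReal.ofReal cj * ENNReal.ofReal r) ^ 2 * (ENNReal.ofReal cj * ENNReal.ofReal s) ^ 2
        * ENNReal.ofReal t ^ 2) := by gcongr
    _ = 12 * (ENNReal.ofReal cj ^ 4 * (ENNReal.ofReal r ^ 2 * ENNReal.ofReal s ^ 2
        * ENNReal.ofReal t ^ 2)) := by ring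
    _ ≤ 16 * (ENNReal.ofReal cj ^ 4 * (ENNReal.ofReal r ^ 2 * ENNReal.ofReal s ^ 2
        * ENNReal.ofReal t ^ 2)) := by gcongr; norm_num
    _ = _ := by ring

lemma cubic_diff_H1 {f g : FSeq} {r d : ℝ} (hr : 0 ≤ r) (hd : 0 ≤ d)
    (hf : B2 (JJ f) r) (hg : B2 (JJ g) r) (hfg : B2 (JJ fun k => f k - g k) d) :
    B2 (JJ fun k => cubicTerm f k - cubicTerm g k) (12 * cj ^ 2 * (r * r * d)) := by
  have sf := (B1_of_JJ hf).summable
  have sg := (B1_of_JJ hg).summable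
  have cf := (B1_of_JJ hf).conjS.summable
  have cg := (B1_of_JJ hg).conjS.summable
  set m : ℤ → ℤ → ℤ → ℂ := fun _ _ _ => 1 with hm
  have h1 : ∀ x y z : ℤ, ‖m x y z‖ ≤ 1 := by simp [hm]
  have h1' : ∀ x y z : ℤ, ‖m x y z‖ ≤ 1 * Om x y z := fun x y z => by
    rw [one_mul]; exact (h1 x y z).trans (one_le_Om x y z)
  have hc := cj_pos
  rw [cubicTerm_eq sf, cubicTerm_eq sg]
  have e := Tri_telescope (Sm_of_l1 h1 cf sf sf) (Sm_of_l1 h1 cg sf sf) (Sm_of_l1 h1 cg sg sf)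
    (Sm_of_l1 h1 cg sg sg)
  rw [funext e, JJ_add, JJ_add]
  have t1 := Tri_H1' zero_le_one h1' hd hr hfg.JJ_conjS hf hf
  have t2 := Tri_H1' zero_le_one h1' hr hd hg.JJ_conjS hfg hf
  have t3 := Tri_H1' zero_le_one h1' hr hr hg.JJ_conjS hg hfg
  rw [conjS_sub] at t1
  refine (((t1.add (by positivity) (by positivity) t2).add (by positivity) (by positivity)
    t3)).mono (le_of_eq ?_)
  ring

lemma cubic_L2_B1 {a : FSeq} {r s : ℝ} (hr : 0 ≤ r) (hs : 0 ≤ s) (ha : B2 a r) (ha1 : B1 a s) :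
    B2 (cubicTerm a) (r * s * s) := by
  rw [cubicTerm_eq ha1.summable]
  have h2 := ha.conjS
  unfold B2 at h2 ⊢
  unfold B1 at ha1
  refine (S2_mono fun k => ?_).trans ((tri_young (fun k => ‖conjS a k‖ₑ) (fun k => ‖a k‖ₑ)
    (fun k => ‖a k‖ₑ)).trans ?_)
  · refine (enorm_Tri_le (w := fun _ _ _ => 1) zero_le_one (by simp) _ _ _ k).trans (le_of_eq ?_)
    rw [triw_one]; simp
  · rw [ENNReal.ofReal_mul (by positivity), ENNReal.ofReal_mul hr, mul_pow, mul_pow]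
    gcongr

/-! ### Frequency truncation -/

lemma piN_supp (N : ℕ) (a : FSeq) : SuppN N (piN N a) := fun k hk => by
  unfold piN; rw [if_neg (not_le.2 hk)]

lemma norm_piN_le (N : ℕ) (a : FSeq) (k : ℤ) : ‖piN N a k‖ ≤ ‖a k‖ := by
  unfold piN; split_ifs <;> simp

lemma norm_sub_piN_le (N : ℕ) (a : FSeq) (k : ℤ) : ‖a k - piN N a k‖ ≤ ‖a k‖ := by
  unfold piN; split_ifs <;> simp

lemma tail_L2 {N : ℕ} (hN : 0 < N) {a : FSeq} {r : ℝ} (h : B2 (JJ a) r) :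
    B2 (fun k => a k - piN N a k) ((N : ℝ)⁻¹ * r) := by
  refine h.smul (by positivity) fun k => ?_
  rw [norm_JJ]
  have hN' : (0 : ℝ) < N := by exact_mod_cast hN
  unfold piN
  split_ifs with hk
  · have := (jr_pos k).le
    rw [sub_self, norm_zero]; positivity
  · rw [sub_zero, ← mul_assoc]
    refine le_mul_of_one_le_left (norm_nonneg _) ?_
    rw [inv_mul_eq_div, one_le_div hN']
    have h1 : (N : ℤ) ≤ |k| := (not_le.1 hk).le
    have h2 : (N : ℝ) ≤ |(k : ℝ)| := by exact_mod_cast h1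
    exact h2.trans (abs_le_jr k)

lemma tail_H1 {a : FSeq} {r ε : ℝ} (h : B2 (JJ a) r) (hε : 0 < ε) :
    ∃ K0 : ℕ, ∀ K ≥ K0, B2 (JJ fun k => a k - piN K a k) ε := by
  obtain ⟨s, hs⟩ := summable_iff_vanishing_norm.1 h.summable (ε ^ 2) (by positivity)
  refine ⟨s.sup fun k => k.natAbs, fun K hK => B2_of_finset hε.le fun S => ?_⟩
  have h1 := hs (S.filter fun k => ¬ |k| ≤ (K : ℤ)) (by
    rw [Finset.disjoint_right]
    intro k hk hk'
    have h2 : k.natAbs ≤ K := (Finset.le_sup (f := fun k : ℤ => k.natAbs) hk).trans hK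
    refine (Finset.mem_filter.1 hk').2 ?_
    rw [Int.abs_eq_natAbs]
    exact_mod_cast h2)
  refine le_trans (le_of_eq ?_) (le_trans (le_abs_self _) h1.le)
  rw [Finset.sum_filter]
  refine Finset.sum_congr rfl fun k _ => ?_
  rw [norm_JJ, norm_JJ]
  unfold piN
  split_ifs <;> simp_all

/-- The frequencies `|k| ≤ K`. -/
def Sf (K : ℕ) : Finset ℤ := Finset.Icc (-(K : ℤ)) K

lemma mem_Sf {K : ℕ} {k : ℤ} : k ∈ Sf K ↔ |k| ≤ (K : ℤ) := by
  unfold Sf; rw [Finset.mem_Icc, abs_le]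

lemma sum_norm_mul_le {a b : FSeq} {r s : ℝ} (hr : 0 ≤ r) (hs : 0 ≤ s) (ha : B2 a r) (hb : B2 b s)
    (S : Finset ℤ) : ∑ k ∈ S, ‖a k‖ * ‖b k‖ ≤ r * s := by
  have h := Finset.sum_mul_sq_le_sq_mul_sq S (fun k => ‖a k‖) fun k => ‖b k‖
  have h1 := ha.sum_le hr S
  have h2 := hb.sum_le hs S
  refine (abs_le_of_sq_le_sq' (h.trans ?_) (by positivity)).2
  rw [mul_pow]
  gcongr

open ComplexConjugate

/-! ### Truncated invariants -/

/-- The `m`-th Fourier coefficient of the square of the truncation of `a` to `|k| ≤ K`. -/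
def sqK (K : ℕ) (a : FSeq) (m : ℤ) : ℂ :=
  ∑ y ∈ Sf K, ∑ z ∈ Sf K, if y + z = m then a y * a z else 0

/-- The `k`-th Fourier coefficient of the cubic term of the truncation of `a` to `|k| ≤ K`. -/
def cubK (K : ℕ) (a : FSeq) (k : ℤ) : ℂ := ∑ y ∈ Sf K, conj (a y) * sqK K a (y + k)

/-- The (normalised) `L⁴` norm to the fourth power of the truncation of `a` to `|k| ≤ K`. -/
def quartK (K : ℕ) (a : FSeq) : ℝ := ∑ m ∈ Sf (2 * K), ‖sqK K a m‖ ^ 2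

lemma add_mem_Sf {K : ℕ} {y z : ℤ} (hy : y ∈ Sf K) (hz : z ∈ Sf K) : y + z ∈ Sf (2 * K) := by
  unfold Sf at *
  rw [Finset.mem_Icc] at *
  push_cast
  omega

lemma sum_antidiag (K : ℕ) (F : ℤ → ℂ) (p : ℤ → ℤ → ℂ) :
    ∑ m ∈ Sf (2 * K), F m * ∑ y ∈ Sf K, ∑ z ∈ Sf K, (if y + z = m then p y z else 0) =
      ∑ y ∈ Sf K, ∑ z ∈ Sf K, F (y + z) * p y z := by
  simp_rw [Finset.mul_sum]
  rw [Finset.sum_comm]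
  refine Finset.sum_congr rfl fun y hy => ?_
  rw [Finset.sum_comm]
  refine Finset.sum_congr rfl fun z hz => ?_
  rw [Finset.sum_eq_single (y + z)]
  · simp
  · intro m _ hm; rw [if_neg (Ne.symm hm), mul_zero]
  · intro h; exact absurd (add_mem_Sf hy hz) h

lemma conj_sqK (K : ℕ) (a : FSeq) (m : ℤ) : conj (sqK K a m) =
    ∑ y ∈ Sf K, ∑ z ∈ Sf K, if y + z = m then conj (a y) * conj (a z) else 0 := by
  unfold sqK
  simp only [map_sum, apply_ite conj, map_mul, map_zero]

lemma sum_cubK (K : ℕ) (a : FSeq) (φ : ℤ → ℝ) :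
    ∑ y ∈ Sf K, ∑ z ∈ Sf K, (φ (y + z) : ℂ) * sqK K a (y + z) * (conj (a y) * conj (a z)) =
      ((∑ m ∈ Sf (2 * K), φ m * ‖sqK K a m‖ ^ 2 : ℝ) : ℂ) := by
  have h := sum_antidiag K (fun m => (φ m : ℂ) * sqK K a m) fun y z => conj (a y) * conj (a z)
  simp_rw [← conj_sqK] at h
  rw [← h, Complex.ofReal_sum]
  refine Finset.sum_congr rfl fun m _ => ?_
  rw [mul_assoc, mul_comm (sqK K a m), conj_mul_self]
  push_cast; ring

lemma sum_cubK_mass (K : ℕ) (a : FSeq) :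
    ∑ k ∈ Sf K, conj (a k) * cubK K a k = (quartK K a : ℂ) := by
  have := sum_cubK K a fun _ => 1
  simp only [one_mul, Complex.ofReal_one] at this
  unfold quartK cubK
  rw [← this]
  refine Finset.sum_congr rfl fun k _ => ?_
  rw [Finset.mul_sum]
  refine Finset.sum_congr rfl fun y _ => ?_
  rw [add_comm y k]; ring

lemma sum_cubK_mom (K : ℕ) (a : FSeq) :
    ∑ k ∈ Sf K, (k : ℂ) * (conj (a k) * cubK K a k) =
      ((1 / 2 * ∑ m ∈ Sf (2 * K), (m : ℝ) * ‖sqK K a m‖ ^ 2 : ℝ) : ℂ) := by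
  have h := sum_cubK K a fun m => (m : ℝ)
  have e1 : ∑ k ∈ Sf K, (k : ℂ) * (conj (a k) * cubK K a k) = ∑ y ∈ Sf K, ∑ z ∈ Sf K,
      (y : ℂ) * sqK K a (y + z) * (conj (a y) * conj (a z)) := by
    refine Finset.sum_congr rfl fun k _ => ?_
    unfold cubK
    rw [Finset.mul_sum, Finset.mul_sum]
    refine Finset.sum_congr rfl fun y _ => ?_
    rw [add_comm y k]; ring
  have e2 : ∑ y ∈ Sf K, ∑ z ∈ Sf K, (z : ℂ) * sqK K a (y + z) * (conj (a y) * conj (a z)) =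
      ∑ y ∈ Sf K, ∑ z ∈ Sf K, (y : ℂ) * sqK K a (y + z) * (conj (a y) * conj (a z)) := by
    rw [Finset.sum_comm]
    refine Finset.sum_congr rfl fun y _ => Finset.sum_congr rfl fun z _ => ?_
    rw [add_comm z y]; ring
  have e3 : ∑ y ∈ Sf K, ∑ z ∈ Sf K, (((y + z : ℤ) : ℝ) : ℂ) * sqK K a (y + z)
      * (conj (a y) * conj (a z)) =
      (∑ y ∈ Sf K, ∑ z ∈ Sf K, (y : ℂ) * sqK K a (y + z) * (conj (a y) * conj (a z)))
      + ∑ y ∈ Sf K, ∑ z ∈ Sf K, (z : ℂ) * sqK K a (y + z) * (conj (a y) * conj (a z)) := by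
    rw [← Finset.sum_add_distrib]
    refine Finset.sum_congr rfl fun y _ => ?_
    rw [← Finset.sum_add_distrib]
    refine Finset.sum_congr rfl fun z _ => ?_
    push_cast; ring
  rw [e1, Complex.ofReal_mul, ← h, e3, e2]
  push_cast; ring

lemma cubK_eq (K : ℕ) (a : FSeq) (k : ℤ) : cubK K a k = cubicTerm (piN K a) k := by
  have hS := piN_supp K a
  have hsum : Summable fun k => ‖piN K a k‖ :=
    summable_of_hasFiniteSupport (hS.finite.subset fun j hj => by
      rw [Function.mem_support] at hj ⊢; intro h; simp [h] at hj)
  rw [cubicTerm_eq hsum]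
  unfold Tri
  rw [tsum_eq_sum (s := Sf K ×ˢ Sf K)]
  · rw [Finset.sum_product]
    unfold cubK sqK
    simp_rw [Finset.mul_sum]
    rw [Finset.sum_comm]
    refine Finset.sum_congr rfl fun y hy => ?_
    rw [Finset.sum_comm]
    refine Finset.sum_congr rfl fun z hz => ?_
    have ey : piN K a y = a y := if_pos (mem_Sf.1 hy)
    have ez : piN K a z = a z := if_pos (mem_Sf.1 hz)
    simp only [one_mul, ey, ez]
    unfold conjS
    rw [show -(k - y - z) = y + z - k by ring]
    by_cases h : y + z - k ∈ Sf K
    · rw [Finset.sum_eq_single (y + z - k)]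
      · rw [if_pos (by ring)]; unfold piN; rw [if_pos (mem_Sf.1 h)]; ring
      · intro b _ hb
        rw [if_neg (fun h' => hb (by linarith)), mul_zero]
      · intro h'; exact absurd h h'
    · have : piN K a (y + z - k) = 0 := if_neg fun h' => h (mem_Sf.2 h')
      rw [this, map_zero, zero_mul, zero_mul]
      refine Finset.sum_eq_zero fun b hb => ?_
      rw [if_neg (fun h' => h (by rwa [h', add_sub_cancel_right])), mul_zero]
  · rintro ⟨y, z⟩ h
    rw [Finset.mem_product, not_and_or] at h
    rcases h with h | h
    · have : piN K a y = 0 := if_neg fun h' => h (mem_Sf.2 h')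
      simp [this]
    · have : piN K a z = 0 := if_neg fun h' => h (mem_Sf.2 h')
      simp [this]

section deriv
variable {g : ℝ → FSeq} {g' : FSeq} {t : ℝ}

lemma hasDerivAt_normSq {f : ℝ → ℂ} {f' : ℂ} (h : HasDerivAt f f' t) :
    HasDerivAt (fun s => ‖f s‖ ^ 2) (2 * (conj (f t) * f').re) t := by
  have := h.norm_sq
  rwa [Complex.inner, mul_comm f'] at this

lemma hasDerivAt_sqK (K : ℕ) (hg : ∀ k, HasDerivAt (fun s => g s k) (g' k) t) (m : ℤ) :
    HasDerivAt (fun s => sqK K (g s) m)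
      (2 * ∑ y ∈ Sf K, ∑ z ∈ Sf K, if y + z = m then g t y * g' z else 0) t := by
  unfold sqK
  have h : HasDerivAt (fun s => ∑ y ∈ Sf K, ∑ z ∈ Sf K, if y + z = m then g s y * g s z else 0)
      (∑ y ∈ Sf K, ∑ z ∈ Sf K, if y + z = m then g' y * g t z + g t y * g' z else 0) t := by
    refine HasDerivAt.fun_sum fun y _ => HasDerivAt.fun_sum fun z _ => ?_
    by_cases hm : y + z = m
    · simp only [if_pos hm]; exact (hg y).mul (hg z)
    · simp only [if_neg hm]; exact hasDerivAt_const _ _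
  refine h.congr_deriv ?_
  have e1 : ∑ y ∈ Sf K, ∑ z ∈ Sf K, (if y + z = m then g' y * g t z else 0) =
      ∑ y ∈ Sf K, ∑ z ∈ Sf K, (if y + z = m then g t y * g' z else 0) := by
    rw [Finset.sum_comm]
    refine Finset.sum_congr rfl fun y _ => Finset.sum_congr rfl fun z _ => ?_
    rw [add_comm z y, mul_comm]
  rw [two_mul]
  nth_rewrite 1 [← e1]
  rw [← Finset.sum_add_distrib]
  refine Finset.sum_congr rfl fun y _ => ?_
  rw [← Finset.sum_add_distrib]
  refine Finset.sum_congr rfl fun z _ => ?_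
  split_ifs <;> simp

lemma hasDerivAt_quartK (K : ℕ) (hg : ∀ k, HasDerivAt (fun s => g s k) (g' k) t) :
    HasDerivAt (fun s => quartK K (g s)) (4 * ∑ k ∈ Sf K, (conj (cubK K (g t) k) * g' k).re) t := by
  unfold quartK
  have h := HasDerivAt.fun_sum (u := Sf (2 * K)) fun m _ => hasDerivAt_normSq (hasDerivAt_sqK K hg m)
  refine h.congr_deriv ?_
  have e := sum_antidiag K (fun m => conj (sqK K (g t) m)) fun y z => g t y * g' z
  rw [← Finset.mul_sum, ← Complex.re_sum, ← Complex.re_sum]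
  have e2 : ∑ m ∈ Sf (2 * K), conj (sqK K (g t) m) *
      (2 * ∑ y ∈ Sf K, ∑ z ∈ Sf K, if y + z = m then g t y * g' z else 0) =
      2 * ∑ k ∈ Sf K, conj (cubK K (g t) k) * g' k := by
    simp_rw [mul_left_comm _ (2 : ℂ)]
    rw [← Finset.mul_sum, e, Finset.sum_comm]
    congr 1
    refine Finset.sum_congr rfl fun z _ => ?_
    unfold cubK
    rw [map_sum, Finset.sum_mul]
    refine Finset.sum_congr rfl fun y _ => ?_
    rw [map_mul, Complex.conj_conj]; ring
  rw [e2]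
  simp
  ring

lemma hasDerivAt_quad (K : ℕ) (w : ℤ → ℝ) (hg : ∀ k, HasDerivAt (fun s => g s k) (g' k) t) :
    HasDerivAt (fun s => ∑ k ∈ Sf K, w k * ‖g s k‖ ^ 2)
      (2 * ∑ k ∈ Sf K, w k * (conj (g t k) * g' k).re) t := by
  have h := HasDerivAt.fun_sum (u := Sf K) fun k _ => (hasDerivAt_normSq (hg k)).const_mul (w k)
  refine h.congr_deriv ?_
  rw [Finset.mul_sum]
  exact Finset.sum_congr rfl fun k _ => by ring
end deriv

/-! ### Conservation laws -/

lemma quartK_nonneg (K : ℕ) (a : FSeq) : 0 ≤ quartK K a :=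
  Finset.sum_nonneg fun _ _ => sq_nonneg _

lemma quartK_le {K : ℕ} {a : FSeq} {r s : ℝ} (hr : 0 ≤ r) (hs : 0 ≤ s) (ha : B2 (piN K a) r)
    (ha1 : B1 (piN K a) s) : quartK K a ≤ r * (r * s * s) := by
  have h := sum_cubK_mass K a
  have h2 : (quartK K a) = ‖∑ k ∈ Sf K, conj (a k) * cubK K a k‖ := by
    rw [h, Complex.norm_real, Real.norm_eq_abs, abs_of_nonneg (quartK_nonneg K a)]
  rw [h2]
  refine (norm_sum_le _ _).trans ?_
  refine le_trans (Finset.sum_le_sum fun k hk => ?_)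
    (sum_norm_mul_le hr (by positivity) ha (cubic_L2_B1 hr hs ha ha1) (Sf K))
  rw [norm_mul, RCLike.norm_conj, cubK_eq, show piN K a k = a k from if_pos (mem_Sf.1 hk)]

/-- Truncated kinetic plus interaction energy. -/
def enerK (lam : ℝ) (K : ℕ) (a : FSeq) : ℝ :=
  (∑ k ∈ Sf K, (k : ℝ) ^ 2 * ‖a k‖ ^ 2) + lam / 2 * quartK K a

section Cons
variable {lam T : ℝ} {u0 : FSeq} {u : ℝ → FSeq}

lemma sol_tail (hu : IsNLSSolution lam T u0 u) {ε : ℝ} (hε : 0 < ε) :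
    ∃ K0 : ℕ, ∀ K ≥ K0, ∀ s ∈ Set.Icc 0 T, B2 (JJ fun k => u s k - piN K (u s) k) ε := by
  have := (isCompact_Icc (a := (0 : ℝ)) (b := T)).induction_on
    (p := fun A => ∃ K0 : ℕ, ∀ K ≥ K0, ∀ s ∈ A ∩ Set.Icc 0 T,
      B2 (JJ fun k => u s k - piN K (u s) k) ε)
    ⟨0, by simp⟩
    (fun A B hAB ⟨K0, h⟩ => ⟨K0, fun K hK s hs => h K hK s ⟨hAB hs.1, hs.2⟩⟩)
    (fun A B ⟨K0, h⟩ ⟨K1, h'⟩ => ⟨max K0 K1, fun K hK s hs => by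
      rcases hs.1 with h1 | h1
      · exact h K ((le_max_left _ _).trans hK) s ⟨h1, hs.2⟩
      · exact h' K ((le_max_right _ _).trans hK) s ⟨h1, hs.2⟩⟩)
    (fun t ht => by
      have h1 := (hu.2.2.1 t ht).eventually (gt_mem_nhds (half_pos hε))
      obtain ⟨K0, hK0⟩ := tail_H1 (hu.2.1 t ht).B2_JJ (half_pos hε)
      refine ⟨_, h1, K0, fun K hK s hs => ?_⟩
      have h2 := (sol_diff hu hs.2 ht).mono (le_of_lt hs.1)
      have h3 : B2 (JJ fun k => (u s k - u t k) - piN K (fun k => u s k - u t k) k) (ε / 2) :=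
        h2.JJ_dom fun k => norm_sub_piN_le K (fun k => u s k - u t k) k
      have h4 := h3.add (half_pos hε).le (half_pos hε).le (hK0 K hK)
      rw [← JJ_add] at h4
      convert h4 using 3
      · unfold piN; split_ifs <;> ring
      · ring)
  obtain ⟨K0, h⟩ := this
  exact ⟨K0, fun K hK s hs => h K hK s ⟨hs, hs⟩⟩

lemma abs_sub_le_of_deriv {F F' : ℝ → ℝ} {M : ℝ} (hM : 0 ≤ M) (hF : ∀ s, HasDerivAt F (F' s) s)
    (hb : ∀ s ∈ Set.Icc 0 T, |F' s| ≤ M) {t : ℝ} (ht : t ∈ Set.Icc 0 T) :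
    |F t - F 0| ≤ M * T := by
  have := norm_image_sub_le_of_norm_deriv_le_segment' (f := F) (f' := F') (C := M) (a := 0) (b := T)
    (fun x _ => (hF x).hasDerivWithinAt)
    (fun x hx => hb x ⟨hx.1, hx.2.le⟩) t ht
  rw [Real.norm_eq_abs, sub_zero] at this
  exact this.trans (mul_le_mul_of_nonneg_left ht.2 hM)

/-- Almost conservation of a truncated quadratic quantity whose flux vanishes for the
truncated nonlinearity. -/
lemma quad_cons (hT : 0 < T) (hl : |lam| ≤ 1) (hu : IsNLSSolution lam T u0 u) {r : ℝ} (hr : 0 ≤ r)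
    (hb : ∀ s ∈ Set.Icc 0 T, B2 (JJ (u s)) r) {K : ℕ} (hK : 0 < K) {w : ℤ → ℝ}
    (hw : ∀ k, |w k| ≤ jr k)
    (hw0 : ∀ a : FSeq, (∑ k ∈ Sf K, (w k : ℂ) * (conj (a k) * cubK K a k)).im = 0)
    {t : ℝ} (ht : t ∈ Set.Icc 0 T) :
    |∑ k ∈ Sf K, w k * ‖u t k‖ ^ 2 - ∑ k ∈ Sf K, w k * ‖u 0 k‖ ^ 2| ≤
      2 * (r * (18 * cj * (r * r * ((K : ℝ)⁻¹ * r)))) * T := by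
  obtain ⟨g, c, hg, hc, -, hd⟩ := sol_ext hT hu
  have hcj := cj_pos
  rw [← hg t ht, ← hg 0 ⟨le_rfl, hT.le⟩]
  refine abs_sub_le_of_deriv (F := fun s => ∑ k ∈ Sf K, w k * ‖g s k‖ ^ 2) (by positivity)
    (fun s => hasDerivAt_quad K w fun k => hd k s) (fun s hs => ?_) ht
  rw [hg s hs, hc s hs]
  have e : ∑ k ∈ Sf K, w k * (conj (u s k) * (-I * (k : ℂ) ^ 2 * u s k
      - I * lam * cubicTerm (u s) k)).re =
      lam * ∑ k ∈ Sf K, w k * (conj (u s k) * (cubicTerm (u s) k - cubK K (u s) k)).im := by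
    have h0 := hw0 (u s)
    rw [Complex.im_sum] at h0
    have h0' : ∑ k ∈ Sf K, w k * (conj (u s k) * cubK K (u s) k).im = 0 := by
      rw [← h0]
      exact Finset.sum_congr rfl fun k _ => by rw [Complex.im_ofReal_mul]
    have : lam * ∑ k ∈ Sf K, w k * (conj (u s k) * (cubicTerm (u s) k - cubK K (u s) k)).im =
        lam * ∑ k ∈ Sf K, w k * (conj (u s k) * cubicTerm (u s) k).im := by
      congr 1
      rw [← sub_zero (∑ k ∈ Sf K, w k * (conj (u s k) * cubicTerm (u s) k).im), ← h0',
        ← Finset.sum_sub_distrib]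
      exact Finset.sum_congr rfl fun k _ => by rw [mul_sub, Complex.sub_im]; ring
    rw [this, Finset.mul_sum]
    refine Finset.sum_congr rfl fun k _ => ?_
    have h5 : conj (u s k) * (-I * (k : ℂ) ^ 2 * u s k - I * lam * cubicTerm (u s) k) =
        -I * (((k : ℝ) ^ 2 * ‖u s k‖ ^ 2 : ℝ) : ℂ)
          - I * ((lam : ℂ) * (conj (u s k) * cubicTerm (u s) k)) := by
      have := conj_mul_self (u s k)
      push_cast at this ⊢
      linear_combination (-I * (k : ℂ) ^ 2) * this
    rw [h5, Complex.sub_re, Complex.mul_re I, Complex.re_ofReal_mul, Complex.im_ofReal_mul,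
      neg_mul, Complex.neg_re, Complex.mul_re I, Complex.ofReal_im, Complex.I_re, Complex.I_im]
    ring
  rw [e, abs_mul, abs_of_pos (two_pos), abs_mul]
  have hp : B2 (JJ (piN K (u s))) r := (hb s hs).JJ_dom fun k => norm_piN_le _ _ _
  have hd' := cubic_diff hr (by positivity) (hb s hs) hp (tail_L2 hK (hb s hs))
  have h6 : |∑ k ∈ Sf K, w k * (conj (u s k) * (cubicTerm (u s) k - cubK K (u s) k)).im| ≤
      r * (18 * cj * (r * r * ((K : ℝ)⁻¹ * r))) := by
    refine (Finset.abs_sum_le_sum_abs _ _).trans ?_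
    refine le_trans (Finset.sum_le_sum fun k hk => ?_)
      (sum_norm_mul_le hr (by positivity) (hb s hs) hd' (Sf K))
    rw [abs_mul, norm_JJ, cubK_eq, mul_assoc]
    have := Complex.abs_im_le_norm (conj (u s k) * (cubicTerm (u s) k - cubicTerm (piN K (u s)) k))
    rw [norm_mul, RCLike.norm_conj] at this
    have := (jr_pos k).le
    gcongr
    exact hw k
  have : |lam| * |∑ k ∈ Sf K, w k * (conj (u s k) * (cubicTerm (u s) k - cubK K (u s) k)).im| ≤
      1 * (r * (18 * cj * (r * r * ((K : ℝ)⁻¹ * r)))) := by gcongr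
  linarith

lemma mass_cons (hT : 0 < T) (hl : |lam| ≤ 1) (hu : IsNLSSolution lam T u0 u) {r : ℝ} (hr : 0 ≤ r)
    (hb : ∀ s ∈ Set.Icc 0 T, B2 (JJ (u s)) r) {K : ℕ} (hK : 0 < K)
    {t : ℝ} (ht : t ∈ Set.Icc 0 T) :
    |∑ k ∈ Sf K, ‖u t k‖ ^ 2 - ∑ k ∈ Sf K, ‖u 0 k‖ ^ 2| ≤
      2 * (r * (18 * cj * (r * r * ((K : ℝ)⁻¹ * r)))) * T := by
  have := quad_cons hT hl hu hr hb hK (w := fun _ => 1) (fun k => by simpa using one_le_jr k)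
    (fun a => by
      simp only [Complex.ofReal_one, one_mul]; rw [sum_cubK_mass, Complex.ofReal_im]) ht
  simpa using this

lemma mom_cons (hT : 0 < T) (hl : |lam| ≤ 1) (hu : IsNLSSolution lam T u0 u) {r : ℝ} (hr : 0 ≤ r)
    (hb : ∀ s ∈ Set.Icc 0 T, B2 (JJ (u s)) r) {K : ℕ} (hK : 0 < K)
    {t : ℝ} (ht : t ∈ Set.Icc 0 T) :
    |∑ k ∈ Sf K, (k : ℝ) * ‖u t k‖ ^ 2 - ∑ k ∈ Sf K, (k : ℝ) * ‖u 0 k‖ ^ 2| ≤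
      2 * (r * (18 * cj * (r * r * ((K : ℝ)⁻¹ * r)))) * T :=
  quad_cons hT hl hu hr hb hK (w := fun k => (k : ℝ)) (fun k => abs_le_jr k)
    (fun a => by
      simp only [Complex.ofReal_intCast]; rw [sum_cubK_mom, Complex.ofReal_im]) ht

lemma ener_cons (hT : 0 < T) (hl : lam = 1 ∨ lam = -1) (hu : IsNLSSolution lam T u0 u) {r ε : ℝ}
    (hr : 0 ≤ r) (hε : 0 ≤ ε)
    (hb : ∀ s ∈ Set.Icc 0 T, B2 (JJ (u s)) r) {K : ℕ}
    (hK : ∀ s ∈ Set.Icc 0 T, B2 (JJ fun k => u s k - piN K (u s) k) ε)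
    {t : ℝ} (ht : t ∈ Set.Icc 0 T) :
    |enerK lam K (u t) - enerK lam K (u 0)| ≤
      2 * (r * (12 * cj ^ 2 * (r * r * ε)) + 4 * (cj * r * (cj * r) * r) * (12 * cj ^ 2 * (r * r * ε)))
        * T := by
  obtain ⟨g, c, hg, hc, -, hd⟩ := sol_ext hT hu
  have hcj := cj_pos
  rw [← hg t ht, ← hg 0 ⟨le_rfl, hT.le⟩]
  refine abs_sub_le_of_deriv (F := fun s => enerK lam K (g s)) (by positivity)
    (fun s => (hasDerivAt_quad K (fun k => (k : ℝ) ^ 2) fun k => hd k s).add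
      ((hasDerivAt_quartK K fun k => hd k s).const_mul (lam / 2))) (fun s hs => ?_) ht
  rw [hg s hs, hc s hs]
  have hl1 : |lam| = 1 := by rcases hl with rfl | rfl <;> simp
  have hl2 : lam * lam = 1 := by rcases hl with rfl | rfl <;> norm_num
  set v := u s with hv
  have hp : B2 (JJ (piN K v)) r := (hb s hs).JJ_dom fun k => norm_piN_le _ _ _
  have hd' := cubic_diff_H1 hr hε (hb s hs) hp (hK s hs)
  have hc' := cubic_H1 hr hp
  have key : ∀ k ∈ Sf K, |2 * ((k : ℝ) ^ 2 * (conj (v k) * (-I * (k : ℂ) ^ 2 * v k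
      - I * lam * cubicTerm v k)).re) + lam / 2 * (4 * (conj (cubK K v k) * (-I * (k : ℂ) ^ 2 * v k
      - I * lam * cubicTerm v k)).re)| ≤
      2 * (‖JJ v k‖ * ‖JJ (fun k => cubicTerm v k - cubicTerm (piN K v) k) k‖) +
      2 * (‖JJ (cubicTerm (piN K v)) k‖ * ‖JJ (fun k => cubicTerm v k - cubicTerm (piN K v) k) k‖) := by
    intro k hk
    have e : 2 * ((k : ℝ) ^ 2 * (conj (v k) * (-I * (k : ℂ) ^ 2 * v k
      - I * lam * cubicTerm v k)).re) + lam / 2 * (4 * (conj (cubK K v k) * (-I * (k : ℂ) ^ 2 * v k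
      - I * lam * cubicTerm v k)).re) =
      2 * (lam * (k : ℝ) ^ 2) * (conj (v k) * (cubicTerm v k - cubK K v k)).im
        + 2 * (conj (cubK K v k) * (cubicTerm v k - cubK K v k)).im := by
      have ek : (k : ℂ) ^ 2 = (((k : ℝ) ^ 2 : ℝ) : ℂ) := by push_cast; rfl
      rw [ek]
      generalize (k : ℝ) ^ 2 = κ
      generalize v k = a
      generalize cubicTerm v k = b
      generalize cubK K v k = d
      simp only [Complex.mul_re, Complex.mul_im, Complex.sub_re, Complex.sub_im, Complex.neg_re,
        Complex.neg_im, Complex.I_re, Complex.I_im, Complex.ofReal_re, Complex.ofReal_im,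
        Complex.conj_re, Complex.conj_im]
      linear_combination (2 * (d.re * b.im - d.im * b.re)) * hl2
    rw [e]
    simp only [norm_JJ]
    rw [cubK_eq]
    have hj := one_le_jr k
    have h1 := Complex.abs_im_le_norm (conj (v k) * (cubicTerm v k - cubicTerm (piN K v) k))
    have h2 := Complex.abs_im_le_norm (conj (cubicTerm (piN K v) k)
      * (cubicTerm v k - cubicTerm (piN K v) k))
    rw [norm_mul, RCLike.norm_conj] at h1 h2
    have hk2 : (k : ℝ) ^ 2 ≤ jr k * jr k := by
      rw [← sq]; exact le_trans (by linarith) (le_jr_sq k)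
    refine (abs_add_le _ _).trans (add_le_add ?_ ?_)
    · rw [abs_mul, abs_mul, abs_mul, hl1, one_mul, abs_of_pos (two_pos), abs_of_nonneg (sq_nonneg _)]
      calc _ ≤ 2 * (jr k * jr k) * (‖v k‖ * ‖cubicTerm v k - cubicTerm (piN K v) k‖) := by gcongr
        _ = _ := by ring
    · rw [abs_mul, abs_of_pos (two_pos)]
      have h3 : 1 ≤ jr k * jr k := by nlinarith
      calc _ ≤ 2 * (1 * (‖cubicTerm (piN K v) k‖ * ‖cubicTerm v k - cubicTerm (piN K v) k‖)) := by
            rw [one_mul]; gcongr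
        _ ≤ 2 * ((jr k * jr k) * (‖cubicTerm (piN K v) k‖ * ‖cubicTerm v k - cubicTerm (piN K v) k‖)) := by
            gcongr
        _ = _ := by ring
  have e0 : 2 * ∑ k ∈ Sf K, (k : ℝ) ^ 2 * (conj (v k) * (-I * (k : ℂ) ^ 2 * v k
      - I * lam * cubicTerm v k)).re + lam / 2 * (4 * ∑ k ∈ Sf K, (conj (cubK K v k) *
      (-I * (k : ℂ) ^ 2 * v k - I * lam * cubicTerm v k)).re) =
      ∑ k ∈ Sf K, (2 * ((k : ℝ) ^ 2 * (conj (v k) * (-I * (k : ℂ) ^ 2 * v k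
      - I * lam * cubicTerm v k)).re) + lam / 2 * (4 * (conj (cubK K v k) * (-I * (k : ℂ) ^ 2 * v k
      - I * lam * cubicTerm v k)).re)) := by
    rw [Finset.sum_add_distrib]; simp only [Finset.mul_sum]
  rw [e0]
  refine (Finset.abs_sum_le_sum_abs _ _).trans ((Finset.sum_le_sum key).trans ?_)
  rw [Finset.sum_add_distrib, ← Finset.mul_sum, ← Finset.mul_sum, mul_add]
  have h1 := sum_norm_mul_le hr (by positivity) (hb s hs) hd' (Sf K)
  have h2 := sum_norm_mul_le (by positivity) (by positivity) hc' hd' (Sf K)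
  linarith
end Cons

/-! ### The uniform bound in the energy space -/

lemma B2_piN_of_sum {K : ℕ} {a : FSeq} {r : ℝ} (hr : 0 ≤ r)
    (h : ∑ k ∈ Sf K, ‖a k‖ ^ 2 ≤ r ^ 2) : B2 (piN K a) r := by
  refine B2_of_finset hr fun S => ?_
  calc ∑ k ∈ S, ‖piN K a k‖ ^ 2 = ∑ k ∈ S, if k ∈ Sf K then ‖a k‖ ^ 2 else 0 := by
        refine Finset.sum_congr rfl fun k _ => ?_
        simp only [mem_Sf]
        unfold piN; split_ifs <;> simp
    _ ≤ ∑ k ∈ S ∪ Sf K, if k ∈ Sf K then ‖a k‖ ^ 2 else 0 :=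
        Finset.sum_le_sum_of_subset_of_nonneg Finset.subset_union_left fun k _ _ => by
          split_ifs <;> positivity
    _ = ∑ k ∈ Sf K, ‖a k‖ ^ 2 := by
        rw [← Finset.sum_filter]
        congr 1
        ext k; simp
    _ ≤ r ^ 2 := h

lemma JJ_piN (K : ℕ) (a : FSeq) : JJ (piN K a) = piN K (JJ a) := by
  funext k; unfold JJ piN; split_ifs <;> simp

lemma exists_Sf (S : Finset ℤ) : ∃ K0 : ℕ, ∀ K ≥ K0, S ⊆ Sf K := by
  refine ⟨S.sup fun k => k.natAbs, fun K hK k hk => mem_Sf.2 ?_⟩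
  have h2 : k.natAbs ≤ K := (Finset.le_sup (f := fun k : ℤ => k.natAbs) hk).trans hK
  rw [Int.abs_eq_natAbs]
  exact_mod_cast h2

/-- Uniform `H¹` bound for exact solutions, depending only on the size of the data. -/
lemma sol_H1 {R : ℝ} (hR : 0 < R) : ∃ U : ℝ, 0 < U ∧ ∀ (lam T : ℝ) (u0 : FSeq) (u : ℝ → FSeq),
    0 < T → (lam = 1 ∨ lam = -1) → InHs 1 u0 → hnorm 1 u0 ≤ R → IsNLSSolution lam T u0 u →
    ∀ t ∈ Set.Icc 0 T, B2 (JJ (u t)) U := by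
  set ρ : ℝ := Real.sqrt (R ^ 2 + 1) with hρ
  have hρ2 : ρ ^ 2 = R ^ 2 + 1 := Real.sq_sqrt (by positivity)
  have hρ0 : 0 < ρ := Real.sqrt_pos.2 (by positivity)
  obtain ⟨C, hC, hinterp⟩ := B1_interp (ε := 1 / (2 * ρ)) (by positivity)
  have hcj := cj_pos
  set V : ℝ := 4 * ρ ^ 2 + 4 * (R ^ 2 + R * (R * (cj * R) * (cj * R)) / 2 + 1 + C ^ 2 * ρ ^ 4) with hV
  have hV0 : 0 < V := by positivity
  refine ⟨Real.sqrt V, Real.sqrt_pos.2 hV0, fun lam T u0 u hT hl h0 h0R hu t ht => ?_⟩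
  have hu0 : B2 (JJ (u 0)) R := by rw [hu.1]; exact h0.B2_JJ.mono h0R
  obtain ⟨r, hr, hb⟩ := sol_bdd hu
  have hl' : |lam| ≤ 1 := by rcases hl with rfl | rfl <;> simp
  refine B2_of_finset (Real.sqrt_nonneg _) fun S => ?_
  rw [Real.sq_sqrt hV0.le]
  set A : ℝ := 2 * (r * (12 * cj ^ 2 * (r * r)) + 4 * (cj * r * (cj * r) * r) * (12 * cj ^ 2 * (r * r)))
        * T with hA
  have hA0 : 0 ≤ A := by positivity
  obtain ⟨K1, hK1⟩ := exists_Sf S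
  obtain ⟨K2, hK2⟩ := sol_tail hu (ε := 1 / (A + 1)) (by positivity)
  set A' : ℝ := 2 * (r * (18 * cj * (r * r * r))) * T with hA'
  obtain ⟨K3, hK3⟩ := exists_nat_ge (A' + 1)
  set K := max K1 (max K2 K3) with hKdef
  have hA'0 : 0 ≤ A' := by positivity
  have hKA : A' + 1 ≤ (K : ℝ) := hK3.trans (by
    exact_mod_cast (le_max_right K2 K3).trans (le_max_right _ _))
  have hKpos : 0 < K := by
    have : (0 : ℝ) < K := by linarith
    exact_mod_cast this
  have hS : S ⊆ Sf K := hK1 K (le_max_left _ _)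
  have htail := hK2 K ((le_max_left K2 K3).trans (le_max_right _ _))
  have hm : |∑ k ∈ Sf K, ‖u t k‖ ^ 2 - ∑ k ∈ Sf K, ‖u 0 k‖ ^ 2| ≤ 1 := by
    refine (mass_cons hT hl' hu hr hb hKpos ht).trans ?_
    have : 2 * (r * (18 * cj * (r * r * ((K : ℝ)⁻¹ * r)))) * T = A' / K := by
      rw [hA', div_eq_mul_inv]; ring
    rw [this, div_le_one (by exact_mod_cast hKpos)]
    linarith
  have he : |enerK lam K (u t) - enerK lam K (u 0)| ≤ 1 := by
    refine (ener_cons hT hl hu hr (by positivity) hb htail ht).trans ?_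
    have : 2 * (r * (12 * cj ^ 2 * (r * r * (1 / (A + 1)))) + 4 * (cj * r * (cj * r) * r) *
        (12 * cj ^ 2 * (r * r * (1 / (A + 1))))) * T = A / (A + 1) := by
      conv_rhs => rw [hA]
      ring
    rw [this, div_le_one (by positivity)]
    linarith
  -- bounds at time zero
  have hm0 : ∑ k ∈ Sf K, ‖u 0 k‖ ^ 2 ≤ R ^ 2 := hu0.of_JJ.sum_le hR.le _
  have hk0 : ∑ k ∈ Sf K, (k : ℝ) ^ 2 * ‖u 0 k‖ ^ 2 ≤ R ^ 2 := by
    refine le_trans (Finset.sum_le_sum fun k _ => ?_) (hu0.sum_le hR.le (Sf K))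
    rw [norm_JJ, mul_pow]
    exact mul_le_mul_of_nonneg_right (by linarith [le_jr_sq k]) (sq_nonneg _)
  have hp0 : B2 (JJ (piN K (u 0))) R := hu0.JJ_dom fun k => norm_piN_le _ _ _
  have hq0 : quartK K (u 0) ≤ R * (R * (cj * R) * (cj * R)) :=
    quartK_le hR.le (by positivity) hp0.of_JJ (B1_of_JJ hp0)
  have hq0' := quartK_nonneg K (u 0)
  have hqt' := quartK_nonneg K (u t)
  -- bounds at time `t`
  have hmt : ∑ k ∈ Sf K, ‖u t k‖ ^ 2 ≤ ρ ^ 2 := by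
    have := (abs_le.1 hm).2; rw [hρ2]; linarith
  set s2 : ℝ := ∑ k ∈ Sf K, ‖JJ (u t) k‖ ^ 2 with hs2
  have hs20 : 0 ≤ s2 := Finset.sum_nonneg fun _ _ => sq_nonneg _
  have hB2 : B2 (piN K (u t)) ρ := B2_piN_of_sum hρ0.le hmt
  have hBJ : B2 (JJ (piN K (u t))) (Real.sqrt s2) := by
    rw [JJ_piN]
    exact B2_piN_of_sum (Real.sqrt_nonneg _) (by rw [Real.sq_sqrt hs20])
  have hss := Real.sq_sqrt hs20
  have hs0 := Real.sqrt_nonneg s2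
  set s := Real.sqrt s2 with hs
  have hB1 := hinterp _ _ _ hρ0.le hs0 hB2 hBJ
  have hqt := quartK_le hρ0.le (by positivity) hB2 hB1
  have hqt2 : quartK K (u t) ≤ 2 * C ^ 2 * ρ ^ 4 + s2 / 2 := by
    refine hqt.trans ?_
    have e : ρ * (ρ * (C * ρ + 1 / (2 * ρ) * s) * (C * ρ + 1 / (2 * ρ) * s))
        = (C * ρ ^ 2 + s / 2) ^ 2 := by field_simp
    rw [e, ← hss]
    nlinarith [sq_nonneg (C * ρ ^ 2 - s / 2)]
  have hkt : s2 ≤ 2 * (∑ k ∈ Sf K, ‖u t k‖ ^ 2) + 2 * ∑ k ∈ Sf K, (k : ℝ) ^ 2 * ‖u t k‖ ^ 2 := by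
    rw [hs2, Finset.mul_sum, Finset.mul_sum, ← Finset.sum_add_distrib]
    refine Finset.sum_le_sum fun k _ => ?_
    rw [norm_JJ, mul_pow]
    have := mul_le_mul_of_nonneg_right (jr_sq_le k) (sq_nonneg ‖u t k‖)
    linarith
  have hE := (abs_le.1 he).2
  unfold enerK at hE
  have hfin : s2 ≤ V := by
    rcases hl with rfl | rfl
    · rw [hV]; linarith
    · rw [hV]; linarith
  exact (Finset.sum_le_sum_of_subset_of_nonneg hS fun _ _ _ => sq_nonneg _).trans hfin

/-! ### Discrete mass and momentum -/

lemma mass_eq_sum {N : ℕ} {f : FSeq} (hf : SuppN N f) : mass f = ∑ k ∈ Sf N, ‖f k‖ ^ 2 := by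
  unfold mass
  refine tsum_eq_sum fun k hk => ?_
  rw [mem_Sf, not_le] at hk
  simp [hf k hk]

lemma mom_eq_sum {N : ℕ} {f : FSeq} (hf : SuppN N f) :
    mom f = ∑ k ∈ Sf N, (k : ℝ) * ‖f k‖ ^ 2 := by
  unfold mom
  refine tsum_eq_sum fun k hk => ?_
  rw [mem_Sf, not_le] at hk
  simp [hf k hk]

lemma initData_supp (N : ℕ) (u0 : FSeq) : SuppN N (initData N u0) := piN_supp _ _

lemma Mnum_eq (N : ℕ) (u0 : FSeq) : Mnum N u0 = (mass (initData N u0) : ℂ) := by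
  unfold Mnum modSq conv mass
  rw [Complex.ofReal_tsum]
  refine tsum_congr fun j => ?_
  rw [← conj_mul_self]
  simp [conjS]

lemma Pnum_eq (N : ℕ) (u0 : FSeq) : Pnum N u0 = -(I * (mom (initData N u0) : ℂ)) := by
  unfold Pnum conv mom
  rw [Complex.ofReal_tsum, ← tsum_mul_left, ← tsum_neg, ← (Equiv.neg ℤ).tsum_eq]
  refine tsum_congr fun j => ?_
  rw [Complex.ofReal_mul, ← conj_mul_self]
  simp only [conjS, dx, Equiv.neg_apply, zero_sub, neg_neg, Int.cast_neg, Complex.ofReal_intCast]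
  ring

lemma abs_normSq_sub_le (x y : ℂ) : |‖x‖ ^ 2 - ‖y‖ ^ 2| ≤ ‖x‖ * ‖x - y‖ + ‖y‖ * ‖x - y‖ := by
  have h1 := abs_norm_sub_norm_le x y
  have e : ‖x‖ ^ 2 - ‖y‖ ^ 2 = (‖x‖ + ‖y‖) * (‖x‖ - ‖y‖) := by ring
  rw [e, abs_mul, abs_of_nonneg (by positivity), ← add_mul]
  gcongr

lemma mass_diff {N : ℕ} {f g : FSeq} {r d : ℝ} (hr : 0 ≤ r) (hd : 0 ≤ d) (hfN : SuppN N f)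
    (hgN : SuppN N g) (hf : B2 f r) (hg : B2 g r) (hfg : B2 (fun k => f k - g k) d) :
    |mass f - mass g| ≤ 2 * (r * d) := by
  rw [mass_eq_sum hfN, mass_eq_sum hgN, ← Finset.sum_sub_distrib]
  refine (Finset.abs_sum_le_sum_abs _ _).trans ?_
  refine (Finset.sum_le_sum fun k _ => abs_normSq_sub_le (f k) (g k)).trans ?_
  rw [Finset.sum_add_distrib]
  have h1 := sum_norm_mul_le hr hd hf hfg (Sf N)
  have h2 := sum_norm_mul_le hr hd hg hfg (Sf N)
  linarith

lemma mom_diff {N : ℕ} {f g : FSeq} {r d : ℝ} (hr : 0 ≤ r) (hd : 0 ≤ d) (hfN : SuppN N f)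
    (hgN : SuppN N g) (hf : B2 (JJ f) r) (hg : B2 (JJ g) r) (hfg : B2 (fun k => f k - g k) d) :
    |mom f - mom g| ≤ 2 * (r * d) := by
  rw [mom_eq_sum hfN, mom_eq_sum hgN, ← Finset.sum_sub_distrib]
  refine (Finset.abs_sum_le_sum_abs _ _).trans ?_
  have h1 := sum_norm_mul_le hr hd hf hfg (Sf N)
  have h2 := sum_norm_mul_le hr hd hg hfg (Sf N)
  refine le_trans (Finset.sum_le_sum (g := fun k => ‖JJ f k‖ * ‖f k - g k‖ +
    ‖JJ g k‖ * ‖f k - g k‖) fun k _ => ?_) ?_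
  · rw [← mul_sub, abs_mul, norm_JJ, norm_JJ]
    have := abs_normSq_sub_le (f k) (g k)
    calc _ ≤ jr k * (‖f k‖ * ‖f k - g k‖ + ‖g k‖ * ‖f k - g k‖) := by
          gcongr
          · exact (jr_pos k).le
          · exact abs_le_jr k
      _ = _ := by ring
  · rw [Finset.sum_add_distrib]; linarith

lemma mass_le {N : ℕ} {f : FSeq} {r : ℝ} (hr : 0 ≤ r) (hfN : SuppN N f) (hf : B2 f r) :
    |mass f| ≤ r ^ 2 := by
  rw [mass_eq_sum hfN, abs_of_nonneg (by positivity)]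
  exact hf.sum_le hr _

lemma mom_le {N : ℕ} {f : FSeq} {r : ℝ} (hr : 0 ≤ r) (hfN : SuppN N f) (hf : B2 (JJ f) r) :
    |mom f| ≤ r ^ 2 := by
  rw [mom_eq_sum hfN]
  refine (Finset.abs_sum_le_sum_abs _ _).trans ?_
  refine le_trans (Finset.sum_le_sum fun k _ => ?_) (hf.sum_le hr (Sf N))
  rw [abs_mul, abs_of_nonneg (sq_nonneg ‖f k‖), norm_JJ, mul_pow]
  have h1 := abs_le_jr k
  have h2 := one_le_jr k
  gcongr
  nlinarith

lemma mass_piN (N : ℕ) (a : FSeq) : mass (piN N a) = ∑ k ∈ Sf N, ‖a k‖ ^ 2 := by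
  rw [mass_eq_sum (piN_supp N a)]
  exact Finset.sum_congr rfl fun k hk => by
    simp only [piN, if_pos (mem_Sf.1 hk)]

lemma mom_piN (N : ℕ) (a : FSeq) : mom (piN N a) = ∑ k ∈ Sf N, (k : ℝ) * ‖a k‖ ^ 2 := by
  rw [mom_eq_sum (piN_supp N a)]
  exact Finset.sum_congr rfl fun k hk => by
    simp only [piN, if_pos (mem_Sf.1 hk)]

/-! ### The interpolated initial value -/

/-- The aliasing weights: for `|k| ≤ N` and `m ≠ 0` the mode `k+m(4N+1)` has size at least
`N (1+|m|)`. -/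
lemma alias_weight {N : ℕ} {k m : ℤ} (hk : |k| ≤ (N : ℤ)) (hm : m ≠ 0) :
    (N : ℝ) * jr m ≤ jr (k + m * (4 * (N : ℤ) + 1)) := by
  have h1 : (1 : ℤ) ≤ |m| := Int.one_le_abs hm
  have h2 : |m| * (4 * (N : ℤ) + 1) ≤ |k + m * (4 * (N : ℤ) + 1)| + |k| := by
    have : |m| * (4 * (N : ℤ) + 1) = |m * (4 * (N : ℤ) + 1)| := by
      rw [abs_mul, abs_of_nonneg (show (0 : ℤ) ≤ 4 * (N : ℤ) + 1 by positivity)]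
    rw [this]
    have := abs_sub (k + m * (4 * (N : ℤ) + 1)) k
    simpa using this
  have hN : (0 : ℤ) ≤ N := by positivity
  have h3 : (N : ℤ) * (1 + |m|) ≤ 1 + |k + m * (4 * (N : ℤ) + 1)| := by nlinarith
  have h4 : ((N : ℤ) : ℝ) * (1 + (|m| : ℤ)) ≤ 1 + ((|k + m * (4 * (N : ℤ) + 1)| : ℤ) : ℝ) := by
    exact_mod_cast h3
  simpa [jr] using h4

lemma alias_inj (N : ℕ) {k k' m m' : ℤ} (hk : |k| ≤ (N : ℤ)) (hk' : |k'| ≤ (N : ℤ))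
    (h : k + m * (4 * (N : ℤ) + 1) = k' + m' * (4 * (N : ℤ) + 1)) : k = k' ∧ m = m' := by
  have hm : m = m' := by
    by_contra hne
    have h1 : (1 : ℤ) ≤ |m - m'| := Int.one_le_abs (sub_ne_zero.2 hne)
    have h2 : k' - k = (m - m') * (4 * (N : ℤ) + 1) := by linarith
    have h3 : |k' - k| ≤ |k'| + |k| := abs_sub _ _
    rw [h2, abs_mul, abs_of_nonneg (show (0 : ℤ) ≤ 4 * (N : ℤ) + 1 by positivity)] at h3
    have hN : (0 : ℤ) ≤ N := by positivity
    nlinarith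
  subst hm
  exact ⟨by linarith, rfl⟩

/-- Interpolation error in `L²`, of order `N⁻¹` for `H¹` data. -/
lemma alias_L2 {N : ℕ} (hN : 0 < N) {a : FSeq} {r : ℝ} (h : B2 (JJ a) r) :
    B2 (fun k => initData N a k - piN N a k) ((N : ℝ)⁻¹ * (cj * r)) := by
  have hN' : (0 : ℝ) < N := by exact_mod_cast hN
  set D : ℤ := 4 * (N : ℤ) + 1 with hD
  have hD0 : D ≠ 0 := by positivity
  have hs : Summable fun k => ‖a k‖ := (B1_of_JJ h).summable
  set G : ℤ → ℝ≥0∞ := fun k => ‖JJ a k‖ₑ ^ 2 with hG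
  have key : ∀ k ∈ Sf N, ‖initData N a k - piN N a k‖ₑ ^ 2 ≤
      ENNReal.ofReal (N : ℝ)⁻¹ ^ 2 * (cJ * ∑' m : ℤ, G (k + m * D)) := by
    intro k hk
    have hk' := mem_Sf.1 hk
    have hk2 : |k| ≤ 2 * (N : ℤ) := by
      have : (0 : ℤ) ≤ N := by positivity
      linarith
    have hinj : Function.Injective fun m : ℤ => k + m * D := fun m m' hmm => by
      have : m * D = m' * D := by simpa using hmm
      exact mul_right_cancel₀ hD0 this
    have hsk : Summable fun m : ℤ => a (k + m * D) :=
      Summable.of_norm (hs.comp_injective hinj)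
    have e1 : initData N a k - piN N a k = ∑' m : ℤ, if m = 0 then 0 else a (k + m * D) := by
      have := hsk.tsum_eq_add_tsum_ite 0
      simp only [initData, piN, interp2N, if_pos hk', if_pos hk2, ← hD]
      rw [this]; simp
    have e2 : ‖initData N a k - piN N a k‖ₑ ≤ ENNReal.ofReal (N : ℝ)⁻¹ *
        ∑' m : ℤ, ENNReal.ofReal (jr m)⁻¹ * ‖JJ a (k + m * D)‖ₑ := by
      rw [e1, ← ENNReal.tsum_mul_left]
      refine enorm_tsum_le_tsum_enorm.trans (ENNReal.tsum_le_tsum fun m => ?_)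
      by_cases hm : m = 0
      · simp [hm]
      · simp only [if_neg hm]
        rw [← ofReal_norm, ← ofReal_norm, ← ENNReal.ofReal_mul (inv_nonneg.2 (jr_pos m).le),
          ← ENNReal.ofReal_mul (by positivity)]
        refine ENNReal.ofReal_le_ofReal ?_
        rw [norm_JJ, ← mul_assoc, ← mul_assoc, ← mul_inv]
        have hw := alias_weight hk' hm
        rw [← hD] at hw
        have hp : 0 < (N : ℝ) * jr m := mul_pos hN' (jr_pos m)
        refine le_mul_of_one_le_left (norm_nonneg _) ?_
        rw [inv_mul_eq_div, one_le_div hp]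
        exact hw
    calc _ ≤ _ := pow_le_pow_left' e2 2
      _ = _ := mul_pow _ _ _
      _ ≤ _ := by
        gcongr
        exact cs_sq _ _
  have hsum : ∑ k ∈ Sf N, ∑' m : ℤ, G (k + m * D) ≤ S2 fun k => ‖JJ a k‖ₑ := by
    rw [← Finset.tsum_subtype, ← ENNReal.tsum_prod (f := fun (k : {x // x ∈ Sf N}) m =>
      G ((k : ℤ) + m * D))]
    have hi : Function.Injective fun p : {x // x ∈ Sf N} × ℤ => (p.1 : ℤ) + p.2 * D := by
      rintro ⟨⟨k, hk⟩, m⟩ ⟨⟨k', hk'⟩, m'⟩ hkm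
      obtain ⟨h1, h2⟩ := alias_inj N (mem_Sf.1 hk) (mem_Sf.1 hk') hkm
      subst h1; subst h2; rfl
    exact ENNReal.tsum_comp_le_tsum_of_injective hi G
  unfold B2
  have e3 : S2 (fun k => ‖initData N a k - piN N a k‖ₑ) =
      ∑ k ∈ Sf N, ‖initData N a k - piN N a k‖ₑ ^ 2 := by
    unfold S2
    refine tsum_eq_sum fun k hk => ?_
    rw [mem_Sf, not_le] at hk
    simp [initData_supp N a k hk, piN_supp N a k hk]
  rw [e3]
  calc _ ≤ _ := Finset.sum_le_sum key
    _ = ENNReal.ofReal (N : ℝ)⁻¹ ^ 2 * (cJ * ∑ k ∈ Sf N, ∑' m : ℤ, G (k + m * D)) := by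
      rw [← Finset.mul_sum, ← Finset.mul_sum]
    _ ≤ ENNReal.ofReal (N : ℝ)⁻¹ ^ 2 * (cJ ^ 2 * ENNReal.ofReal r ^ 2) := by
      gcongr
      · rw [cJ_eq]
        exact le_self_pow (ENNReal.one_le_ofReal.2 one_le_cj) (by norm_num)
      · exact hsum.trans h
    _ = _ := by
      rw [ENNReal.ofReal_mul (by positivity), ENNReal.ofReal_mul cj_pos.le, cJ_eq, mul_pow, mul_pow]

/-- The interpolated initial value is bounded in `H¹` uniformly in `N`. -/
lemma initData_H1 {N : ℕ} (hN : 0 < N) {a : FSeq} {r : ℝ} (hr : 0 ≤ r) (h : B2 (JJ a) r) :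
    B2 (JJ (initData N a)) (3 * cj * r) := by
  have hN' : (1 : ℝ) ≤ N := by exact_mod_cast hN
  have hc := one_le_cj
  have h1 : B2 (JJ fun k => initData N a k - piN N a k) (2 * N * ((N : ℝ)⁻¹ * (cj * r))) := by
    refine (alias_L2 hN h).smul (by positivity) fun k => ?_
    rw [norm_JJ]
    rcases le_or_gt |k| (N : ℤ) with hk | hk
    · gcongr
      have : |(k : ℝ)| ≤ N := by exact_mod_cast hk
      unfold jr; linarith
    · simp [initData_supp N a k hk, piN_supp N a k hk]
  have h2 : B2 (JJ (piN N a)) r := h.JJ_dom (norm_piN_le N a)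
  have h3 := h1.add (by positivity) hr h2
  rw [← JJ_add] at h3
  simp only [sub_add_cancel] at h3
  refine h3.mono ?_
  have : 2 * N * ((N : ℝ)⁻¹ * (cj * r)) = 2 * (cj * r) := by field_simp
  rw [this]
  nlinarith

/-! ### Local consistency of the frozen-coefficient approximation -/

lemma Tri_eq_sum {N : ℕ} (m : ℤ → ℤ → ℤ → ℂ) (a : FSeq) {b c : FSeq} (hb : SuppN N b)
    (hc : SuppN N c) (k : ℤ) : Tri m a b c k = ∑ p ∈ Sf N ×ˢ Sf N,
      m (k - p.1 - p.2) p.1 p.2 * (a (k - p.1 - p.2) * b p.1 * c p.2) := by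
  unfold Tri
  refine tsum_eq_sum fun p hp => ?_
  rw [Finset.mem_product, mem_Sf, mem_Sf, not_and_or, not_le, not_le] at hp
  rcases hp with h | h
  · simp [hb _ h]
  · simp [hc _ h]

lemma SuppN.summable {N : ℕ} {f : FSeq} (h : SuppN N f) : Summable fun k => ‖f k‖ :=
  summable_of_hasFiniteSupport (h.finite.subset fun k hk => by simpa using hk)

/-- In the interaction picture the cubic term of the free flow has phase
`2(k₁+k₂)(k₁+k₃)`. -/
lemma cubic_free {N : ℕ} {f : FSeq} (hf : SuppN N f) (s : ℝ) (k : ℤ) :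
    ex (-s) k * cubicTerm (expD s f) k =
      Tri (fun x y z => Complex.exp (I * (s : ℂ) * ((2 * (x + y) * (x + z) : ℤ) : ℂ)))
        (conjS f) f f k := by
  have hs := hf.expD s
  rw [cubicTerm_eq hs.summable, conjS_expD]
  have e1 : expD (-s) (conjS f) = fun k => ex (-s) k * conjS f k :=
    funext fun k => expD_apply_ex _ _ _
  have e2 : expD s f = fun k => ex s k * f k := funext fun k => expD_apply_ex _ _ _
  rw [e1, e2, Tri_mult, Tri_smul]
  refine Tri_congr hf hf fun x y z hxyz _ _ => ?_
  rw [one_mul, ex_phi, hxyz, ← mul_assoc, mul_comm (ex (-s) k), ex_neg_mul, one_mul, Ek_spec,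
    add_sub_cancel]

lemma continuous_cubic_free {N : ℕ} {f : FSeq} (hf : SuppN N f) (k : ℤ) :
    Continuous fun s : ℝ => ex (-s) k * cubicTerm (expD s f) k := by
  simp_rw [cubic_free hf, Tri_eq_sum _ _ hf hf]
  fun_prop

lemma integral_cubic_free {N : ℕ} {f : FSeq} (hf : SuppN N f) (τ : ℝ) (k : ℤ) :
    ∫ s in (0 : ℝ)..τ, ex (-s) k * cubicTerm (expD s f) k =
      Tri (EkPhi τ) (conjS f) f f k := by
  simp_rw [cubic_free hf, Tri_eq_sum _ _ hf hf]
  rw [intervalIntegral.integral_finsetSum fun p _ => by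
    apply Continuous.intervalIntegrable; fun_prop]
  refine Finset.sum_congr rfl fun p _ => ?_
  rw [intervalIntegral.integral_mul_const]
  rfl

/-- Duhamel's formula restarted at time `t`, in the interaction picture. -/
lemma duhamel_restart {lam : ℝ} {g c : ℝ → FSeq} (hc : ∀ k, Continuous fun s => c s k)
    (hg : ∀ k t, HasDerivAt (fun s => g s k) (-I * (k : ℂ) ^ 2 * g t k - I * lam * c t k) t)
    (t b : ℝ) (k : ℤ) :
    ex (-b) k * g (t + b) k - g t k = -(I * lam * ∫ s in (0 : ℝ)..b, ex (-s) k * c (t + s) k) := by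
  have hd : ∀ s : ℝ, HasDerivAt (fun s : ℝ => ex (-s) k * g (t + s) k)
      (-(I * lam) * (ex (-s) k * c (t + s) k)) s := fun s => by
    have h1 : HasDerivAt (fun s : ℝ => ex (-s) k) (-(-I * (k : ℂ) ^ 2 * ex (-s) k)) s := by
      have := (hasDerivAt_ex (-s) k).scomp s (hasDerivAt_neg s)
      refine this.congr_deriv ?_
      simp
    have h2 : HasDerivAt (fun s : ℝ => g (t + s) k)
        (-I * (k : ℂ) ^ 2 * g (t + s) k - I * lam * c (t + s) k) s :=
      (hg k (t + s)).comp_const_add t s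
    refine (h1.mul h2).congr_deriv ?_
    ring
  have hcont : Continuous fun s : ℝ => -(I * lam) * (ex (-s) k * c (t + s) k) :=
    continuous_const.mul (((continuous_ex k).comp continuous_neg).mul
      ((hc k).comp (continuous_const.add continuous_id)))
  have := intervalIntegral.integral_eq_sub_of_hasDerivAt (a := 0) (b := b)
    (fun s _ => hd s) (hcont.intervalIntegrable _ _)
  rw [intervalIntegral.integral_const_mul] at this
  have h0 : ex (-0) k = 1 := by simp [ex]
  rw [h0, one_mul, add_zero] at this
  rw [← this]; ring

/-- Over one step the solution is approximated by the first Duhamel iterate of its truncation. -/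
lemma sol_local {lam T U τ t : ℝ} {u0 : FSeq} {u : ℝ → FSeq} {N : ℕ} (hT : 0 < T)
    (hl : |lam| ≤ 1) (hu : IsNLSSolution lam T u0 u) (hU : 0 ≤ U)
    (hb : ∀ t ∈ Set.Icc 0 T, B2 (JJ (u t)) U) (hN : 0 < N) (hτ : 0 ≤ τ) (ht : 0 ≤ t)
    (htT : t + τ ≤ T) :
    B2 (fun k => if |k| ≤ (N : ℤ) then u (t + τ) k - ex τ k * (piN N (u t) k -
        I * lam * Tri (EkPhi τ) (conjS (piN N (u t))) (piN N (u t)) (piN N (u t)) k) else 0)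
      (τ * (18 * cj * (U * U * (τ * (4 * (cj * U * (cj * U) * U)) + (N : ℝ)⁻¹ * U)))) := by
  obtain ⟨g, c, hgu, hcu, hcc, hgd⟩ := sol_ext hT hu
  have hcj := cj_pos
  set f := piN N (u t) with hf
  have hfN : SuppN N f := piN_supp _ _
  have hmem : ∀ s ∈ Set.Icc 0 τ, t + s ∈ Set.Icc 0 T := fun s hs =>
    ⟨by linarith [hs.1], by linarith [hs.2]⟩
  have htm : t ∈ Set.Icc 0 T := ⟨ht, by linarith⟩
  have hlz : ∀ z : ℂ, ‖-(I * lam * z)‖ ≤ ‖z‖ := fun z => by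
    rw [norm_neg, norm_mul, norm_mul, Complex.norm_I, one_mul, Complex.norm_real]
    exact mul_le_of_le_one_left (norm_nonneg _) hl
  set A : ℝ := 4 * (cj * U * (cj * U) * U) with hA
  have hA0 : 0 ≤ A := by positivity
  have hfU : B2 (JJ f) U := (hb t htm).JJ_dom (norm_piN_le N _)
  have hexp : ∀ (s : ℝ) (a : FSeq) (k : ℤ), ‖expD s a k‖ = ‖a k‖ := fun s a k => by
    rw [expD_apply_ex, norm_mul, norm_ex, one_mul]
  -- distance to the free flow
  have hfree : ∀ s ∈ Set.Icc 0 τ, B2 (fun k => u (t + s) k - expD s f k)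
      (τ * A + (N : ℝ)⁻¹ * U) := by
    intro s hs
    have h1 : B2 (fun k => ∫ σ in (0 : ℝ)..s, ex (-σ) k * c (t + σ) k) (s * A) := by
      refine B2_integral hs.1 hA0 (fun k => ((continuous_ex k).comp continuous_neg).mul
        ((hcc k).comp (continuous_const.add continuous_id))) fun σ hσ => ?_
      have hm := hmem σ ⟨hσ.1, hσ.2.trans hs.2⟩
      refine (cubic_H1 hU (hb _ hm)).of_JJ.dom fun k => ?_
      rw [norm_mul, norm_ex, one_mul, hcu _ hm]
    have h2 : B2 (fun k => u (t + s) k - expD s (u t) k) (τ * A) := by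
      refine (h1.mono (by gcongr; exact hs.2)).dom fun k => ?_
      rw [← hgu _ (hmem s hs), ← hgu _ htm, expD_apply_ex]
      have e : g (t + s) k - ex s k * g t k = ex s k * (ex (-s) k * g (t + s) k - g t k) := by
        rw [mul_sub, ← mul_assoc, ex_neg_mul, one_mul]
      rw [e, duhamel_restart hcc hgd, norm_mul, norm_ex, one_mul]
      exact hlz _
    have h3 : B2 (fun k => expD s (u t) k - expD s f k) ((N : ℝ)⁻¹ * U) := by
      refine (tail_L2 hN (hb t htm)).dom fun k => ?_
      rw [expD_apply_ex, expD_apply_ex, ← mul_sub, norm_mul, norm_ex, one_mul]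
    have h4 := h2.add (by positivity) (by positivity) h3
    simpa using h4
  -- the integrated difference of the cubic terms
  have hinterp : B2 (fun k => ∫ s in (0 : ℝ)..τ, (ex (-s) k * c (t + s) k -
      ex (-s) k * cubicTerm (expD s f) k))
      (τ * (18 * cj * (U * U * (τ * A + (N : ℝ)⁻¹ * U)))) := by
    refine B2_integral hτ (by positivity) (fun k => (((continuous_ex k).comp continuous_neg).mul
        ((hcc k).comp (continuous_const.add continuous_id))).sub (continuous_cubic_free hfN k))
      fun s hs => ?_
    have hm := hmem s hs
    have h1 := cubic_diff hU (by positivity) (hb _ hm)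
      (hfU.JJ_dom (a := expD s f) fun k => (hexp s f k).le) (hfree s hs)
    refine h1.dom fun k => ?_
    rw [← mul_sub, norm_mul, norm_ex, one_mul, hcu _ hm]
  refine hinterp.dom fun k => ?_
  split_ifs with hk
  · have hfk : f k = g t k := by rw [hgu _ htm, hf]; simp [piN, hk]
    have e : u (t + τ) k - ex τ k * (f k - I * lam * Tri (EkPhi τ) (conjS f) f f k) =
        ex τ k * -(I * lam * ∫ s in (0 : ℝ)..τ, (ex (-s) k * c (t + s) k -
          ex (-s) k * cubicTerm (expD s f) k)) := by
      rw [intervalIntegral.integral_sub, integral_cubic_free hfN, mul_sub (I * lam), neg_sub,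
        sub_eq_add_neg (I * lam * _), ← duhamel_restart hcc hgd, hgu _ (hmem τ ⟨hτ, le_rfl⟩),
        ← hfk]
      · linear_combination (-u (t + τ) k) * ex_neg_mul τ k
      · exact (((continuous_ex k).comp continuous_neg).mul
          ((hcc k).comp (continuous_const.add continuous_id))).intervalIntegrable _ _
      · exact (continuous_cubic_free hfN k).intervalIntegrable _ _
    rw [e, norm_mul, norm_ex, one_mul]
    exact hlz _
  · simp

/-! ### Consistency of the scheme -/

lemma one_le_log_inv {τ : ℝ} (h0 : 0 < τ) (h : τ ≤ 1 / 3) : 1 ≤ Real.log (1 / τ) := by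
  rw [Real.le_log_iff_exp_le (by positivity)]
  have h1 : (3 : ℝ) ≤ 1 / τ := by
    rw [le_div_iff₀ h0]; linarith
  linarith [Real.exp_one_lt_d9]

/-- Conservation of mass and momentum along the flow: the frozen values `M_N`, `P_N` stay within
`O(N⁻¹)` of those of the truncated solution. -/
lemma mass_mom_close {lam T R U : ℝ} {u0 : FSeq} {u : ℝ → FSeq} {N : ℕ} (hT : 0 < T) (hR : 0 ≤ R)
    (hl : |lam| ≤ 1) (hu : IsNLSSolution lam T u0 u) (hU : 0 ≤ U) (hu0 : B2 (JJ u0) R)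
    (hb : ∀ t ∈ Set.Icc 0 T, B2 (JJ (u t)) U) (hN : 0 < N) {t : ℝ} (ht : t ∈ Set.Icc 0 T) :
    |mass (initData N u0) - mass (piN N (u t))| ≤
        (N : ℝ)⁻¹ * (2 * (3 * cj * R * (cj * R)) + 36 * cj * U ^ 4 * T) ∧
      |mom (initData N u0) - mom (piN N (u t))| ≤
        (N : ℝ)⁻¹ * (2 * (3 * cj * R * (cj * R)) + 36 * cj * U ^ 4 * T) := by
  have hc := one_le_cj
  have hi := initData_H1 hN hR hu0
  have ha := alias_L2 hN hu0
  have hp : B2 (JJ (piN N u0)) (3 * cj * R) :=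
    (hu0.JJ_dom (norm_piN_le N u0)).mono (by nlinarith)
  have m1 := mass_diff (by positivity) (by positivity) (initData_supp N u0) (piN_supp N u0)
    hi.of_JJ hp.of_JJ ha
  have q1 := mom_diff (by positivity) (by positivity) (initData_supp N u0) (piN_supp N u0)
    hi hp ha
  have m2 := mass_cons hT hl hu hU hb hN ht
  have q2 := mom_cons hT hl hu hU hb hN ht
  rw [← mass_piN, ← mass_piN, hu.1, abs_sub_comm] at m2
  rw [← mom_piN, ← mom_piN, hu.1, abs_sub_comm] at q2
  constructor
  · refine (abs_sub_le _ (mass (piN N u0)) _).trans ((add_le_add m1 m2).trans (le_of_eq ?_))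
    ring
  · refine (abs_sub_le _ (mom (piN N u0)) _).trans ((add_le_add q1 q2).trans (le_of_eq ?_))
    ring

/-- One step of the scheme, started from the truncated exact solution. -/
lemma consistency {T R U : ℝ} (hT : 0 < T) (hR : 0 < R) (hU : 0 < U) : ∃ C : ℝ, 0 < C ∧
    ∀ (lam : ℝ) (u0 : FSeq) (u : ℝ → FSeq), |lam| ≤ 1 → B2 (JJ u0) R →
      IsNLSSolution lam T u0 u → (∀ t ∈ Set.Icc 0 T, B2 (JJ (u t)) U) →
    ∀ (N : ℕ) (τ t : ℝ), 0 < N → 0 < τ → τ ≤ 1 / 3 → 0 ≤ t → t + τ ≤ T →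
      B2 (fun k => piN N (u (t + τ)) k -
          Psi lam τ N (Mnum N u0) (Pnum N u0) (piN N (u t)) k)
        (τ * (C * (τ * Real.sqrt (Real.log (1 / τ)) + (N : ℝ)⁻¹))) := by
  obtain ⟨C0, hC0, hloc⟩ := local_error
  have hcj := cj_pos
  set A : ℝ := 4 * (cj * U * (cj * U) * U) with hA
  have hA0 : 0 ≤ A := by positivity
  set K : ℝ := (3 * cj * R) ^ 2 with hK
  set D : ℝ := 2 * (3 * cj * R * (cj * R)) + 36 * cj * U ^ 4 * T with hD
  have hD0 : 0 ≤ D := by positivity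
  refine ⟨18 * cj * (U * U * (A + U)) + (32 * K ^ 2 + 4 * D) * U + 84 * cj * (U * U * U) +
    48 * Real.sqrt C0 * (U * U * U), by positivity, ?_⟩
  intro lam u0 u hl hu0 hu hb N τ t hN hτ hτ3 ht htT
  have htm : t ∈ Set.Icc 0 T := ⟨ht, by linarith⟩
  have hN' : (0 : ℝ) < (N : ℝ)⁻¹ := by
    have : (0 : ℝ) < N := by exact_mod_cast hN
    positivity
  obtain ⟨hm, hq⟩ := mass_mom_close hT hR.le hl hu hU.le hu0 hb hN htm
  have hi := initData_H1 hN hR.le hu0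
  have h1 := sol_local hT hl hu hU.le hb hN hτ.le ht htT
  have h2 := hloc lam τ U ((N : ℝ)⁻¹ * D) K N (piN N (u t)) (mass (initData N u0))
    (mom (initData N u0)) hl hτ hτ3 hN hU.le (by positivity) (piN_supp _ _)
    ((hb t htm).JJ_dom (norm_piN_le N _)) hm hq
    (mass_le (by positivity) (initData_supp N u0) hi.of_JJ)
    (mom_le (by positivity) (initData_supp N u0) hi)
  rw [← Mnum_eq, ← Pnum_eq] at h2
  set L : ℝ := Real.log (1 / τ) with hL
  have hL1 : 1 ≤ L := one_le_log_inv hτ hτ3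
  have hs1 : 1 ≤ Real.sqrt L := Real.one_le_sqrt.2 hL1
  have hsC : Real.sqrt (C0 * L) = Real.sqrt C0 * Real.sqrt L := Real.sqrt_mul hC0.le _
  have h3 := h1.add (by positivity) (by positivity) h2
  refine (h3.dom (a := fun k => piN N (u (t + τ)) k -
          Psi lam τ N (Mnum N u0) (Pnum N u0) (piN N (u t)) k) fun k => le_of_eq ?_).mono ?_
  · by_cases hk : |k| ≤ (N : ℤ)
    · simp only [if_pos hk]
      congr 1
      have : piN N (u (t + τ)) k = u (t + τ) k := by simp [piN, hk]
      rw [this]; ring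
    · simp only [if_neg hk]
      rw [piN_supp N _ k (not_le.1 hk), Psi_supp lam τ _ _ (piN_supp N (u t)) k (not_le.1 hk)]
      simp
  · rw [hsC]
    set ν : ℝ := (N : ℝ)⁻¹ with hν
    set E : ℝ := τ * Real.sqrt L + ν with hE
    have b1 : τ ≤ E := by
      have : τ ≤ τ * Real.sqrt L := le_mul_of_one_le_right hτ.le hs1
      linarith
    have b2 : ν ≤ E := by
      have : 0 ≤ τ * Real.sqrt L := by positivity
      linarith
    have b3 : τ * Real.sqrt L ≤ E := by linarith
    have e : τ * (18 * cj * (U * U * (τ * A + ν * U))) +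
        ((32 * τ ^ 2 * K ^ 2 + 4 * τ * (ν * D)) * U +
          6 * τ * (τ + ν) * (7 * cj * (U * U * U)) +
          12 * τ ^ 2 * (4 * (Real.sqrt C0 * Real.sqrt L) * (U * U * U))) =
        τ * (18 * cj * (U * U * (τ * A + ν * U)) + (32 * τ * K ^ 2 + 4 * ν * D) * U +
          42 * cj * (U * U * U) * (τ + ν) +
          48 * Real.sqrt C0 * (U * U * U) * (τ * Real.sqrt L)) := by ring
    rw [e]
    refine mul_le_mul_of_nonneg_left ?_ hτ.le
    calc _ ≤ 18 * cj * (U * U * (E * A + E * U)) + (32 * E * K ^ 2 + 4 * E * D) * U +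
          42 * cj * (U * U * U) * (E + E) +
          48 * Real.sqrt C0 * (U * U * U) * E := by gcongr
      _ = _ := by ring

/-! ### Stability and convergence -/

lemma B1.sub {a b : FSeq} {r s : ℝ} (hr : 0 ≤ r) (hs : 0 ≤ s) (ha : B1 a r) (hb : B1 b s) :
    B1 (fun k => a k - b k) (r + s) := by
  unfold B1 S1 at *
  rw [ENNReal.ofReal_add hr hs]
  refine le_trans (ENNReal.tsum_le_tsum fun k => enorm_sub_le) ?_
  rw [ENNReal.tsum_add]
  exact add_le_add ha hb

lemma one_add_pow_le {c τ T : ℝ} (hc : 0 ≤ c) (hτ : 0 ≤ τ) {n : ℕ} (hn : n * τ ≤ T) :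
    (1 + c * τ) ^ n ≤ Real.exp (c * T) := by
  have h1 : 1 + c * τ ≤ Real.exp (c * τ) := by linarith [Real.add_one_le_exp (c * τ)]
  calc _ ≤ Real.exp (c * τ) ^ n := pow_le_pow_left₀ (by positivity) h1 n
    _ = Real.exp (c * (n * τ)) := by rw [← Real.exp_nat_mul]; ring_nf
    _ ≤ _ := Real.exp_le_exp.2 (by gcongr)

lemma mul_sqrt_log_le {τ : ℝ} (hτ : 0 < τ) : τ * Real.sqrt (Real.log (1 / τ)) ≤ Real.sqrt τ := by
  have h1 : Real.log (1 / τ) ≤ 1 / τ := by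
    have := Real.log_le_sub_one_of_pos (show 0 < 1 / τ by positivity)
    linarith
  calc _ ≤ τ * Real.sqrt (1 / τ) := by gcongr
    _ = Real.sqrt τ := by
      rw [one_div, Real.sqrt_inv]
      nth_rw 1 [← Real.mul_self_sqrt hτ.le]
      have := (Real.sqrt_pos.2 hτ).ne'
      field_simp

lemma numSol_supp (lam τ : ℝ) (N : ℕ) (u0 : FSeq) (n : ℕ) : SuppN N (numSol lam τ N u0 n) := by
  induction n with
  | zero => exact initData_supp N u0
  | succ n ih => exact Psi_supp lam τ _ _ ih

/-- The error bound together with the bootstrap bound in `H¹`. The `ℓ¹` bound on the numerical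
solution, which controls the growth of its `H¹` norm, is recovered at each step by interpolating
the (small) `L²` error with the `H¹` bound. -/
lemma bootstrap {T R U C E ε C2 τ lam : ℝ} {u0 : FSeq} {u : ℝ → FSeq} {N : ℕ} {G W S : ℝ}
    (hR : 0 < R) (hU : 0 < U) (hC : 0 < C) (hE : 0 ≤ E) (hC2 : 0 < C2)
    (hτ : 0 < τ) (hN : 0 < N) (hl : |lam| ≤ 1) (hu0 : B2 (JJ u0) R) (hi : u 0 = u0)
    (hb : ∀ t ∈ Set.Icc 0 T, B2 (JJ (u t)) U)
    (hS : S = cj * U + 1) (hG : G = 3 * cj * R * Real.exp (40 * S ^ 2 * T)) (hW : W = U + G)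
    (hcons : ∀ t, 0 ≤ t → t + τ ≤ T → B2 (fun k => piN N (u (t + τ)) k -
          Psi lam τ N (Mnum N u0) (Pnum N u0) (piN N (u t)) k) (τ * (C * E)))
    (hinterp : ∀ (a : FSeq) (r s : ℝ), 0 ≤ r → 0 ≤ s → B2 a r → B2 (JJ a) s → B1 a (C2 * r + ε * s))
    (hNE : (N : ℝ)⁻¹ ≤ E) (hεW : ε * W ≤ 1 / 2)
    (hsmall : C2 * (Real.exp (180 * cj * W ^ 2 * T) * (cj * R + T * C) * E) ≤ 1 / 2) (n : ℕ)
    (hn : n * τ ≤ T) :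
    B2 (JJ (numSol lam τ N u0 n)) (3 * cj * R * (1 + 40 * S ^ 2 * τ) ^ n) ∧
    B2 (fun k => piN N (u (n * τ)) k - numSol lam τ N u0 n k)
      ((1 + 180 * cj * W ^ 2 * τ) ^ n * (cj * R * E + n * τ * (C * E))) := by
  have hcj := cj_pos
  have hG0 : 0 < G := by rw [hG]; positivity
  have hS0 : 0 < S := by rw [hS]; positivity
  have hW0 : 0 < W := by rw [hW]; positivity
  have hM : (Mnum N u0).im = 0 := by rw [Mnum_eq]; simp
  have hP : (Pnum N u0).re = 0 := by rw [Pnum_eq]; simp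
  induction n with
  | zero =>
    constructor
    · simpa [numSol] using initData_H1 hN hR.le hu0
    · have h := alias_L2 hN hu0
      have h' : B2 (fun k => piN N (u ((0 : ℕ) * τ)) k - numSol lam τ N u0 0 k)
          ((N : ℝ)⁻¹ * (cj * R)) := h.dom fun k => by
        rw [Nat.cast_zero, zero_mul, hi, norm_sub_rev]; rfl
      refine h'.mono ?_
      have : (N : ℝ)⁻¹ * (cj * R) ≤ E * (cj * R) := by gcongr
      simp only [pow_zero, Nat.cast_zero]
      linarith
  | succ n ih =>
    have hn' : (n : ℝ) * τ + τ ≤ T := by push_cast at hn; linarith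
    have hnT : (n : ℝ) * τ ≤ T := by linarith
    have hn0 : (0 : ℝ) ≤ n * τ := by positivity
    have hm : (n : ℝ) * τ ∈ Set.Icc 0 T := ⟨hn0, hnT⟩
    obtain ⟨ih1, ih2⟩ := ih hnT
    set g := numSol lam τ N u0 n with hg
    set f := piN N (u (n * τ)) with hf
    have hgN : SuppN N g := numSol_supp _ _ _ _ _
    have hfN : SuppN N f := piN_supp _ _
    have hfU : B2 (JJ f) U := (hb _ hm).JJ_dom (norm_piN_le N _)
    set d : ℝ := (1 + 180 * cj * W ^ 2 * τ) ^ n * (cj * R * E + n * τ * (C * E)) with hd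
    have hT0 : 0 ≤ T := hn0.trans hnT
    have hd0 : 0 ≤ d := by positivity
    have hpK : (1 + 40 * S ^ 2 * τ) ^ n ≤ Real.exp (40 * S ^ 2 * T) :=
      one_add_pow_le (by positivity) hτ.le hnT
    have hpB : (1 + 180 * cj * W ^ 2 * τ) ^ n ≤ Real.exp (180 * cj * W ^ 2 * T) :=
      one_add_pow_le (by positivity) hτ.le hnT
    have hgG : B2 (JJ g) G := ih1.mono (by rw [hG]; gcongr)
    have hdE : d ≤ Real.exp (180 * cj * W ^ 2 * T) * (cj * R + T * C) * E := by
      calc d ≤ Real.exp (180 * cj * W ^ 2 * T) * (cj * R * E + T * (C * E)) := by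
            rw [hd]; gcongr
        _ = _ := by ring
    have heW : B2 (JJ fun k => f k - g k) W := by
      rw [JJ_sub, hW]; exact hfU.sub hU.le hG0.le hgG
    have he1 : B1 (fun k => f k - g k) 1 := by
      refine (hinterp _ d W hd0 hW0.le ih2 heW).mono ?_
      have : C2 * d ≤ C2 * (Real.exp (180 * cj * W ^ 2 * T) * (cj * R + T * C) * E) := by gcongr
      linarith
    have hg1 : B1 g S := by
      have := (B1_of_JJ hfU).sub (by positivity) zero_le_one he1
      simpa [hS] using this
    constructor
    · have h := Psi_H1 hl hτ.le hM hP (by positivity) hS0.le hgN ih1 hg1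
      refine (show B2 (JJ (numSol lam τ N u0 (n + 1))) _ from h).mono (le_of_eq ?_)
      rw [pow_succ]; ring
    · have h1 := hcons (n * τ) hn0 hn'
      have h2 := Psi_L2 hl hτ.le hM hP hW0.le hd0 hfN hgN (hfU.mono (by rw [hW]; linarith))
        (hgG.mono (by rw [hW]; linarith)) ih2
      have h3 := h1.add (by positivity) (by positivity) h2
      have e : ((n + 1 : ℕ) : ℝ) * τ = n * τ + τ := by push_cast; ring
      refine (h3.dom (a := fun k => piN N (u ((n + 1 : ℕ) * τ)) k - numSol lam τ N u0 (n + 1) k)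
        fun k => le_of_eq ?_).mono ?_
      · rw [e, sub_add_sub_cancel]; rfl
      · have hp1 : 1 ≤ (1 + 180 * cj * W ^ 2 * τ) ^ (n + 1) :=
          one_le_pow₀ (by
            have : 0 ≤ 180 * cj * W ^ 2 * τ := by positivity
            linarith)
        have hCE : 0 ≤ τ * (C * E) := by positivity
        have h5 : τ * (C * E) ≤ (1 + 180 * cj * W ^ 2 * τ) ^ (n + 1) * (τ * (C * E)) :=
          le_mul_of_one_le_left hCE hp1
        rw [e]
        calc τ * (C * E) + (d + 10 * τ * (18 * cj * (W * W * d)))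
            ≤ (1 + 180 * cj * W ^ 2 * τ) ^ (n + 1) * (τ * (C * E)) +
              (d + 10 * τ * (18 * cj * (W * W * d))) := by linarith
          _ = _ := by rw [hd, pow_succ]; ring

end Proof

theorem fully_discrete_LRI_L2_error (T R : ℝ) (hT : 0 < T) (hR : 0 < R) :
    ∃ τ0 : ℝ, 0 < τ0 ∧ ∃ N0 : ℕ, 0 < N0 ∧ ∃ C : ℝ, 0 < C ∧
      ∀ (lam : ℝ), (lam = 1 ∨ lam = -1) →
      ∀ (u0 : FSeq), InHs 1 u0 → hnorm 1 u0 ≤ R →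
      ∀ (u : ℝ → FSeq), IsNLSSolution lam T u0 u →
      ∀ (L N : ℕ), 0 < L → N0 ≤ N →
      ∀ τ : ℝ, τ = T / L → τ ≤ τ0 →
      ∀ n : ℕ, 1 ≤ n → n ≤ L →
        hnorm 0 (u (n * τ) - numSol lam τ N u0 n) ≤
          C * (τ * Real.sqrt (Real.log (1 / τ)) + (N : ℝ)⁻¹) := by
  have hcj := cj_pos
  obtain ⟨U, hU, hUb⟩ := sol_H1 hR
  obtain ⟨C, hC, hcons⟩ := consistency hT hR hU
  obtain ⟨S, hS⟩ : ∃ S, S = cj * U + 1 := ⟨_, rfl⟩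
  obtain ⟨G, hG⟩ : ∃ G, G = 3 * cj * R * Real.exp (40 * S ^ 2 * T) := ⟨_, rfl⟩
  obtain ⟨W, hW⟩ : ∃ W, W = U + G := ⟨_, rfl⟩
  have hG0 : 0 < G := by rw [hG]; positivity
  have hW0 : 0 < W := by rw [hW]; positivity
  have hε : 0 < 1 / (2 * W) := by positivity
  obtain ⟨C2, hC2, hinterp⟩ := B1_interp hε
  obtain ⟨C1, hC1⟩ : ∃ C1, C1 = Real.exp (180 * cj * W ^ 2 * T) * (cj * R + T * C) := ⟨_, rfl⟩
  have hC10 : 0 < C1 := by rw [hC1]; positivity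
  -- the smallness of `√τ` and `N⁻¹` that keeps the `ℓ¹` norm of the error below `1`
  obtain ⟨η, hη⟩ : ∃ η, η = 1 / (4 * (C2 * C1)) := ⟨_, rfl⟩
  have hη0 : 0 < η := by rw [hη]; positivity
  obtain ⟨N1, hN1⟩ := exists_nat_ge η⁻¹
  refine ⟨min (1 / 3) (η ^ 2), by positivity, N1 + 1, Nat.succ_pos _, 3 * (U + C1), by positivity,
    ?_⟩
  intro lam hlam u0 hu0 hu0R u hu L N hL hN τ hτL hτ0 n _ hnL
  have hl : |lam| ≤ 1 := by rcases hlam with rfl | rfl <;> simp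
  have hL' : (0 : ℝ) < L := by exact_mod_cast hL
  have hτ : 0 < τ := by rw [hτL]; positivity
  have hτ3 : τ ≤ 1 / 3 := hτ0.trans (min_le_left _ _)
  have hNpos : 0 < N := lt_of_lt_of_le (Nat.succ_pos _) hN
  have hN' : (0 : ℝ) < N := by exact_mod_cast hNpos
  have hNη : (N : ℝ)⁻¹ ≤ η := by
    rw [inv_le_comm₀ hN' hη0]
    have : ((N1 + 1 : ℕ) : ℝ) ≤ N := by exact_mod_cast hN
    push_cast at this
    linarith
  have hB0 : B2 (JJ u0) R := hu0.B2_JJ.mono hu0R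
  have hb := hUb lam T u0 u hT hlam hu0 hu0R hu
  set E : ℝ := τ * Real.sqrt (Real.log (1 / τ)) + (N : ℝ)⁻¹ with hE
  have hτs : 0 ≤ τ * Real.sqrt (Real.log (1 / τ)) := by positivity
  have hE0 : 0 ≤ E := by positivity
  have hNE : (N : ℝ)⁻¹ ≤ E := by linarith
  have hEη : E ≤ 2 * η := by
    have h1 := mul_sqrt_log_le hτ
    have h2 : Real.sqrt τ ≤ η := by
      rw [Real.sqrt_le_left hη0.le]
      exact hτ0.trans (min_le_right _ _)
    linarith
  have hnT : (n : ℝ) * τ ≤ T := by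
    have h1 : (n : ℝ) ≤ L := by exact_mod_cast hnL
    calc (n : ℝ) * τ ≤ L * τ := by gcongr
      _ = T := by rw [hτL]; field_simp
  have hm : (n : ℝ) * τ ∈ Set.Icc 0 T := ⟨by positivity, hnT⟩
  have hsmall : C2 * (C1 * E) ≤ 1 / 2 := by
    calc C2 * (C1 * E) ≤ C2 * (C1 * (2 * η)) := by gcongr
      _ = 1 / 2 := by rw [hη]; field_simp; norm_num
  rw [hC1] at hsmall
  have hmain := (bootstrap hR hU hC hE0 hC2 hτ hNpos hl hB0 hu.1 hb hS hG hW
    (fun t ht htT => hcons lam u0 u hl hB0 hu hb N τ t hNpos hτ hτ3 ht htT) hinterp hNE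
    (le_of_eq (by field_simp)) hsmall n hnT).2
  have hpB : (1 + 180 * cj * W ^ 2 * τ) ^ n ≤ Real.exp (180 * cj * W ^ 2 * T) :=
    one_add_pow_le (by positivity) hτ.le hnT
  have hd : (1 + 180 * cj * W ^ 2 * τ) ^ n * (cj * R * E + n * τ * (C * E)) ≤ C1 * E := by
    calc _ ≤ Real.exp (180 * cj * W ^ 2 * T) * (cj * R * E + T * (C * E)) := by gcongr
      _ = _ := by rw [hC1]; ring
  have h1 := (tail_L2 hNpos (hb _ hm)).add (by positivity) (by positivity) (hmain.mono hd)
  have h2 : B2 (u (n * τ) - numSol lam τ N u0 n) ((U + C1) * E) := by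
    refine (h1.mono ?_).dom fun k => le_of_eq ?_
    · have : (N : ℝ)⁻¹ * U ≤ E * U := by gcongr
      linarith
    · rw [sub_add_sub_cancel]; rfl
  refine (h2.hnorm_zero_le (by positivity)).trans (le_of_eq ?_)
  ring

end
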